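/- Let γ ∈ ℝ with γ ≠ 0 and consider the 2-parameter family of surfaces given by f(x,y;t,u) = y² + x²y + (1/4)x⁴ + γx⁴y + tx³ + ux⁴. Then there exists η ∈ {1,−1} (determined by the sign of γ) such that the family of asymptotic BDEs of f(·,·;t,u), parametrized by (t,u) ∈ ℝ², is fiber topologically equivalent at 0 to the family of BDEs dy² + (−y + ηx⁴ + ux² + tx)dx² = 0, i.e. the family with coefficients (a,b,c) = (1, 0, −y + ηx⁴ + ux² + tx). -/

import Mathlib

open Asymptotics Filter Set

noncomputable section

/-- Partial derivative in the first variable (∂/∂x). -/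
def pdx (f : ℝ × ℝ → ℝ) (p : ℝ × ℝ) : ℝ := deriv (fun s => f (s, p.2)) p.1

/-- Partial derivative in the second variable (∂/∂y). -/
def pdy (f : ℝ × ℝ → ℝ) (p : ℝ × ℝ) : ℝ := deriv (fun s => f (p.1, s)) p.2

/-- f_xx -/
def fxx (f : ℝ × ℝ → ℝ) : ℝ × ℝ → ℝ := pdx (pdx f)
/-- f_xy -/
def fxy (f : ℝ × ℝ → ℝ) : ℝ × ℝ → ℝ := pdy (pdx f)
/-- f_yy -/
def fyy (f : ℝ × ℝ → ℝ) : ℝ × ℝ → ℝ := pdy (pdy f)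

/-- The discriminant δ = f_xy² − f_xx·f_yy of the asymptotic BDE of `f`. -/
def bdeDiscr (f : ℝ × ℝ → ℝ) : ℝ × ℝ → ℝ := fun p => (fxy f p) ^ 2 - fxx f p * fyy f p

/-- The BDE `a dy² + 2b dxdy + c dx² = 0`, regarded as the family of quadratic
forms `ω_p(v) = a(p)v₂² + 2b(p)v₁v₂ + c(p)v₁²`. -/
def BDE (a b c : ℝ × ℝ → ℝ) : (ℝ × ℝ) → (ℝ × ℝ) → ℝ :=
  fun p v => a p * v.2 ^ 2 + 2 * b p * v.1 * v.2 + c p * v.1 ^ 2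

/-- The asymptotic BDE `f_yy dy² + 2 f_xy dxdy + f_xx dx² = 0` of the surface `z = f(x,y)`. -/
def asymBDE (f : ℝ × ℝ → ℝ) : (ℝ × ℝ) → (ℝ × ℝ) → ℝ := BDE (fyy f) (fxy f) (fxx f)

/-- `j^k f(0) = P` : the degree-k Taylor polynomial of `f` at the origin is `P`,
i.e. `f − P = o(‖(x,y)‖^k)` as `(x,y) → 0`. -/
def HasJetAt0 (f P : ℝ × ℝ → ℝ) (k : ℕ) : Prop :=
  (fun p => f p - P p) =o[nhds (0 : ℝ × ℝ)] fun p => ‖p‖ ^ k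

/-- `γ` is an integral curve of the BDE `ω` on the open interval `I`:
`γ` is C¹ on `I` with nowhere-vanishing derivative annihilating `ω`. -/
def IsIntegralCurveOnBDE (ω : (ℝ × ℝ) → (ℝ × ℝ) → ℝ) (γ : ℝ → ℝ × ℝ) (I : Set ℝ) : Prop :=
  (∃ a b : ℝ, I = Set.Ioo a b) ∧
  ∃ dγ : ℝ → ℝ × ℝ, ContinuousOn dγ I ∧
    ∀ t ∈ I, HasDerivAt γ (dγ t) t ∧ dγ t ≠ 0 ∧ ω (γ t) (dγ t) = 0

/-- Topological equivalence of two BDEs at the origin: a local homeomorphism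
fixing `0` sending integral curves of one to integral curves of the other. -/
def TopEquivAt0 (ω Ω : (ℝ × ℝ) → (ℝ × ℝ) → ℝ) : Prop :=
  ∃ (U V : Set (ℝ × ℝ)) (h hinv : ℝ × ℝ → ℝ × ℝ),
    IsOpen U ∧ IsOpen V ∧ (0 : ℝ × ℝ) ∈ U ∧ (0 : ℝ × ℝ) ∈ V ∧ h 0 = 0 ∧
    ContinuousOn h U ∧ ContinuousOn hinv V ∧
    Set.BijOn h U V ∧ Set.InvOn hinv h U V ∧
    (∀ γ I, IsIntegralCurveOnBDE ω γ I → Set.MapsTo γ I U →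
      ∃ σ J, IsIntegralCurveOnBDE Ω σ J ∧ h '' (γ '' I) = σ '' J) ∧
    (∀ σ J, IsIntegralCurveOnBDE Ω σ J → Set.MapsTo σ J V →
      ∃ γ I, IsIntegralCurveOnBDE ω γ I ∧ hinv '' (σ '' J) = γ '' I)

/-- Smooth equivalence of two BDEs at the origin: a local C^∞ diffeomorphism `h`
fixing `0` pulling one family of quadratic forms back to a nonvanishing multiple
of the other. -/
def SmoothEquivAt0 (ω Ω : (ℝ × ℝ) → (ℝ × ℝ) → ℝ) : Prop :=
  ∃ (U V : Set (ℝ × ℝ)) (h hinv : ℝ × ℝ → ℝ × ℝ) (ρ : ℝ × ℝ → ℝ),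
    IsOpen U ∧ IsOpen V ∧ (0 : ℝ × ℝ) ∈ U ∧ (0 : ℝ × ℝ) ∈ V ∧ h 0 = 0 ∧
    ContDiffOn ℝ (⊤ : ℕ∞) h U ∧ ContDiffOn ℝ (⊤ : ℕ∞) hinv V ∧
    Set.BijOn h U V ∧ Set.InvOn hinv h U V ∧
    ContDiffOn ℝ (⊤ : ℕ∞) ρ U ∧ (∀ p ∈ U, ρ p ≠ 0) ∧
    (∀ p ∈ U, ∀ v : ℝ × ℝ, Ω (h p) (fderiv ℝ h p v) = ρ p * ω p v)

/-- Fiber topological equivalence at `0` of two 2-parameter families of BDEs: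
a homeomorphism `φ` of parameter spaces (onto its image), fixing `0`, such that
corresponding members of the families are topologically equivalent at `0`. -/
def FiberTopEquivAt0 (ω Ω : (ℝ × ℝ) → (ℝ × ℝ) → (ℝ × ℝ) → ℝ) : Prop :=
  ∃ (W : Set (ℝ × ℝ)) (φ ψ : ℝ × ℝ → ℝ × ℝ),
    W ∈ nhds (0 : ℝ × ℝ) ∧ φ 0 = 0 ∧
    ContinuousOn φ W ∧ ContinuousOn ψ (φ '' W) ∧
    Set.InvOn ψ φ W (φ '' W) ∧
    ∀ q ∈ W, TopEquivAt0 (ω q) (Ω (φ q))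

namespace BD
open Topology

/-- truncated square root -/
def rr (z : ℝ) : ℝ := Real.sqrt (max 0 (min z 1))

lemma rr_cont : Continuous rr := by unfold rr; fun_prop
lemma rr_nonneg (z : ℝ) : 0 ≤ rr z := Real.sqrt_nonneg _
lemma rr_le_one (z : ℝ) : rr z ≤ 1 := by
  unfold rr
  rw [Real.sqrt_le_left (by norm_num)]
  rw [one_pow]
  exact max_le (by norm_num) (min_le_right _ _)
lemma rr_mono : Monotone rr := by
  intro a b h
  unfold rr
  apply Real.sqrt_le_sqrt
  exact max_le_max le_rfl (min_le_min h le_rfl)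
lemma rr_of_nonpos {z : ℝ} (h : z ≤ 0) : rr z = 0 := by
  unfold rr
  rw [Real.sqrt_eq_zero']
  exact max_le le_rfl ((min_le_left _ _).trans h)
lemma rr_pos {z : ℝ} (h : 0 < z) : 0 < rr z := by
  unfold rr
  apply Real.sqrt_pos.2
  exact lt_max_of_lt_right (lt_min h one_pos)
lemma rr_eq {z : ℝ} (h0 : 0 ≤ z) (h1 : z ≤ 1) : rr z = Real.sqrt z := by
  unfold rr
  rw [min_eq_left h1, max_eq_right h0]
lemma rr_eq_zero {z : ℝ} (h : rr z = 0) : z ≤ 0 := by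
  by_contra hz
  push Not at hz
  exact (rr_pos hz).ne' h
lemma clamp_diff {u v : ℝ} (h : u ≤ v) :
    max 0 (min v 1) - max 0 (min u 1) ≤ v - u := by
  rcases max_cases 0 (min v 1) with h1 | h1 <;> rcases max_cases 0 (min u 1) with h2 | h2 <;>
  rcases min_cases v 1 with h3 | h3 <;> rcases min_cases u 1 with h4 | h4 <;> linarith [h1.1,h2.1,h1.2,h2.2,h3.1,h3.2,h4.1,h4.2]

lemma rr_lip {k : ℝ} (hk : 0 < k) : ∃ K : ℝ, ∀ u v : ℝ, k ≤ u → u ≤ v → rr v - rr u ≤ K * (v - u) := by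
  have hk' : 0 < Real.sqrt (min k 1) := Real.sqrt_pos.2 (lt_min hk one_pos)
  refine ⟨(Real.sqrt (min k 1))⁻¹, fun u v hu huv => ?_⟩
  have hU : Real.sqrt (min k 1) ≤ rr u := by
    unfold rr
    apply Real.sqrt_le_sqrt
    exact (min_le_min hu le_rfl).trans (le_max_right _ _)
  have hV := rr_nonneg v
  have hm := rr_mono huv
  have h1 : rr v ^ 2 - rr u ^ 2 ≤ v - u := by
    unfold rr
    rw [Real.sq_sqrt (le_max_left _ _), Real.sq_sqrt (le_max_left _ _)]
    exact clamp_diff huv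
  rw [inv_mul_eq_div, le_div_iff₀ hk']
  nlinarith

def IsDesc (σ : ℝ → ℝ) (a b : ℝ) (y : ℝ → ℝ) : Prop :=
  ContinuousOn y (Icc a b) ∧ ∀ x ∈ Ioo a b, HasDerivAt y (-(rr (y x - σ x))) x

lemma IsDesc.sub {σ y : ℝ → ℝ} {a b a' b' : ℝ} (h : IsDesc σ a b y) (ha : a ≤ a') (hb : b' ≤ b) :
    IsDesc σ a' b' y :=
  ⟨h.1.mono (Icc_subset_Icc ha hb), fun x hx => h.2 x (Ioo_subset_Ioo ha hb hx)⟩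

lemma anti_of {f f' : ℝ → ℝ} {a b : ℝ} (hc : ContinuousOn f (Icc a b))
    (hd : ∀ x ∈ Ioo a b, HasDerivAt f (f' x) x) (hn : ∀ x ∈ Ioo a b, f' x ≤ 0) :
    AntitoneOn f (Icc a b) := by
  apply antitoneOn_of_deriv_nonpos (convex_Icc a b) hc
  · rw [interior_Icc]
    exact fun x hx => (hd x hx).differentiableAt.differentiableWithinAt
  · rw [interior_Icc]
    intro x hx
    rw [(hd x hx).deriv]
    exact hn x hx

lemma mono_of {f f' : ℝ → ℝ} {a b : ℝ} (hc : ContinuousOn f (Icc a b))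
    (hd : ∀ x ∈ Ioo a b, HasDerivAt f (f' x) x) (hn : ∀ x ∈ Ioo a b, 0 ≤ f' x) :
    MonotoneOn f (Icc a b) := by
  apply monotoneOn_of_deriv_nonneg (convex_Icc a b) hc
  · rw [interior_Icc]
    exact fun x hx => (hd x hx).differentiableAt.differentiableWithinAt
  · rw [interior_Icc]
    intro x hx
    rw [(hd x hx).deriv]
    exact hn x hx

lemma strictMono_of {f f' : ℝ → ℝ} {a b : ℝ} (hc : ContinuousOn f (Icc a b))
    (hd : ∀ x ∈ Ioo a b, HasDerivAt f (f' x) x) (hn : ∀ x ∈ Ioo a b, 0 < f' x) :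
    StrictMonoOn f (Icc a b) := by
  apply strictMonoOn_of_deriv_pos (convex_Icc a b) hc
  rw [interior_Icc]
  intro x hx
  rw [(hd x hx).deriv]
  exact hn x hx

lemma IsDesc.anti {σ y : ℝ → ℝ} {a b : ℝ} (h : IsDesc σ a b y) : AntitoneOn y (Icc a b) :=
  anti_of h.1 h.2 fun x _ => neg_nonpos.2 (rr_nonneg _)

lemma IsDesc.lip {σ y : ℝ → ℝ} {a b : ℝ} (h : IsDesc σ a b y) :
    MonotoneOn (fun x => y x + x) (Icc a b) := by
  apply mono_of (f' := fun x => -(rr (y x - σ x)) + 1)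
  · exact h.1.add continuousOn_id
  · exact fun x hx => (h.2 x hx).add (hasDerivAt_id x)
  · intro x _
    linarith [rr_le_one (y x - σ x)]

lemma desc_sq {σ y₁ y₂ : ℝ → ℝ} {a b : ℝ} (h₁ : IsDesc σ a b y₁) (h₂ : IsDesc σ a b y₂) :
    AntitoneOn (fun x => (y₁ x - y₂ x) ^ 2) (Icc a b) := by
  apply anti_of (f' := fun x => 2 * (y₁ x - y₂ x) * (-(rr (y₁ x - σ x)) - -(rr (y₂ x - σ x))))
  · exact (h₁.1.sub h₂.1).pow 2
  · intro x hx
    have := ((h₁.2 x hx).sub (h₂.2 x hx)).pow 2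
    exact this.congr_deriv (by simp)
  · intro x _
    rcases le_total (y₁ x) (y₂ x) with h | h
    · have := rr_mono (sub_le_sub_right h (σ x))
      nlinarith
    · have := rr_mono (sub_le_sub_right h (σ x))
      nlinarith

lemma desc_dist {σ y₁ y₂ : ℝ → ℝ} {a b x : ℝ} (h₁ : IsDesc σ a b y₁) (h₂ : IsDesc σ a b y₂)
    (hx : x ∈ Icc a b) : |y₁ x - y₂ x| ≤ |y₁ a - y₂ a| := by
  apply sq_le_sq.1
  exact desc_sq h₁ h₂ (left_mem_Icc.2 (hx.1.trans hx.2)) hx hx.1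

lemma desc_eq {σ y₁ y₂ : ℝ → ℝ} {a b x : ℝ} (h₁ : IsDesc σ a b y₁) (h₂ : IsDesc σ a b y₂)
    (he : y₁ a = y₂ a) (hx : x ∈ Icc a b) : y₁ x = y₂ x := by
  have := desc_dist h₁ h₂ hx
  rw [he, sub_self, abs_zero] at this
  exact sub_eq_zero.1 (abs_nonpos_iff.1 this)

lemma desc_mono {σ y₁ y₂ : ℝ → ℝ} {a b x : ℝ} (h₁ : IsDesc σ a b y₁) (h₂ : IsDesc σ a b y₂)
    (he : y₁ a ≤ y₂ a) (hx : x ∈ Icc a b) : y₁ x ≤ y₂ x := by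
  by_contra hlt
  push Not at hlt
  have hc : ContinuousOn (fun t => y₁ t - y₂ t) (Icc a x) :=
    (h₁.1.sub h₂.1).mono (Icc_subset_Icc le_rfl hx.2)
  obtain ⟨z, hz, hz0⟩ := intermediate_value_Icc hx.1 hc (show (0:ℝ) ∈ Icc _ _ from
    ⟨sub_nonpos.2 he, sub_nonneg.2 hlt.le⟩)
  have := desc_eq (h₁.sub hz.1 le_rfl) (h₂.sub hz.1 le_rfl) (sub_eq_zero.1 hz0) ⟨hz.2, hx.2⟩
  exact hlt.ne' this

lemma nomerge_lip {σ y₁ y₂ : ℝ → ℝ} {w z K : ℝ} (hwz : w < z) (h₁ : IsDesc σ w z y₁)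
    (h₂ : IsDesc σ w z y₂)
    (hK : ∀ x ∈ Ioo w z, rr (y₂ x - σ x) - rr (y₁ x - σ x) ≤ K * (y₂ x - y₁ x))
    (hl : y₁ w < y₂ w) : y₁ z < y₂ z := by
  have : MonotoneOn (fun x => (y₂ x - y₁ x) * Real.exp (K * x)) (Icc w z) := by
    apply mono_of (f' := fun x => (-(rr (y₂ x - σ x)) - -(rr (y₁ x - σ x))) * Real.exp (K * x)
      + (y₂ x - y₁ x) * (Real.exp (K * x) * (K * 1)))
    · exact (h₂.1.sub h₁.1).mul (by fun_prop)
    · intro x hx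
      exact ((h₂.2 x hx).sub (h₁.2 x hx)).mul (((hasDerivAt_id x).const_mul K).exp)
    · intro x hx
      have := hK x hx
      have he := Real.exp_pos (K * x)
      nlinarith
  have h := this (left_mem_Icc.2 hwz.le) (right_mem_Icc.2 hwz.le) hwz.le
  simp only at h
  have h0 : 0 < (y₂ w - y₁ w) * Real.exp (K * w) := mul_pos (by linarith) (Real.exp_pos _)
  have := pos_of_mul_pos_left (h0.trans_le h) (Real.exp_pos _).le
  linarith

/-- generic "eventually to the left" helper -/
lemma exists_left {z a : ℝ} (haz : a < z) {p : ℝ → Prop} (h : ∀ᶠ x in 𝓝[<] z, p x) :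
    ∃ w, a ≤ w ∧ w < z ∧ ∀ x ∈ Ico w z, p x := by
  have h2 : ∀ᶠ x in 𝓝[<] z, p x ∧ a < x := h.and (eventually_of_mem (Ioo_mem_nhdsLT haz) fun x hx => hx.1)
  obtain ⟨l, hl, hs⟩ := (mem_nhdsLT_iff_exists_Ioo_subset).1 h2
  have hl : l < z := hl
  refine ⟨(max l a + z) / 2, ?_, ?_, ?_⟩
  · have := le_max_right l a
    linarith
  · have : max l a < z := max_lt hl haz
    linarith
  · intro x hx
    have h1 : max l a < z := max_lt hl haz
    have h3 := le_max_left l a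
    exact (hs ⟨by linarith [hx.1], hx.2⟩).1

lemma nomerge_ne {σ y₁ y₂ : ℝ → ℝ} {a z : ℝ} (hσ : Continuous σ) (haz : a < z)
    (h₁ : IsDesc σ a z y₁) (h₂ : IsDesc σ a z y₂)
    (hlt : ∀ x ∈ Ico a z, y₁ x < y₂ x) (he : y₁ z = y₂ z) (hq : y₁ z ≠ σ z) : False := by
  have c1 : Tendsto (fun x => y₁ x - σ x) (𝓝[<] z) (𝓝 (y₁ z - σ z)) := by
    have : ContinuousWithinAt y₁ (Icc a z) z := h₁.1 z (right_mem_Icc.2 haz.le)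
    have h3 : Tendsto y₁ (𝓝[<] z) (𝓝 (y₁ z)) := by
      apply this.mono_left
      rw [nhdsWithin_le_iff]
      exact mem_of_superset (Ioo_mem_nhdsLT haz) Ioo_subset_Icc_self
    exact h3.sub (hσ.continuousAt.mono_left nhdsWithin_le_nhds)
  have c2 : Tendsto (fun x => y₂ x - σ x) (𝓝[<] z) (𝓝 (y₂ z - σ z)) := by
    have : ContinuousWithinAt y₂ (Icc a z) z := h₂.1 z (right_mem_Icc.2 haz.le)
    have h3 : Tendsto y₂ (𝓝[<] z) (𝓝 (y₂ z)) := by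
      apply this.mono_left
      rw [nhdsWithin_le_iff]
      exact mem_of_superset (Ioo_mem_nhdsLT haz) Ioo_subset_Icc_self
    exact h3.sub (hσ.continuousAt.mono_left nhdsWithin_le_nhds)
  rw [← he] at c2
  rcases lt_or_gt_of_ne hq with hq | hq
  · obtain ⟨w, haw, hwz, hw⟩ := exists_left haz
      ((c1.eventually_lt_const (show y₁ z - σ z < 0 by linarith)).and
        (c2.eventually_lt_const (show y₁ z - σ z < 0 by linarith)))
    have := nomerge_lip (K := 0) hwz (h₁.sub haw le_rfl) (h₂.sub haw le_rfl) (fun x hx => by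
      obtain ⟨p1, p2⟩ := hw x ⟨hx.1.le, hx.2⟩
      rw [rr_of_nonpos p1.le, rr_of_nonpos p2.le]; simp) (hlt w ⟨haw, hwz⟩)
    exact this.ne he
  · obtain ⟨K, hK⟩ := rr_lip (show 0 < (y₁ z - σ z) / 2 by linarith)
    obtain ⟨w, haw, hwz, hw⟩ := exists_left haz
      (c1.eventually_const_lt (show (y₁ z - σ z) / 2 < y₁ z - σ z by linarith))
    have := nomerge_lip (K := K) hwz (h₁.sub haw le_rfl) (h₂.sub haw le_rfl) (fun x hx => by
      have p1 := hw x ⟨hx.1.le, hx.2⟩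
      have := hK (y₁ x - σ x) (y₂ x - σ x) p1.le
        (by linarith [hlt x ⟨haw.trans hx.1.le, hx.2⟩])
      linarith) (hlt w ⟨haw, hwz⟩)
    exact this.ne he

def DecAt (σ : ℝ → ℝ) (z : ℝ) : Prop :=
  ∃ w μ : ℝ, ∃ m : ℝ → ℝ, w < z ∧ 0 < μ ∧ ∀ x ∈ Ioo w z, HasDerivAt σ (m x) x ∧ m x ≤ -μ

def IncAt (σ : ℝ → ℝ) (z : ℝ) : Prop :=
  ∃ w : ℝ, ∃ m : ℝ → ℝ, w < z ∧ ∀ x ∈ Ioo w z, HasDerivAt σ (m x) x ∧ 0 < m x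

lemma desc_left {σ y : ℝ → ℝ} {a z : ℝ} (hσ : Continuous σ) (haz : a < z)
    (h₁ : IsDesc σ a z y) : Tendsto (fun x => y x - σ x) (𝓝[<] z) (𝓝 (y z - σ z)) := by
  have : ContinuousWithinAt y (Icc a z) z := h₁.1 z (right_mem_Icc.2 haz.le)
  have h3 : Tendsto y (𝓝[<] z) (𝓝 (y z)) := by
    apply this.mono_left
    rw [nhdsWithin_le_iff]
    exact mem_of_superset (Ioo_mem_nhdsLT haz) Ioo_subset_Icc_self
  exact h3.sub (hσ.continuousAt.mono_left nhdsWithin_le_nhds)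

lemma dec_neg {σ y : ℝ → ℝ} {a z : ℝ} (hσ : Continuous σ) (haz : a < z)
    (h₁ : IsDesc σ a z y) (he : y z = σ z) (hd : DecAt σ z) :
    ∀ᶠ x in 𝓝[<] z, y x - σ x < 0 := by
  obtain ⟨w, μ, m, hwz, hμ, hm⟩ := hd
  have c1 := desc_left hσ haz h₁
  have c2 := (rr_cont.tendsto _).comp c1
  rw [he, sub_self, rr_of_nonpos le_rfl] at c2
  obtain ⟨v, hv1, hvz, hv⟩ := exists_left (max_lt haz hwz) (c2.eventually_lt_const hμ)
  have hav := (le_max_left _ _).trans hv1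
  have hwv := (le_max_right _ _).trans hv1
  have hmon : StrictMonoOn (fun x => y x - σ x) (Icc v z) := by
    apply strictMono_of (f' := fun x => -(rr (y x - σ x)) - m x)
    · exact (h₁.1.mono (Icc_subset_Icc hav le_rfl)).sub hσ.continuousOn
    · intro x hx
      exact (h₁.2 x ⟨hav.trans_lt hx.1, hx.2⟩).sub (hm x ⟨hwv.trans_lt hx.1, hx.2⟩).1
    · intro x hx
      have h1 := (hm x ⟨hwv.trans_lt hx.1, hx.2⟩).2
      have h2 := hv x ⟨hx.1.le, hx.2⟩
      simp only [Function.comp] at h2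
      linarith
  filter_upwards [Ioo_mem_nhdsLT hvz] with x hx
  have := hmon ⟨hx.1.le, hx.2.le⟩ (right_mem_Icc.2 hvz.le) hx.2
  simp only [he, sub_self] at this
  exact this

lemma nomerge_dec {σ y₁ y₂ : ℝ → ℝ} {a z : ℝ} (hσ : Continuous σ) (haz : a < z)
    (h₁ : IsDesc σ a z y₁) (h₂ : IsDesc σ a z y₂)
    (hlt : ∀ x ∈ Ico a z, y₁ x < y₂ x) (he : y₁ z = y₂ z) (hq : y₁ z = σ z)
    (hd : DecAt σ z) : False := by
  obtain ⟨w, haw, hwz, hw⟩ := exists_left haz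
      ((dec_neg hσ haz h₁ hq hd).and (dec_neg hσ haz h₂ (he ▸ hq) hd))
  have := nomerge_lip (K := 0) hwz (h₁.sub haw le_rfl) (h₂.sub haw le_rfl) (fun x hx => by
      obtain ⟨p1, p2⟩ := hw x ⟨hx.1.le, hx.2⟩
      rw [rr_of_nonpos p1.le, rr_of_nonpos p2.le]; simp) (hlt w ⟨haw, hwz⟩)
  exact this.ne he

lemma nomerge_inc {σ y₁ y₂ : ℝ → ℝ} {a z : ℝ} (hσ : Continuous σ) (haz : a < z)
    (h₁ : IsDesc σ a z y₁) (h₂ : IsDesc σ a z y₂)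
    (hlt : ∀ x ∈ Ico a z, y₁ x < y₂ x) (he : y₁ z = y₂ z) (hq : y₁ z = σ z)
    (hd : IncAt σ z) : False := by
  obtain ⟨w, m, hwz, hm⟩ := hd
  have c1 := desc_left hσ haz h₁
  have c2 := desc_left hσ haz h₂
  rw [hq, sub_self] at c1
  rw [← he, hq, sub_self] at c2
  obtain ⟨v, hv1, hvz, hv⟩ := exists_left (max_lt haz hwz)
    ((c1.eventually_lt_const one_pos).and (c2.eventually_lt_const one_pos))
  have hav := (le_max_left _ _).trans hv1
  have hwv := (le_max_right _ _).trans hv1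
  have hs : StrictMonoOn σ (Icc v z) := strictMono_of (f' := m) hσ.continuousOn
    (fun x hx => (hm x ⟨hwv.trans_lt hx.1, hx.2⟩).1) (fun x hx => (hm x ⟨hwv.trans_lt hx.1, hx.2⟩).2)
  have pos : ∀ y, IsDesc σ a z y → y z = σ z → ∀ x ∈ Ico v z, 0 < y x - σ x := by
    intro y hy hyz x hx
    have := hy.anti ⟨hav.trans hx.1, hx.2.le⟩ (right_mem_Icc.2 haz.le) hx.2.le
    have h2 := hs ⟨hx.1, hx.2.le⟩ (right_mem_Icc.2 hvz.le) hx.2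
    linarith
  have p1 := pos y₁ h₁ hq
  have p2 := pos y₂ h₂ (he ▸ hq)
  have hmon : MonotoneOn (fun x => Real.sqrt (y₂ x - σ x) - Real.sqrt (y₁ x - σ x)) (Icc v z) := by
    apply mono_of (f' := fun x => (-(rr (y₂ x - σ x)) - m x) / (2 * Real.sqrt (y₂ x - σ x)) -
      (-(rr (y₁ x - σ x)) - m x) / (2 * Real.sqrt (y₁ x - σ x)))
    · exact (((h₂.1.mono (Icc_subset_Icc hav le_rfl)).sub hσ.continuousOn).sqrt).sub
        (((h₁.1.mono (Icc_subset_Icc hav le_rfl)).sub hσ.continuousOn).sqrt)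
    · intro x hx
      have hx1 : x ∈ Ioo a z := ⟨hav.trans_lt hx.1, hx.2⟩
      have hx2 := (hm x ⟨hwv.trans_lt hx.1, hx.2⟩).1
      have hx3 : x ∈ Ico v z := ⟨hx.1.le, hx.2⟩
      exact (((h₂.2 x hx1).sub hx2).sqrt (p2 x hx3).ne').sub
        (((h₁.2 x hx1).sub hx2).sqrt (p1 x hx3).ne')
    · intro x hx
      have hx3 : x ∈ Ico v z := ⟨hx.1.le, hx.2⟩
      have q1 := p1 x hx3
      have q2 := p2 x hx3
      obtain ⟨b1, b2⟩ := hv x hx3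
      rw [rr_eq q1.le b1.le, rr_eq q2.le b2.le]
      have hmx := (hm x ⟨hwv.trans_lt hx.1, hx.2⟩).2
      have s1 := Real.sqrt_pos.2 q1
      have s2 := Real.sqrt_pos.2 q2
      have hle : Real.sqrt (y₁ x - σ x) ≤ Real.sqrt (y₂ x - σ x) := Real.sqrt_le_sqrt
        (by linarith [hlt x ⟨hav.trans hx.1.le, hx.2⟩])
      have : (-(Real.sqrt (y₂ x - σ x)) - m x) / (2 * Real.sqrt (y₂ x - σ x)) -
        (-(Real.sqrt (y₁ x - σ x)) - m x) / (2 * Real.sqrt (y₁ x - σ x)) =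
        m x / 2 * ((Real.sqrt (y₁ x - σ x))⁻¹ - (Real.sqrt (y₂ x - σ x))⁻¹) := by
        field_simp; ring
      rw [this]
      exact mul_nonneg (by linarith) (sub_nonneg.2 (inv_anti₀ s1 hle))
  have h := hmon (left_mem_Icc.2 hvz.le) (right_mem_Icc.2 hvz.le) hvz.le
  simp only [← he, hq, sub_self] at h
  have : Real.sqrt (y₁ v - σ v) < Real.sqrt (y₂ v - σ v) := Real.sqrt_lt_sqrt
    (p1 v ⟨le_rfl, hvz⟩).le (by linarith [hlt v ⟨hav, hvz⟩])
  linarith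

lemma desc_strict {σ y₁ y₂ : ℝ → ℝ} {a b : ℝ} (hσ : Continuous σ)
    (h₁ : IsDesc σ a b y₁) (h₂ : IsDesc σ a b y₂) (hl : y₁ a < y₂ a)
    (hyp : ∀ z ∈ Ioc a b, y₁ z = y₂ z → y₁ z ≠ σ z ∨ DecAt σ z ∨ IncAt σ z) :
    ∀ x ∈ Icc a b, y₁ x < y₂ x := by
  intro x hx
  by_contra hcon
  push Not at hcon
  have hxe : y₁ x = y₂ x := le_antisymm (desc_mono h₁ h₂ hl.le hx) hcon
  have hc : ContinuousOn (fun t => y₁ t - y₂ t) (Icc a b) := h₁.1.sub h₂.1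
  have hcl : IsCompact (Icc a b ∩ (fun t => y₁ t - y₂ t) ⁻¹' {0}) :=
    isCompact_Icc.of_isClosed_subset (hc.preimage_isClosed_of_isClosed isClosed_Icc isClosed_singleton)
      inter_subset_left
  obtain ⟨z, hz, hzl⟩ := hcl.exists_isLeast ⟨x, hx, by simp [hxe]⟩
  have hze : y₁ z = y₂ z := by simpa [sub_eq_zero] using hz.2
  have haz : a < z := by
    rcases hz.1.1.eq_or_lt with h | h
    · exact absurd (h ▸ hze) hl.ne
    · exact h
  have hlt : ∀ t ∈ Ico a z, y₁ t < y₂ t := by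
    intro t ht
    apply lt_of_le_of_ne (desc_mono h₁ h₂ hl.le ⟨ht.1, ht.2.le.trans hz.1.2⟩)
    intro h
    exact absurd (hzl ⟨⟨ht.1, ht.2.le.trans hz.1.2⟩, by simp [h]⟩) (not_le.2 ht.2)
  have g1 := h₁.sub (le_refl a) hz.1.2
  have g2 := h₂.sub (le_refl a) hz.1.2
  by_cases hq : y₁ z = σ z
  · rcases hyp z ⟨haz, hz.1.2⟩ hze with h | h | h
    · exact h hq
    · exact nomerge_dec hσ haz g1 g2 hlt hze hq h
    · exact nomerge_inc hσ haz g1 g2 hlt hze hq h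
  · exact nomerge_ne hσ haz g1 g2 hlt hze hq

end BD

namespace BD
open Topology

lemma rr_sq_diff {u v : ℝ} (h : u ≤ v) : rr v ^ 2 - rr u ^ 2 ≤ v - u := by
  unfold rr
  rw [Real.sq_sqrt (le_max_left _ _), Real.sq_sqrt (le_max_left _ _)]
  exact clamp_diff h

lemma rr_hold (u v : ℝ) : |rr u - rr v| ≤ Real.sqrt |u - v| := by
  apply Real.abs_le_sqrt
  rcases le_total u v with h | h
  · have h1 := rr_mono h
    have h2 := rr_sq_diff h
    rw [abs_of_nonpos (by linarith)]
    nlinarith [rr_nonneg u]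
  · have h1 := rr_mono h
    have h2 := rr_sq_diff h
    rw [abs_of_nonneg (by linarith)]
    nlinarith [rr_nonneg v]

def rap (e z : ℝ) : ℝ := Real.sqrt (max 0 (min z 1) + e ^ 2)

lemma rap_ge (e z : ℝ) : rr z ≤ rap e z := Real.sqrt_le_sqrt (by nlinarith)
lemma rap_le {e : ℝ} (he : 0 ≤ e) (z : ℝ) : rap e z ≤ rr z + e := by
  have h := rr_nonneg z
  apply Real.sqrt_le_iff.2 ⟨by linarith, ?_⟩
  have : rr z ^ 2 = max 0 (min z 1) := Real.sq_sqrt (le_max_left _ _)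
  nlinarith
lemma rap_lip {e : ℝ} (he : 0 < e) (u v : ℝ) : |rap e u - rap e v| ≤ e⁻¹ * |u - v| := by
  wlog h : u ≤ v generalizing u v
  · rw [abs_sub_comm, abs_sub_comm u v]
    exact this v u (le_of_not_ge h)
  have h1 : rap e u ≤ rap e v := Real.sqrt_le_sqrt (by
    have := max_le_max (le_refl (0:ℝ)) (min_le_min h (le_refl (1:ℝ)))
    linarith)
  have h2 : rap e v ^ 2 - rap e u ^ 2 ≤ v - u := by
    unfold rap
    have a1 := le_max_left 0 (min u 1)
    have a2 := le_max_left 0 (min v 1)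
    rw [Real.sq_sqrt (by positivity), Real.sq_sqrt (by positivity)]
    linarith [clamp_diff h]
  have h3 : e ≤ rap e u := Real.le_sqrt_of_sq_le (by
    have a1 := le_max_left 0 (min u 1)
    linarith)
  rw [abs_of_nonpos (by linarith), abs_of_nonpos (by linarith), inv_mul_eq_div, le_div_iff₀ he]
  nlinarith

lemma approx_exists {σ : ℝ → ℝ} (hσ : Continuous σ) {a b : ℝ} (hab : a ≤ b) (β : ℝ) {e : ℝ}
    (he : 0 < e) (he1 : e ≤ 1) :
    ∃ y : ℝ → ℝ, y a = β ∧ ContinuousOn y (Icc a b) ∧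
      ∀ x ∈ Ioo a b, HasDerivAt y (-(rap e (y x - σ x))) x := by
  have hP : IsPicardLindelof (fun t z => -(rap e (z - σ t))) (⟨a, left_mem_Icc.2 hab⟩ : Icc a b) β
      (Real.toNNReal (2 * (b - a))) 0 2 (Real.toNNReal e⁻¹) := by
    constructor
    · intro t _
      apply LipschitzOnWith.of_dist_le_mul
      intro u _ v _
      rw [Real.dist_eq, Real.dist_eq, Real.coe_toNNReal _ (by positivity)]
      have := rap_lip he (u - σ t) (v - σ t)
      rw [sub_sub_sub_cancel_right] at this
      rwa [neg_sub_neg, abs_sub_comm]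
    · intro x _
      apply Continuous.continuousOn
      unfold rap
      fun_prop
    · intro t _ x _
      have h1 := rap_le he.le (x - σ t)
      have h2 := rr_le_one (x - σ t)
      rw [Real.norm_eq_abs, abs_neg, abs_of_nonneg (show 0 ≤ rap e (x - σ t) from Real.sqrt_nonneg _)]
      push_cast
      linarith
    · simp only [sub_self]
      rw [Real.coe_toNNReal _ (by linarith), max_eq_left (by linarith)]
      simp
  obtain ⟨y, hy, hd⟩ := hP.exists_eq_forall_mem_Icc_hasDerivWithinAt₀
  refine ⟨y, hy, fun x hx => (hd x hx).continuousWithinAt, fun x hx => ?_⟩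
  exact (hd x ⟨hx.1.le, hx.2.le⟩).hasDerivAt (Icc_mem_nhds hx.1 hx.2)

lemma approx_cmp {σ y₁ y₂ : ℝ → ℝ} {a b e₁ e₂ : ℝ} (h1 : 0 < e₁) (h2 : 0 < e₂)
    (hc₁ : ContinuousOn y₁ (Icc a b)) (hc₂ : ContinuousOn y₂ (Icc a b))
    (hd₁ : ∀ x ∈ Ioo a b, HasDerivAt y₁ (-(rap e₁ (y₁ x - σ x))) x)
    (hd₂ : ∀ x ∈ Ioo a b, HasDerivAt y₂ (-(rap e₂ (y₂ x - σ x))) x)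
    (he : y₁ a = y₂ a) {x : ℝ} (hx : x ∈ Icc a b) :
    |y₁ x - y₂ x| ≤ Real.exp (b - a) * (e₁ + e₂) := by
  have hA : AntitoneOn (fun x => ((y₁ x - y₂ x) ^ 2 + (e₁ + e₂) ^ 2) * Real.exp (-x)) (Icc a b) := by
    apply anti_of (f' := fun x => (2 * (y₁ x - y₂ x) * (-(rap e₁ (y₁ x - σ x)) - -(rap e₂ (y₂ x - σ x))))
      * Real.exp (-x) + ((y₁ x - y₂ x) ^ 2 + (e₁ + e₂) ^ 2) * (Real.exp (-x) * (-1)))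
    · exact (((hc₁.sub hc₂).pow 2).add continuousOn_const).mul (by fun_prop)
    · intro t ht
      have A := (((hd₁ t ht).sub (hd₂ t ht)).pow 2).add_const ((e₁ + e₂) ^ 2)
      have B := ((hasDerivAt_id t).neg).exp
      exact (A.mul B).congr_deriv (by simp)
    · intro t _
      have hE := Real.exp_pos (-t)
      have g1 := rap_ge e₁ (y₁ t - σ t)
      have g2 := rap_ge e₂ (y₂ t - σ t)
      have g3 := rap_le h1.le (y₁ t - σ t)
      have g4 := rap_le h2.le (y₂ t - σ t)
      have key : 2 * (y₁ t - y₂ t) * (-(rap e₁ (y₁ t - σ t)) - -(rap e₂ (y₂ t - σ t))) ≤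
          (y₁ t - y₂ t) ^ 2 + (e₁ + e₂) ^ 2 := by
        rcases le_total (y₁ t) (y₂ t) with h | h
        · have := rr_mono (sub_le_sub_right h (σ t))
          nlinarith [sq_nonneg (y₁ t - y₂ t + (e₁ + e₂))]
        · have := rr_mono (sub_le_sub_right h (σ t))
          nlinarith [sq_nonneg (y₁ t - y₂ t - (e₁ + e₂))]
      nlinarith
  have hab := hx.1.trans hx.2
  have h := hA (left_mem_Icc.2 hab) hx hx.1
  simp only [he, sub_self] at h
  have h3 : (y₁ x - y₂ x) ^ 2 * Real.exp (-x) ≤ (e₁ + e₂) ^ 2 * Real.exp (-a) := by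
    have : 0 ≤ (e₁ + e₂) ^ 2 * Real.exp (-x) := by positivity
    linarith
  have h4 : (y₁ x - y₂ x) ^ 2 ≤ (e₁ + e₂) ^ 2 * Real.exp (x - a) := by
    have e1 : Real.exp (-a) = Real.exp (x - a) * Real.exp (-x) := by
      rw [← Real.exp_add]; congr 1; ring
    rw [e1, ← mul_assoc] at h3
    exact le_of_mul_le_mul_right h3 (Real.exp_pos _)
  have h5 : Real.exp (x - a) ≤ Real.exp (b - a) ^ 2 := by
    rw [← Real.exp_nat_mul]
    apply Real.exp_le_exp.2
    push_cast
    linarith [hx.2]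
  apply abs_le_of_sq_le_sq _ (by positivity)
  rw [mul_pow]
  nlinarith [sq_nonneg (e₁ + e₂)]

lemma desc_exists {σ : ℝ → ℝ} (hσ : Continuous σ) {a b : ℝ} (hab : a ≤ b) (β : ℝ) :
    ∃ y : ℝ → ℝ, y a = β ∧ IsDesc σ a b y := by
  let e : ℕ → ℝ := fun n => 1 / ((n : ℝ) + 1)
  have he : ∀ n, 0 < e n := fun n => by simp only [e]; positivity
  have he1 : ∀ n, e n ≤ 1 := fun n => by
    simp only [e]
    rw [div_le_one (by positivity)]
    linarith [(Nat.cast_nonneg n : (0:ℝ) ≤ n)]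
  have hea : Antitone e := fun n m h => one_div_le_one_div_of_le (by positivity) (by
    have : (n : ℝ) ≤ m := by exact_mod_cast h
    linarith)
  have he0 : Tendsto e atTop (𝓝 0) := tendsto_one_div_add_atTop_nhds_zero_nat
  choose y hy0 hyc hyd using fun n => approx_exists hσ hab β (he n) (he1 n)
  set K := Real.exp (b - a) with hK
  have hKp : 0 < K := Real.exp_pos _
  have hcmp : ∀ x ∈ Icc a b, ∀ n m, n ≤ m → |y n x - y m x| ≤ 2 * K * e n := by
    intro x hx n m hnm
    have := approx_cmp (he n) (he m) (hyc n) (hyc m) (hyd n) (hyd m) (by rw [hy0, hy0]) hx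
    nlinarith [hea hnm]
  have hlim : ∀ x ∈ Icc a b, ∃ z, Tendsto (fun n => y n x) atTop (𝓝 z) := by
    intro x hx
    apply cauchySeq_tendsto_of_complete
    apply cauchySeq_of_le_tendsto_0 (fun n => 4 * K * e n)
    · intro n m N hn hm
      have h1 := hcmp x hx N n hn
      have h2 := hcmp x hx N m hm
      rw [Real.dist_eq]
      rw [abs_le] at *
      constructor <;> linarith
    · simpa using he0.const_mul (4 * K)
  choose! Y hY using hlim
  have hYb : ∀ x ∈ Icc a b, ∀ n, |y n x - Y x| ≤ 2 * K * e n := by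
    intro x hx n
    have : Tendsto (fun m => |y n x - y m x|) atTop (𝓝 |y n x - Y x|) :=
      (tendsto_const_nhds.sub (hY x hx)).abs
    exact le_of_tendsto this (eventually_atTop.2 ⟨n, fun m hm => hcmp x hx n m hm⟩)
  refine ⟨Y, ?_, ?_, ?_⟩
  · have h1 := hY a (left_mem_Icc.2 hab)
    simp only [hy0] at h1
    exact tendsto_nhds_unique h1 tendsto_const_nhds |>.symm ▸ rfl
  · have hu : TendstoUniformlyOn y Y atTop (Icc a b) := by
      rw [Metric.tendstoUniformlyOn_iff]
      intro ε hε
      have := (he0.const_mul (2 * K)).eventually_lt_const (show 2 * K * 0 < ε by simpa)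
      filter_upwards [this] with n hn x hx
      rw [dist_comm, Real.dist_eq]
      exact (hYb x hx n).trans_lt hn
    exact hu.continuousOn (Frequently.of_forall hyc)
  · intro x hx
    apply hasDerivAt_of_tendstoUniformlyOn (l := atTop) (f := y) isOpen_Ioo
      (f' := fun n x => -(rap (e n) (y n x - σ x))) (g' := fun x => -(rr (Y x - σ x)))
      (s := Ioo a b) _ _ _ hx
    · rw [Metric.tendstoUniformlyOn_iff]
      intro ε hε
      have h0 : Tendsto (fun n => e n + Real.sqrt (2 * K * e n)) atTop (𝓝 (0 + Real.sqrt (2 * K * 0))) :=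
        he0.add ((he0.const_mul (2 * K)).sqrt)
      have := h0.eventually_lt_const (show 0 + Real.sqrt (2 * K * 0) < ε by simpa)
      filter_upwards [this] with n hn x hx
      rw [dist_comm, Real.dist_eq]
      have q1 := hYb x (Ioo_subset_Icc_self hx) n
      have q2 := rr_hold (y n x - σ x) (Y x - σ x)
      rw [sub_sub_sub_cancel_right] at q2
      have q3 := q2.trans (Real.sqrt_le_sqrt q1)
      have q4 := rap_ge (e n) (y n x - σ x)
      have q5 := rap_le (he n).le (y n x - σ x)
      refine lt_of_le_of_lt ?_ hn
      rw [abs_le] at *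
      constructor <;> linarith
    · exact Eventually.of_forall fun n x hx => hyd n x hx
    · exact fun x hx => hY x (Ioo_subset_Icc_self hx)

def IsAsc (s : ℝ → ℝ) (c d : ℝ) (y : ℝ → ℝ) : Prop :=
  ContinuousOn y (Icc c d) ∧ ∀ x ∈ Ioo c d, HasDerivAt y (rr (y x - s x)) x

def rev (y : ℝ → ℝ) : ℝ → ℝ := fun x => y (-x)

lemma rev_rev (y : ℝ → ℝ) : rev (rev y) = y := by funext x; simp [rev]

lemma IsAsc.rev {s y : ℝ → ℝ} {c d : ℝ} (h : IsAsc s c d y) : IsDesc (rev s) (-d) (-c) (rev y) := by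
  refine ⟨?_, ?_⟩
  · apply h.1.comp continuousOn_neg
    intro x hx
    exact ⟨by linarith [hx.2], by linarith [hx.1]⟩
  · intro x hx
    have := (h.2 (-x) ⟨by linarith [hx.2], by linarith [hx.1]⟩).scomp x (hasDerivAt_neg x)
    exact this.congr_deriv (by simp [BD.rev])

lemma IsDesc.rev {s y : ℝ → ℝ} {c d : ℝ} (h : IsDesc s c d y) : IsAsc (rev s) (-d) (-c) (rev y) := by
  refine ⟨?_, ?_⟩
  · apply h.1.comp continuousOn_neg
    intro x hx
    exact ⟨by linarith [hx.2], by linarith [hx.1]⟩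
  · intro x hx
    have := (h.2 (-x) ⟨by linarith [hx.2], by linarith [hx.1]⟩).scomp x (hasDerivAt_neg x)
    exact this.congr_deriv (by simp [BD.rev])

lemma asc_exists {s : ℝ → ℝ} (hs : Continuous s) {c d : ℝ} (hcd : c ≤ d) (α : ℝ) :
    ∃ y : ℝ → ℝ, y d = α ∧ IsAsc s c d y := by
  obtain ⟨y, hy, h⟩ := desc_exists (σ := rev s) (by unfold rev; fun_prop) (neg_le_neg hcd) α
  refine ⟨rev y, by simpa [rev] using hy, ?_⟩
  have := h.rev
  rwa [rev_rev, neg_neg, neg_neg] at this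

lemma IsAsc.sub {σ y : ℝ → ℝ} {a b a' b' : ℝ} (h : IsAsc σ a b y) (ha : a ≤ a') (hb : b' ≤ b) :
    IsAsc σ a' b' y :=
  ⟨h.1.mono (Icc_subset_Icc ha hb), fun x hx => h.2 x (Ioo_subset_Ioo ha hb hx)⟩

lemma IsAsc.mono {σ y : ℝ → ℝ} {a b : ℝ} (h : IsAsc σ a b y) : MonotoneOn y (Icc a b) :=
  mono_of h.1 h.2 fun _ _ => rr_nonneg _

lemma IsAsc.lip {σ y : ℝ → ℝ} {a b : ℝ} (h : IsAsc σ a b y) :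
    AntitoneOn (fun x => y x - x) (Icc a b) := by
  apply anti_of (f' := fun x => (rr (y x - σ x)) - 1)
  · exact h.1.sub continuousOn_id
  · exact fun x hx => (h.2 x hx).sub (hasDerivAt_id x)
  · intro x _
    linarith [rr_le_one (y x - σ x)]

lemma neg_mem {x c d : ℝ} (hx : x ∈ Icc c d) : -x ∈ Icc (-d) (-c) :=
  ⟨by linarith [hx.2], by linarith [hx.1]⟩

lemma asc_dist {σ y₁ y₂ : ℝ → ℝ} {a b x : ℝ} (h₁ : IsAsc σ a b y₁) (h₂ : IsAsc σ a b y₂)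
    (hx : x ∈ Icc a b) : |y₁ x - y₂ x| ≤ |y₁ b - y₂ b| := by
  simpa [rev] using desc_dist h₁.rev h₂.rev (neg_mem hx)

lemma asc_eq {σ y₁ y₂ : ℝ → ℝ} {a b x : ℝ} (h₁ : IsAsc σ a b y₁) (h₂ : IsAsc σ a b y₂)
    (he : y₁ b = y₂ b) (hx : x ∈ Icc a b) : y₁ x = y₂ x := by
  simpa [rev] using desc_eq h₁.rev h₂.rev (by simpa [rev] using he) (neg_mem hx)

lemma asc_mono {σ y₁ y₂ : ℝ → ℝ} {a b x : ℝ} (h₁ : IsAsc σ a b y₁) (h₂ : IsAsc σ a b y₂)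
    (he : y₁ b ≤ y₂ b) (hx : x ∈ Icc a b) : y₁ x ≤ y₂ x := by
  simpa [rev] using desc_mono h₁.rev h₂.rev (by simpa [rev] using he) (neg_mem hx)

lemma asc_strict {s y₁ y₂ : ℝ → ℝ} {c d : ℝ} (hs : Continuous s)
    (h₁ : IsAsc s c d y₁) (h₂ : IsAsc s c d y₂) (hl : y₁ d < y₂ d)
    (hyp : ∀ z ∈ Ico c d, y₁ z = y₂ z → y₁ z ≠ s z ∨ DecAt (rev s) (-z) ∨ IncAt (rev s) (-z)) :
    ∀ x ∈ Icc c d, y₁ x < y₂ x := by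
  intro x hx
  have := desc_strict (σ := rev s) (by unfold rev; fun_prop) h₁.rev h₂.rev (by simpa [rev] using hl)
    (fun z hz he => by
      have := hyp (-z) ⟨by linarith [hz.2], by linarith [hz.1]⟩ he
      rwa [neg_neg] at this) (-x) (neg_mem hx)
  simpa [rev] using this

end BD

namespace BD
open Topology

lemma cont_factor {A B C : Type*} [TopologicalSpace A] [TopologicalSpace B] [TopologicalSpace C]
    [T2Space B] {K : Set A} (hK : IsCompact K) {p : A → B} {f : A → C} {h : B → C}
    (hp : ContinuousOn p K) (hf : ContinuousOn f K) (hh : ∀ u ∈ K, h (p u) = f u) :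
    ContinuousOn h (p '' K) := by
  rw [continuousOn_iff_isClosed]
  intro t ht
  obtain ⟨w, hw, hwe⟩ := continuousOn_iff_isClosed.1 hf t ht
  refine ⟨p '' (K ∩ w), ?_, ?_⟩
  · exact ((hK.inter_right hw).image_of_continuousOn (hp.mono inter_subset_left)).isClosed
  · ext b
    constructor
    · rintro ⟨hb, u, hu, rfl⟩
      refine ⟨⟨u, ⟨hu, ?_⟩, rfl⟩, ⟨u, hu, rfl⟩⟩
      have : u ∈ f ⁻¹' t ∩ K := ⟨by simpa [hh u hu] using hb, hu⟩
      rw [hwe] at this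
      exact this.1
    · rintro ⟨⟨u, ⟨hu, huw⟩, rfl⟩, -⟩
      refine ⟨?_, ⟨u, hu, rfl⟩⟩
      have : u ∈ w ∩ K := ⟨huw, hu⟩
      rw [← hwe] at this
      simpa [hh u hu] using this.1

structure HalfParam (s : ℝ → ℝ) (c : ℝ) (S Z X0 D : Set (ℝ × ℝ)) (pt : ℝ × ℝ → ℝ × ℝ) : Prop where
  comp : IsCompact S
  cont : ContinuousOn pt S
  inj : ∀ u ∈ S, ∀ v ∈ S, pt u = pt v ↔ (u = v ∨ (u ∈ Z ∧ v ∈ Z))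
  lec : ∀ u ∈ S, c ≤ (pt u).1
  eqc : ∀ u ∈ S, (pt u).1 = c ↔ u ∈ X0
  x0y : ∀ u ∈ S, u ∈ X0 → (pt u).2 = u.2
  les : ∀ u ∈ S, s (pt u).1 ≤ (pt u).2
  eqs : ∀ u ∈ S, (pt u).2 = s (pt u).1 ↔ u ∈ D
  nb : pt '' S ∈ 𝓝[{p | c ≤ p.1 ∧ s p.1 ≤ p.2}] 0
  orig : (0 : ℝ × ℝ) ∈ S ∧ pt 0 = 0
  leafP : ∀ α, ∃ f : ℝ → ℝ, ∀ u ∈ S, u.1 = α → (pt u).2 = f (pt u).1 ∧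
    (c < (pt u).1 → HasDerivAt f (Real.sqrt ((pt u).2 - s (pt u).1)) (pt u).1)
  leafM : ∀ β, ∃ f : ℝ → ℝ, ∀ u ∈ S, u.2 = β → (pt u).2 = f (pt u).1 ∧
    (c < (pt u).1 → HasDerivAt f (-Real.sqrt ((pt u).2 - s (pt u).1)) (pt u).1)
  arcP : ∀ a b : ℝ, ∀ y : ℝ → ℝ, c ≤ a →
    (∀ x ∈ Ioo a b, (x, y x) ∈ pt '' S ∧ HasDerivAt y (Real.sqrt (y x - s x)) x) →
    ∀ u ∈ S, ∀ v ∈ S, (pt u).1 ∈ Ioo a b → (pt v).1 ∈ Ioo a b → (pt u).2 = y (pt u).1 →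
      (pt v).2 = y (pt v).1 → u.1 = v.1
  arcM : ∀ a b : ℝ, ∀ y : ℝ → ℝ, c ≤ a →
    (∀ x ∈ Ioo a b, (x, y x) ∈ pt '' S ∧ HasDerivAt y (-Real.sqrt (y x - s x)) x) →
    ∀ u ∈ S, ∀ v ∈ S, (pt u).1 ∈ Ioo a b → (pt v).1 ∈ Ioo a b → (pt u).2 = y (pt u).1 →
      (pt v).2 = y (pt v).1 → u.2 = v.2

/-- asc and desc meeting twice -/
lemma cross_unique {s f g : ℝ → ℝ} {c d x₁ x₂ : ℝ} (hs : Continuous s) (hinj : InjOn s (Icc c d))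
    (hf : IsAsc s c d f) (hg : IsDesc s c d g) (h1 : x₁ ∈ Icc c d) (h2 : x₂ ∈ Icc c d)
    (e1 : f x₁ = g x₁) (e2 : f x₂ = g x₂) (l1 : s x₁ ≤ g x₁) (l2 : s x₂ ≤ g x₂) : x₁ = x₂ := by
  wlog hlt : x₁ ≤ x₂ generalizing x₁ x₂
  · exact (this h2 h1 e2 e1 l2 l1 (le_of_not_ge hlt)).symm
  rcases hlt.eq_or_lt with h | hlt
  · exact h
  have hgc : ∀ x ∈ Icc x₁ x₂, g x = g x₁ := by
    intro x hx
    have hx' : x ∈ Icc c d := ⟨h1.1.trans hx.1, hx.2.trans h2.2⟩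
    have a1 := hg.anti h1 hx' hx.1
    have a2 := hg.anti hx' h2 hx.2
    have a3 := hf.mono h1 h2 hlt.le
    linarith
  have hder : ∀ x ∈ Ioo x₁ x₂, g x₁ ≤ s x := by
    intro x hx
    have hx' : x ∈ Ioo c d := ⟨h1.1.trans_lt hx.1, hx.2.trans_le h2.2⟩
    have d1 := hg.2 x hx'
    have d2 : HasDerivAt g 0 x := by
      apply (hasDerivAt_const x (g x₁)).congr_of_eventuallyEq
      filter_upwards [Ioo_mem_nhds hx.1 hx.2] with t ht using hgc t ⟨ht.1.le, ht.2.le⟩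
    have := d1.unique d2
    have := rr_eq_zero (neg_eq_zero.1 this)
    rw [hgc x ⟨hx.1.le, hx.2.le⟩] at this
    linarith
  have hcl : ∀ x ∈ Icc x₁ x₂, g x₁ ≤ s x := by
    intro x hx
    have hc : IsClosed {x | g x₁ ≤ s x} := isClosed_le continuous_const hs
    have : closure (Ioo x₁ x₂) ⊆ {x | g x₁ ≤ s x} := closure_minimal hder hc
    rw [closure_Ioo hlt.ne] at this
    exact this hx
  apply hinj h1 h2
  have b1 := hcl x₁ (left_mem_Icc.2 hlt.le)
  have b2 := hcl x₂ (right_mem_Icc.2 hlt.le)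
  have b3 := hgc x₂ (right_mem_Icc.2 hlt.le)
  linarith

lemma fam_cont {F : ℝ → ℝ → ℝ} {c d : ℝ}
    (h : ∀ a a', ∀ x ∈ Icc c d, ∀ x' ∈ Icc c d, |F a x - F a' x'| ≤ |x - x'| + |a - a'|) :
    ContinuousOn (fun p : ℝ × ℝ => F p.1 p.2) (univ ×ˢ Icc c d) := by
  have : LipschitzOnWith 2 (fun p : ℝ × ℝ => F p.1 p.2) (univ ×ˢ Icc c d) := by
    apply LipschitzOnWith.of_dist_le_mul
    rintro ⟨a, x⟩ ⟨-, hx⟩ ⟨a', x'⟩ ⟨-, hx'⟩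
    have := h a a' x hx x' hx'
    rw [Real.dist_eq]
    refine this.trans ?_
    have h1 : |x - x'| ≤ dist (a, x) (a', x') := by
      rw [Prod.dist_eq, ← Real.dist_eq]; exact le_max_right _ _
    have h2 : |a - a'| ≤ dist (a, x) (a', x') := by
      rw [Prod.dist_eq, ← Real.dist_eq]; exact le_max_left _ _
    push_cast
    linarith
  exact this.continuousOn

lemma desc_joint {σ : ℝ → ℝ} {c d : ℝ} {y₁ y₂ : ℝ → ℝ} (h₁ : IsDesc σ c d y₁) (h₂ : IsDesc σ c d y₂)
    {x x' : ℝ} (hx : x ∈ Icc c d) (hx' : x' ∈ Icc c d) :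
    |y₁ x - y₂ x'| ≤ |x - x'| + |y₁ c - y₂ c| := by
  have h0 := desc_dist h₁ h₂ hx
  have h1 : |y₂ x - y₂ x'| ≤ |x - x'| := by
    rcases le_total x x' with h | h
    · have a1 := h₂.anti hx hx' h
      have a2 := h₂.lip hx hx' h
      simp only at a2
      rw [abs_of_nonneg (by linarith), abs_of_nonpos (by linarith)]
      linarith
    · have a1 := h₂.anti hx' hx h
      have a2 := h₂.lip hx' hx h
      simp only at a2
      rw [abs_of_nonpos (by linarith), abs_of_nonneg (by linarith)]
      linarith
  have h3 := abs_sub_le (y₁ x) (y₂ x) (y₂ x')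
  linarith

lemma asc_joint {σ : ℝ → ℝ} {c d : ℝ} {y₁ y₂ : ℝ → ℝ} (h₁ : IsAsc σ c d y₁) (h₂ : IsAsc σ c d y₂)
    {x x' : ℝ} (hx : x ∈ Icc c d) (hx' : x' ∈ Icc c d) :
    |y₁ x - y₂ x'| ≤ |x - x'| + |y₁ d - y₂ d| := by
  have := desc_joint h₁.rev h₂.rev (neg_mem hx) (neg_mem hx')
  simp only [rev, neg_neg] at this
  rwa [show -x - -x' = -(x - x') by ring, abs_neg] at this

/-- families of leaves -/
structure Leaves (s : ℝ → ℝ) (c d : ℝ) (F G : ℝ → ℝ → ℝ) : Prop where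
  hs : Continuous s
  hcd : c < d
  Fd : ∀ a, F a d = a
  Fa : ∀ a, IsAsc s c d (F a)
  Gc : ∀ b, G b c = b
  Gd : ∀ b, IsDesc s c d (G b)

lemma leaves_exist {s : ℝ → ℝ} (hs : Continuous s) {c d : ℝ} (hcd : c < d) :
    ∃ F G, Leaves s c d F G := by
  choose F hF1 hF2 using fun a => asc_exists hs hcd.le a
  choose G hG1 hG2 using fun a => desc_exists hs hcd.le a
  exact ⟨F, G, hs, hcd, hF1, hF2, hG1, hG2⟩

lemma Leaves.Fcont {s : ℝ → ℝ} {c d : ℝ} {F G : ℝ → ℝ → ℝ} (L : Leaves s c d F G) :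
    ContinuousOn (fun p : ℝ × ℝ => F p.1 p.2) (univ ×ˢ Icc c d) :=
  fam_cont fun a a' x hx x' hx' => by
    simpa [L.Fd] using asc_joint (L.Fa a) (L.Fa a') hx hx'

lemma Leaves.Gcont {s : ℝ → ℝ} {c d : ℝ} {F G : ℝ → ℝ → ℝ} (L : Leaves s c d F G) :
    ContinuousOn (fun p : ℝ × ℝ => G p.1 p.2) (univ ×ˢ Icc c d) :=
  fam_cont fun a a' x hx x' hx' => by
    simpa [L.Gc] using desc_joint (L.Gd a) (L.Gd a') hx hx'

theorem mkHalf {s : ℝ → ℝ} {c d : ℝ} {F G : ℝ → ℝ → ℝ} (L : Leaves s c d F G)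
    (hinj : InjOn s (Icc c d)) {S Z X0 D : Set (ℝ × ℝ)} (hS : IsCompact S) {κ : ℝ → ℝ}
    (hκ : ContinuousOn κ (Prod.fst '' S))
    (hsb : ∀ x ∈ Icc c d, |s x| ≤ 1 / 2) (hub : ∀ u ∈ S, u.2 ≤ 1 / 2)
    (ex : ∀ u ∈ S, ∃ x ∈ Ico c d, F (κ u.1) x = G u.2 x ∧ s x ≤ G u.2 x)
    (Finj : ∀ u ∈ S, ∀ v ∈ S, ∀ x ∈ Ioo c d, F (κ u.1) x = F (κ v.1) x → u.1 = v.1)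
    (Ginj : ∀ u ∈ S, ∀ v ∈ S, ∀ x ∈ Ico c d, G u.2 x = G v.2 x → u.2 = v.2)
    (cover : ∀ᶠ p in 𝓝[{p : ℝ × ℝ | c ≤ p.1 ∧ s p.1 ≤ p.2}] (0 : ℝ × ℝ),
      p.1 ∈ Ico c d ∧ ∃ u ∈ S, F (κ u.1) p.1 = p.2 ∧ G u.2 p.1 = p.2)
    (hX : ∀ u ∈ S, (F (κ u.1) c = u.2 ∧ s c ≤ u.2) ↔ u ∈ X0)
    (hD : ∀ u ∈ S, ∀ x ∈ Ico c d, F (κ u.1) x = G u.2 x → s x ≤ G u.2 x →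
      (G u.2 x = s x ↔ u ∈ D))
    (hZ : ∀ u ∈ S, ∀ v ∈ S, u ∈ X0 → v ∈ X0 → u.2 = v.2 → u = v ∨ (u ∈ Z ∧ v ∈ Z))
    (hZ2 : ∀ u ∈ S, u ∈ Z → u.2 = 0 ∧ u ∈ X0)
    (horig : (0 : ℝ × ℝ) ∈ S ∧ (0:ℝ) ∈ Ico c d ∧ F (κ 0) 0 = 0 ∧ G 0 0 = 0 ∧ s 0 = 0) :
    ∃ pt, HalfParam s c S Z X0 D pt := by
  choose! X hX1 hX2 hX3 using ex
  have hXI : ∀ u ∈ S, X u ∈ Icc c d := fun u hu => Ico_subset_Icc_self (hX1 u hu)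
  have huniq : ∀ u ∈ S, ∀ x ∈ Icc c d, F (κ u.1) x = G u.2 x → s x ≤ G u.2 x → X u = x :=
    fun u hu x hx h1 h2 => cross_unique L.hs hinj (L.Fa _) (L.Gd _) (hXI u hu) hx
      (hX2 u hu) h1 (hX3 u hu) h2
  have hcX : ∀ u ∈ S, X u = c ↔ u ∈ X0 := by
    intro u hu
    rw [← hX u hu]
    constructor
    · intro h
      have h2 := hX2 u hu
      have h3 := hX3 u hu
      rw [h, L.Gc] at h2 h3
      exact ⟨h2, h3⟩
    · rintro ⟨h2, h3⟩
      exact huniq u hu c (left_mem_Icc.2 L.hcd.le) (by rw [L.Gc]; exact h2) (by rw [L.Gc]; exact h3)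
  -- continuity of X
  have hFc : ContinuousOn (fun q : (ℝ × ℝ) × ℝ => F (κ q.1.1) q.2) (S ×ˢ Icc c d) := by
    apply L.Fcont.comp (f := fun q : (ℝ × ℝ) × ℝ => (κ q.1.1, q.2))
    · apply ContinuousOn.prodMk _ continuousOn_snd
      exact hκ.comp (f := fun q : (ℝ × ℝ) × ℝ => q.1.1) (by fun_prop)
        (fun q hq => ⟨q.1, hq.1, rfl⟩)
    · exact fun q hq => ⟨mem_univ _, hq.2⟩
  have hGc : ContinuousOn (fun q : (ℝ × ℝ) × ℝ => G q.1.2 q.2) (S ×ˢ Icc c d) := by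
    apply L.Gcont.comp (f := fun q : (ℝ × ℝ) × ℝ => (q.1.2, q.2)) (by fun_prop)
    exact fun q hq => ⟨mem_univ _, hq.2⟩
  have hbox : IsCompact (S ×ˢ Icc c d) := hS.prod isCompact_Icc
  set K : Set ((ℝ × ℝ) × ℝ) := {q | q ∈ S ×ˢ Icc c d ∧ F (κ q.1.1) q.2 = G q.1.2 q.2 ∧ s q.2 ≤ G q.1.2 q.2} with hK
  have hKc : IsCompact K := by
    have c1 : IsClosed ((S ×ˢ Icc c d) ∩ (fun q : (ℝ × ℝ) × ℝ => F (κ q.1.1) q.2 - G q.1.2 q.2) ⁻¹' {0}) :=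
      (hFc.sub hGc).preimage_isClosed_of_isClosed hbox.isClosed isClosed_singleton
    have c2 : IsClosed ((S ×ˢ Icc c d) ∩ (fun q : (ℝ × ℝ) × ℝ => G q.1.2 q.2 - s q.2) ⁻¹' (Ici 0)) := by
      apply ContinuousOn.preimage_isClosed_of_isClosed _ hbox.isClosed isClosed_Ici
      exact hGc.sub (L.hs.comp_continuousOn continuousOn_snd)
    have hKe : K = ((S ×ˢ Icc c d) ∩ (fun q : (ℝ × ℝ) × ℝ => F (κ q.1.1) q.2 - G q.1.2 q.2) ⁻¹' {0}) ∩
        ((S ×ˢ Icc c d) ∩ (fun q : (ℝ × ℝ) × ℝ => G q.1.2 q.2 - s q.2) ⁻¹' (Ici 0)) := by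
      ext q
      simp only [hK, mem_inter_iff, mem_preimage, mem_singleton_iff, mem_Ici, sub_nonneg, sub_eq_zero, mem_setOf_eq]
      tauto
    have hcl : IsClosed K := hKe ▸ c1.inter c2
    exact hbox.of_isClosed_subset hcl (fun q hq => hq.1)
  have hpt : ContinuousOn (fun u => (X u, G u.2 (X u))) S := by
    have : ContinuousOn (fun u => (X u, G u.2 (X u))) (Prod.fst '' K) := by
      apply cont_factor hKc (p := Prod.fst) (f := fun q => (q.2, G q.1.2 q.2)) continuousOn_fst
      · exact continuousOn_snd.prodMk (hGc.mono fun q hq => hq.1)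
      · rintro ⟨u, x⟩ ⟨⟨hu, hx⟩, h1, h2⟩
        have := huniq u hu x hx h1 h2
        simp only [this]
    apply this.mono
    intro u hu
    exact ⟨(u, X u), ⟨⟨hu, hXI u hu⟩, hX2 u hu, hX3 u hu⟩, rfl⟩
  have hq1 : ∀ u ∈ S, rr (G u.2 (X u) - s (X u)) = Real.sqrt (G u.2 (X u) - s (X u)) := by
    intro u hu
    apply rr_eq (sub_nonneg.2 (hX3 u hu))
    have h1 := (L.Gd u.2).anti (left_mem_Icc.2 L.hcd.le) (hXI u hu) (hXI u hu).1
    rw [L.Gc] at h1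
    have h2 := abs_le.1 (hsb _ (hXI u hu))
    linarith [hub u hu]
  have him : ∀ a b : ℝ, ∀ y : ℝ → ℝ, c ≤ a → (∀ x ∈ Ioo a b, (x, y x) ∈ (fun u => (X u, G u.2 (X u))) '' S) →
      ∀ x ∈ Ioo a b, x ∈ Ioo c d ∧ rr (y x - s x) = Real.sqrt (y x - s x) := by
    intro a b y hca h x hx
    obtain ⟨u, hu, he⟩ := h x hx
    simp only [Prod.mk.injEq] at he
    have h2 := hq1 u hu
    rw [he.2, he.1] at h2
    have h3 := hX1 u hu
    rw [he.1] at h3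
    exact ⟨⟨hca.trans_lt hx.1, h3.2⟩, h2⟩
  refine ⟨fun u => (X u, G u.2 (X u)), hS, hpt, ?_, fun u hu => (hXI u hu).1, hcX, ?_, hX3, ?_, ?_, ?_, ?_, ?_, ?_, ?_⟩
  · intro u hu v hv
    simp only [Prod.mk.injEq]
    constructor
    · rintro ⟨h1, h2⟩
      rw [h1] at h2
      have e2 := Ginj u hu v hv _ (hX1 v hv) h2
      rcases (hX1 v hv).1.eq_or_lt with h | h
      · exact hZ u hu v hv ((hcX u hu).1 (by rw [h1, ← h])) ((hcX v hv).1 h.symm) e2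
      · left
        have e1 := Finj u hu v hv (X v) ⟨h, (hX1 v hv).2⟩ (by
          have q1 := hX2 u hu
          have q2 := hX2 v hv
          rw [h1] at q1
          rw [q1, q2, e2])
        exact Prod.ext e1 e2
    · rintro (h | ⟨h1, h2⟩)
      · subst h; exact ⟨rfl, rfl⟩
      · obtain ⟨a1, a2⟩ := hZ2 u hu h1
        obtain ⟨b1, b2⟩ := hZ2 v hv h2
        have a3 := (hcX u hu).2 a2
        have b3 := (hcX v hv).2 b2
        rw [a3, b3, a1, b1]
        exact ⟨rfl, rfl⟩
  · intro u hu hu0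
    have := (hcX u hu).2 hu0
    simp only [this, L.Gc]
  · intro u hu
    exact hD u hu (X u) (hX1 u hu) (hX2 u hu) (hX3 u hu)
  · filter_upwards [cover, self_mem_nhdsWithin] with p hp hps
    obtain ⟨hp1, u, hu, h1, h2⟩ := hp
    have := huniq u hu p.1 (Ico_subset_Icc_self hp1) (h1.trans h2.symm) (by rw [h2]; exact hps.2)
    refine ⟨u, hu, ?_⟩
    simp only [this, h2]
  · obtain ⟨h1, h2, h3, h4, h5⟩ := horig
    refine ⟨h1, ?_⟩
    have := huniq 0 h1 0 (Ico_subset_Icc_self h2) (by simpa [h4] using h3) (by simp [h4, h5])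
    simp [this, h4]
  · intro α
    refine ⟨F (κ α), ?_⟩
    rintro u hu rfl
    refine ⟨(hX2 u hu).symm, fun hc => ?_⟩
    have := (L.Fa (κ u.1)).2 (X u) ⟨hc, (hX1 u hu).2⟩
    rw [hX2 u hu, hq1 u hu] at this
    exact this
  · intro β
    refine ⟨G β, ?_⟩
    rintro u hu rfl
    refine ⟨rfl, fun hc => ?_⟩
    have := (L.Gd u.2).2 (X u) ⟨hc, (hX1 u hu).2⟩
    rw [hq1 u hu] at this
    exact this
  · intro a b y hca h u hu v hv hua hva hyu hyv
    simp only at hua hva hyu hyv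
    wlog hle : X u ≤ X v generalizing u v
    · exact (this v hv u hu hva hua hyv hyu (le_of_not_ge hle)).symm
    have hb := him a b y hca (fun x hx => (h x hx).1)
    have hasc : IsAsc s (X u) (X v) y := by
      refine ⟨fun x hx => ?_, fun x hx => ?_⟩
      · have hx' : x ∈ Ioo a b := ⟨hua.1.trans_le hx.1, hx.2.trans_lt hva.2⟩
        exact (h x hx').2.continuousAt.continuousWithinAt
      · have hx' : x ∈ Ioo a b := ⟨hua.1.trans hx.1, hx.2.trans hva.2⟩
        rw [(hb x hx').2]
        exact (h x hx').2
    have hF := (L.Fa (κ v.1)).sub (hXI u hu).1 (hXI v hv).2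
    have he := asc_eq hF hasc (by rw [hX2 v hv, hyv]) (left_mem_Icc.2 hle)
    apply Finj u hu v hv (X u) (hb _ hua).1
    rw [he, hX2 u hu, hyu]
  · intro a b y hca h u hu v hv hua hva hyu hyv
    simp only at hua hva hyu hyv
    wlog hle : X u ≤ X v generalizing u v
    · exact (this v hv u hu hva hua hyv hyu (le_of_not_ge hle)).symm
    have hb := him a b y hca (fun x hx => (h x hx).1)
    have hasc : IsDesc s (X u) (X v) y := by
      refine ⟨fun x hx => ?_, fun x hx => ?_⟩
      · have hx' : x ∈ Ioo a b := ⟨hua.1.trans_le hx.1, hx.2.trans_lt hva.2⟩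
        exact (h x hx').2.continuousAt.continuousWithinAt
      · have hx' : x ∈ Ioo a b := ⟨hua.1.trans hx.1, hx.2.trans hva.2⟩
        rw [(hb x hx').2]
        exact (h x hx').2
    have hF := (L.Gd u.2).sub (hXI u hu).1 (hXI v hv).2
    have he := desc_eq hF hasc hyu (right_mem_Icc.2 hle)
    apply Ginj u hu v hv (X v) (hX1 v hv)
    rw [he, hyv]

end BD

namespace BD
open Topology

lemma desc_flat {s g : ℝ → ℝ} {a b : ℝ} (hs : Continuous s) (hab : a < b) (hg : IsDesc s a b g)
    (h : g a ≤ g b) : ∀ x ∈ Icc a b, g a ≤ s x := by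
  have hA := left_mem_Icc.2 hab.le
  have hB := right_mem_Icc.2 hab.le
  have hgc : ∀ x ∈ Icc a b, g x = g a := by
    intro x hx
    have a1 := hg.anti hA hx hx.1
    have a2 := hg.anti hx hB hx.2
    linarith
  have hder : ∀ x ∈ Ioo a b, g a ≤ s x := by
    intro x hx
    have d1 := hg.2 x hx
    have d2 : HasDerivAt g 0 x := by
      apply (hasDerivAt_const x (g a)).congr_of_eventuallyEq
      filter_upwards [Ioo_mem_nhds hx.1 hx.2] with t ht using hgc t ⟨ht.1.le, ht.2.le⟩
    have := rr_eq_zero (neg_eq_zero.1 (d1.unique d2))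
    rw [hgc x ⟨hx.1.le, hx.2.le⟩] at this
    linarith
  intro x hx
  have hc : IsClosed {x | g a ≤ s x} := isClosed_le continuous_const hs
  have : closure (Ioo a b) ⊆ {x | g a ≤ s x} := closure_minimal hder hc
  rw [closure_Ioo hab.ne] at this
  exact this hx

lemma const_desc {s : ℝ → ℝ} {a b k : ℝ} (h : ∀ x ∈ Icc a b, k ≤ s x) : IsDesc s a b (fun _ => k) := by
  refine ⟨continuousOn_const, fun x hx => ?_⟩
  rw [rr_of_nonpos (by linarith [h x (Ioo_subset_Icc_self hx)]), neg_zero]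
  exact hasDerivAt_const _ _

lemma const_asc {s : ℝ → ℝ} {a b k : ℝ} (h : ∀ x ∈ Icc a b, k ≤ s x) : IsAsc s a b (fun _ => k) := by
  refine ⟨continuousOn_const, fun x hx => ?_⟩
  rw [rr_of_nonpos (by linarith [h x (Ioo_subset_Icc_self hx)])]
  exact hasDerivAt_const _ _

lemma desc_const {s g : ℝ → ℝ} {a b k : ℝ} (hg : IsDesc s a b g) (h : ∀ x ∈ Icc a b, k ≤ s x)
    (he : g a = k) : ∀ x ∈ Icc a b, g x = k :=
  fun _ hx => desc_eq hg (const_desc h) he hx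

lemma asc_const {s g : ℝ → ℝ} {a b k : ℝ} (hg : IsAsc s a b g) (h : ∀ x ∈ Icc a b, k ≤ s x)
    (he : g b = k) : ∀ x ∈ Icc a b, g x = k :=
  fun _ hx => asc_eq hg (const_asc h) he hx

lemma cross_exists {s f g : ℝ → ℝ} {c d : ℝ} (hs : Continuous s) (hcd : c < d) (hf : IsAsc s c d f)
    (hg : IsDesc s c d g) (h1 : f c ≤ g c) (h2 : g d < f d) :
    ∃ x ∈ Ico c d, f x = g x ∧ s x ≤ g x := by
  have hc : ContinuousOn (fun x => f x - g x) (Icc c d) := hf.1.sub hg.1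
  obtain ⟨x0, hx0, he0⟩ := intermediate_value_Icc hcd.le hc (show (0:ℝ) ∈ Icc _ _ from
    ⟨sub_nonpos.2 h1, sub_nonneg.2 h2.le⟩)
  have hcl : IsCompact (Icc c d ∩ (fun t => f t - g t) ⁻¹' {0}) :=
    isCompact_Icc.of_isClosed_subset (hc.preimage_isClosed_of_isClosed isClosed_Icc isClosed_singleton)
      inter_subset_left
  obtain ⟨z, hz, hzl⟩ := hcl.exists_isGreatest ⟨x0, hx0, he0⟩
  have hze : f z = g z := by simpa [sub_eq_zero] using hz.2
  have hzd : z < d := by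
    rcases hz.1.2.eq_or_lt with h | h
    · rw [h] at hze; exact absurd hze h2.ne'
    · exact h
  refine ⟨z, ⟨hz.1.1, hzd⟩, hze, ?_⟩
  by_contra hlt
  push Not at hlt
  have hfq : ContinuousWithinAt (fun x => f x - s x) (Icc c d) z := (hf.1 z hz.1).sub hs.continuousWithinAt
  have hgq : ContinuousWithinAt (fun x => g x - s x) (Icc c d) z := (hg.1 z hz.1).sub hs.continuousWithinAt
  have hsub : 𝓝[>] z ≤ 𝓝[Icc c d] z := by
    rw [nhdsWithin_le_iff]
    exact mem_of_superset (Ioo_mem_nhdsGT hzd) (fun x hx => ⟨hz.1.1.trans hx.1.le, hx.2.le⟩)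
  have hev : ∀ᶠ x in 𝓝[>] z, f x - s x < 0 ∧ g x - s x < 0 :=
    ((hfq.mono_left hsub).eventually_lt_const (show f z - s z < 0 by linarith)).and
      ((hgq.mono_left hsub).eventually_lt_const (show g z - s z < 0 by linarith))
  obtain ⟨w, hw, hs2⟩ := (mem_nhdsGT_iff_exists_Ioo_subset).1 (hev.and (Ioo_mem_nhdsGT hzd))
  have hw : z < w := hw
  have hz1 : (z + w) / 2 ∈ Ioo z w := ⟨by linarith, by linarith⟩
  obtain ⟨-, hzd2⟩ := hs2 hz1
  have hsubI : ∀ x ∈ Icc z ((z + w) / 2), x ∈ Icc c d := fun x hx =>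
    ⟨hz.1.1.trans hx.1, hx.2.trans hzd2.2.le⟩
  have hmF : AntitoneOn f (Icc z ((z + w) / 2)) := by
    apply anti_of (hf.1.mono hsubI) (fun x hx => hf.2 x ⟨hz.1.1.trans_lt hx.1, hx.2.trans hzd2.2⟩)
    intro x hx
    rw [rr_of_nonpos (hs2 ⟨hx.1, hx.2.trans hz1.2⟩).1.1.le]
  have hmG : MonotoneOn g (Icc z ((z + w) / 2)) := by
    apply mono_of (hg.1.mono hsubI) (fun x hx => hg.2 x ⟨hz.1.1.trans_lt hx.1, hx.2.trans hzd2.2⟩)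
    intro x hx
    rw [rr_of_nonpos (hs2 ⟨hx.1, hx.2.trans hz1.2⟩).1.2.le, neg_zero]
  have l1 := left_mem_Icc.2 hz1.1.le
  have l2 := right_mem_Icc.2 hz1.1.le
  have e1 := hmF l1 l2 hz1.1.le
  have e2 := hmG l1 l2 hz1.1.le
  have e3 := hf.mono hz.1 (hsubI _ l2) hz1.1.le
  have e4 := hg.anti hz.1 (hsubI _ l2) hz1.1.le
  have : (z + w) / 2 ≤ z := hzl ⟨hsubI _ l2, by simp; linarith⟩
  linarith [hz1.1]

section
variable {s : ℝ → ℝ} {c d : ℝ} {F G : ℝ → ℝ → ℝ}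

lemma Leaves.F_le (L : Leaves s c d F G) {x : ℝ} (hx : x ∈ Icc c d) (a : ℝ) : F a x ≤ a := by
  have := (L.Fa a).mono hx (right_mem_Icc.2 L.hcd.le) hx.2
  rwa [L.Fd] at this
lemma Leaves.F_ge (L : Leaves s c d F G) {x : ℝ} (hx : x ∈ Icc c d) (a : ℝ) : a - (d - c) ≤ F a x := by
  have := (L.Fa a).lip hx (right_mem_Icc.2 L.hcd.le) hx.2
  simp only [L.Fd] at this
  linarith [hx.1]
lemma Leaves.G_le (L : Leaves s c d F G) {x : ℝ} (hx : x ∈ Icc c d) (a : ℝ) : G a x ≤ a := by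
  have := (L.Gd a).anti (left_mem_Icc.2 L.hcd.le) hx hx.1
  rwa [L.Gc] at this
lemma Leaves.G_ge (L : Leaves s c d F G) {x : ℝ} (hx : x ∈ Icc c d) (a : ℝ) : a - (d - c) ≤ G a x := by
  have := (L.Gd a).lip (left_mem_Icc.2 L.hcd.le) hx hx.1
  simp only [L.Gc] at this
  linarith [hx.2]
lemma Leaves.F_contx (L : Leaves s c d F G) {x : ℝ} (hx : x ∈ Icc c d) : Continuous (fun a => F a x) := by
  have := L.Fcont.comp (f := fun a : ℝ => (a, x)) (s := univ) (by fun_prop) (fun a _ => ⟨mem_univ _, hx⟩)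
  rwa [← continuousOn_univ]
lemma Leaves.G_contx (L : Leaves s c d F G) {x : ℝ} (hx : x ∈ Icc c d) : Continuous (fun a => G a x) := by
  have := L.Gcont.comp (f := fun a : ℝ => (a, x)) (s := univ) (by fun_prop) (fun a _ => ⟨mem_univ _, hx⟩)
  rwa [← continuousOn_univ]
lemma Leaves.F_surj (L : Leaves s c d F G) {x : ℝ} (hx : x ∈ Icc c d) (y : ℝ) : ∃ a, F a x = y := by
  have h := L.hcd
  obtain ⟨a, -, ha⟩ := intermediate_value_Icc (show y ≤ y + (d - c) by linarith)
    (L.F_contx hx).continuousOn (show y ∈ Icc _ _ from ⟨L.F_le hx y, by linarith [L.F_ge hx (y + (d - c))]⟩)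
  exact ⟨a, ha⟩
lemma Leaves.G_surj (L : Leaves s c d F G) {x : ℝ} (hx : x ∈ Icc c d) (y : ℝ) : ∃ a, G a x = y := by
  have h := L.hcd
  obtain ⟨a, -, ha⟩ := intermediate_value_Icc (show y ≤ y + (d - c) by linarith)
    (L.G_contx hx).continuousOn (show y ∈ Icc _ _ from ⟨L.G_le hx y, by linarith [L.G_ge hx (y + (d - c))]⟩)
  exact ⟨a, ha⟩
lemma Leaves.F_mono (L : Leaves s c d F G) {x : ℝ} (hx : x ∈ Icc c d) {a a' : ℝ} (h : a ≤ a') :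
    F a x ≤ F a' x := asc_mono (L.Fa a) (L.Fa a') (by rwa [L.Fd, L.Fd]) hx
lemma Leaves.G_mono (L : Leaves s c d F G) {x : ℝ} (hx : x ∈ Icc c d) {a a' : ℝ} (h : a ≤ a') :
    G a x ≤ G a' x := desc_mono (L.Gd a) (L.Gd a') (by rwa [L.Gc, L.Gc]) hx

lemma Leaves.near (L : Leaves s c d F G) (hd : 0 < d) (f : ℝ → ℝ) (hf : ContinuousOn f (Icc c d))
    (hc : c ≤ 0) :
    Tendsto (fun p : ℝ × ℝ => f p.1) (𝓝[{p : ℝ × ℝ | c ≤ p.1 ∧ s p.1 ≤ p.2}] (0 : ℝ × ℝ)) (𝓝 (f 0)) ∧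
    Tendsto (fun p : ℝ × ℝ => p.2) (𝓝[{p : ℝ × ℝ | c ≤ p.1 ∧ s p.1 ≤ p.2}] (0 : ℝ × ℝ)) (𝓝 0) ∧
    ∀ᶠ p in 𝓝[{p : ℝ × ℝ | c ≤ p.1 ∧ s p.1 ≤ p.2}] (0 : ℝ × ℝ), p.1 ∈ Ico c d := by
  have h3 : ∀ᶠ p in 𝓝[{p : ℝ × ℝ | c ≤ p.1 ∧ s p.1 ≤ p.2}] (0 : ℝ × ℝ), p.1 ∈ Ico c d := by
    have : ∀ᶠ p : ℝ × ℝ in 𝓝 (0 : ℝ × ℝ), p.1 < d :=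
      (continuous_fst.tendsto (0 : ℝ × ℝ)).eventually_lt_const hd
    filter_upwards [self_mem_nhdsWithin, this.filter_mono nhdsWithin_le_nhds] with p h1 h2
    exact ⟨h1.1, h2⟩
  refine ⟨?_, (continuous_snd.tendsto (0 : ℝ × ℝ)).mono_left nhdsWithin_le_nhds, h3⟩
  have h1 : Tendsto f (𝓝[Icc c d] 0) (𝓝 (f 0)) := hf 0 ⟨hc, hd.le⟩
  apply h1.comp
  rw [tendsto_nhdsWithin_iff]
  refine ⟨(continuous_fst.tendsto (0 : ℝ × ℝ)).mono_left nhdsWithin_le_nhds, ?_⟩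
  filter_upwards [h3] with p hp using Ico_subset_Icc_self hp
end

lemma decAt_of {s m : ℝ → ℝ} {c d : ℝ} (hm : ∀ x ∈ Ioo c d, HasDerivAt s (m x) x ∧ m x < 0)
    (hmc : ContinuousOn m (Ioo c d)) {z : ℝ} (hz : z ∈ Ioo c d) : DecAt s z := by
  have hc := (hmc z hz).continuousAt (Ioo_mem_nhds hz.1 hz.2)
  have hlt : m z < m z / 2 := by linarith [(hm z hz).2]
  have : ∀ᶠ x in 𝓝[<] z, m x < m z / 2 := (hc.eventually_lt_const hlt).filter_mono nhdsWithin_le_nhds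
  obtain ⟨w, hw1, hw2, hw3⟩ := exists_left hz.1 this
  refine ⟨w, -(m z / 2), m, hw2, by linarith [(hm z hz).2], fun x hx => ⟨(hm x ⟨hw1.trans_lt hx.1, hx.2.trans hz.2⟩).1, ?_⟩⟩
  linarith [hw3 x ⟨hx.1.le, hx.2⟩]

lemma rev_deriv {s m : ℝ → ℝ} {x : ℝ} (h : HasDerivAt s (m (-x)) (-x)) : HasDerivAt (rev s) (-(m (-x))) x :=
  (h.scomp x (hasDerivAt_neg x)).congr_deriv (by simp)

lemma incAt_rev {s m : ℝ → ℝ} {c d : ℝ} (hm : ∀ x ∈ Ioo c d, HasDerivAt s (m x) x ∧ m x < 0)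
    {z : ℝ} (hz : z ∈ Ico c d) : IncAt (rev s) (-z) := by
  refine ⟨-d, fun x => -(m (-x)), by linarith [hz.2], fun x hx => ?_⟩
  have := hm (-x) ⟨by linarith [hz.1, hx.2], by linarith [hx.1]⟩
  exact ⟨rev_deriv this.1, by linarith [this.2]⟩

def SS (δ : ℝ) : Set (ℝ × ℝ) := {u | -δ ≤ u.1 ∧ u.1 ≤ u.2 ∧ u.2 ≤ δ}

lemma SS_compact (δ : ℝ) : IsCompact (SS δ) := by
  apply (isCompact_Icc (a := -δ) (b := δ)).prod (isCompact_Icc (a := -δ) (b := δ)) |>.of_isClosed_subset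
  · exact (isClosed_le (continuous_const (y := -δ)) continuous_fst).inter
      ((isClosed_le continuous_fst continuous_snd).inter (isClosed_le continuous_snd (continuous_const (y := δ))))
  · rintro u ⟨h1, h2, h3⟩
    exact ⟨⟨h1, h2.trans h3⟩, ⟨h1.trans h2, h3⟩⟩

theorem chartSF {s m : ℝ → ℝ} (hs : Continuous s) (hs0 : s 0 = 0) {c d : ℝ} (hc : c ≤ 0) (hd : 0 < d)
    (hm : ∀ x ∈ Ioo c d, HasDerivAt s (m x) x ∧ m x < 0) (hmc : ContinuousOn m (Ioo c d))
    (hsb : ∀ x ∈ Icc c d, |s x| ≤ 1 / 2) :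
    ∃ δ0 > 0, ∀ δ, 0 < δ → δ ≤ δ0 → ∃ pt, HalfParam s c (SS δ) ∅
      {u | u.1 = u.2 ∧ s c ≤ u.2} {u | u.1 = u.2 ∧ u.2 ≤ s c} pt := by
  have hcd : c < d := hc.trans_lt hd
  obtain ⟨F, G, L⟩ := leaves_exist hs hcd
  have hcI : c ∈ Icc c d := left_mem_Icc.2 hcd.le
  have h0I : (0:ℝ) ∈ Icc c d := ⟨hc, hd.le⟩
  have h0I' : (0:ℝ) ∈ Ico c d := ⟨hc, hd⟩
  have hanti : StrictAntiOn s (Icc c d) := by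
    have := strictMono_of (f := fun x => -(s x)) (f' := fun x => -(m x)) (a := c) (b := d)
      hs.neg.continuousOn (fun x hx => (hm x hx).1.neg) (fun x hx => by linarith [(hm x hx).2])
    intro x hx y hy hxy
    have := this hx hy hxy
    simp only at this
    linarith
  have Fst : ∀ a a', a < a' → ∀ x ∈ Icc c d, F a x < F a' x := by
    intro a a' h
    apply asc_strict hs (L.Fa a) (L.Fa a') (by rwa [L.Fd, L.Fd])
    exact fun z hz _ => Or.inr (Or.inr (incAt_rev hm hz))
  have Gst : ∀ a a', a < a' → ∀ x ∈ Ico c d, G a x < G a' x := by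
    intro a a' h x hx
    exact desc_strict (b := x) hs ((L.Gd a).sub le_rfl hx.2.le) ((L.Gd a').sub le_rfl hx.2.le) (by rwa [L.Gc, L.Gc])
      (fun z hz _ => Or.inr (Or.inl (decAt_of hm hmc ⟨hz.1, hz.2.trans_lt hx.2⟩))) x (right_mem_Icc.2 hx.1)
  have Fin : ∀ a a', ∀ x ∈ Icc c d, F a x = F a' x → a = a' := by
    intro a a' x hx h
    rcases lt_trichotomy a a' with h1 | h1 | h1
    · exact absurd h (Fst _ _ h1 x hx).ne
    · exact h1
    · exact absurd h (Fst _ _ h1 x hx).ne'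
  have Gin : ∀ a a', ∀ x ∈ Ico c d, G a x = G a' x → a = a' := by
    intro a a' x hx h
    rcases lt_trichotomy a a' with h1 | h1 | h1
    · exact absurd h (Gst _ _ h1 x hx).ne
    · exact h1
    · exact absurd h (Gst _ _ h1 x hx).ne'
  choose κ hκ using L.F_surj hcI
  have hκi : ∀ a, κ (F a c) = a := fun a => Fin _ _ c hcI (hκ _)
  have hsn : ∀ x ∈ Icc c 0, 0 ≤ s x := by
    intro x hx
    have := hanti.antitoneOn (⟨hx.1, hx.2.trans hd.le⟩ : x ∈ Icc c d) h0I hx.2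
    rwa [hs0] at this
  have Fneg : ∀ k, k ≤ 0 → F (κ k) 0 = k := by
    intro k hk
    obtain ⟨a, ha⟩ := L.F_surj h0I k
    have := asc_const ((L.Fa a).sub le_rfl hd.le) (fun x hx => hk.trans (hsn x hx)) ha c ⟨le_rfl, hc⟩
    rw [← this, hκi, ha, this]
  have Gneg : G 0 0 = 0 := desc_const ((L.Gd 0).sub le_rfl hd.le) hsn (L.Gc 0) 0 ⟨hc, le_rfl⟩
  have hgap : G 0 d < κ 0 := by
    by_contra hcon
    push Not at hcon
    have h1 := L.G_le (right_mem_Icc.2 hcd.le) 0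
    have h2 := L.F_le hcI (κ 0)
    rw [hκ] at h2
    have := desc_flat hs hcd (L.Gd 0) (by rw [L.Gc]; linarith) d (right_mem_Icc.2 hcd.le)
    rw [L.Gc] at this
    have h3 := hanti h0I (right_mem_Icc.2 hcd.le) hd
    linarith
  set gap := κ 0 - G 0 d with hgapd
  set a1 := κ 0 - gap / 3 with ha1
  have hgp : 0 < gap := by linarith
  have hVa1 : F a1 c < 0 := by
    have := Fst a1 (κ 0) (by linarith) c hcI
    rwa [hκ] at this
  refine ⟨min (min (gap / 3) (-(F a1 c))) (1 / 2), ?_, ?_⟩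
  · refine lt_min (lt_min (by linarith) (by linarith)) (by norm_num)
  intro δ hδ hδ0
  have hδ1 : δ ≤ gap / 3 := hδ0.trans ((min_le_left _ _).trans (min_le_left _ _))
  have hδ2 : δ ≤ -(F a1 c) := hδ0.trans ((min_le_left _ _).trans (min_le_right _ _))
  have hδ3 : δ ≤ 1 / 2 := hδ0.trans (min_le_right _ _)
  apply mkHalf L (κ := κ) hanti.injOn (SS_compact δ)
  · -- continuity
    have : ContinuousOn κ ((fun a => F a c) '' Icc (-δ) (δ + (d - c))) :=
      cont_factor isCompact_Icc (f := id) (L.F_contx hcI).continuousOn continuousOn_id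
        (fun u _ => hκi u)
    apply this.mono
    rintro α ⟨u, hu, rfl⟩
    refine ⟨κ u.1, ⟨?_, ?_⟩, hκ _⟩
    · have := L.F_le hcI (κ u.1)
      rw [hκ] at this
      exact hu.1.trans this
    · have := L.F_ge hcI (κ u.1)
      rw [hκ] at this
      linarith [hu.2.1, hu.2.2]
  · exact hsb
  · exact fun u hu => hu.2.2.trans hδ3
  · intro u hu
    apply cross_exists hs hcd (L.Fa _) (L.Gd _)
    · rw [hκ, L.Gc]; exact hu.2.1
    · rw [L.Fd]
      have h1 : a1 ≤ κ u.1 := by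
        by_contra hlt
        push Not at hlt
        have := Fst _ _ hlt c hcI
        rw [hκ] at this
        linarith [hu.1]
      have h2 : G u.2 d ≤ G 0 d + δ := by
        have := desc_dist (L.Gd u.2) (L.Gd 0) (right_mem_Icc.2 hcd.le)
        rw [L.Gc, L.Gc, sub_zero] at this
        have h3 : |u.2| ≤ δ := abs_le.2 ⟨hu.1.trans hu.2.1, hu.2.2⟩
        linarith [(abs_le.1 (this.trans h3)).2]
      linarith
  · intro u _ v _ x hx h
    have := Fin _ _ x (Ioo_subset_Icc_self hx) h
    rw [← hκ u.1, ← hκ v.1, this]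
  · intro u _ v _ x hx h
    exact Gin _ _ x hx h
  · obtain ⟨n1, n2, n3⟩ := L.near hd (F (κ (-δ))) (L.Fa _).1 hc
    obtain ⟨m1, -, -⟩ := L.near hd (G δ) (L.Gd _).1 hc
    rw [Fneg (-δ) (by linarith)] at n1
    have hG : 0 < G δ 0 := by
      have := Gst 0 δ hδ 0 h0I'
      rwa [Gneg] at this
    have e1 := n1.eventually_lt n2 (show -δ < 0 by linarith)
    have e2 := n2.eventually_lt m1 hG
    filter_upwards [e1, e2, n3] with p h1 h2 h3
    refine ⟨h3, ?_⟩
    have hp := Ico_subset_Icc_self h3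
    obtain ⟨a, ha⟩ := L.F_surj hp p.2
    obtain ⟨b, hb⟩ := L.G_surj hp p.2
    refine ⟨(F a c, b), ⟨?_, ?_, ?_⟩, ?_, hb⟩
    · by_contra hlt
      push Not at hlt
      simp only at hlt
      have h4 : a ≤ κ (-δ) := by
        by_contra h5
        push Not at h5
        have := Fst _ _ h5 c hcI
        rw [hκ] at this
        linarith
      have := L.F_mono hp h4
      linarith
    · have q1 := (L.Fa a).mono hcI hp hp.1
      have q2 := L.G_le hp b
      simp only
      linarith
    · by_contra hlt
      push Not at hlt
      have := L.G_mono hp hlt.le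
      simp only at this
      linarith
    · simp only [hκi, ha]
  · intro u _
    rw [hκ]
    rfl
  · intro u hu x hx h1 h2
    have hxI := Ico_subset_Icc_self hx
    constructor
    · intro he
      have hk : ∀ t ∈ Icc c x, s x ≤ s t := fun t ht =>
        hanti.antitoneOn (⟨ht.1, ht.2.trans hx.2.le⟩ : t ∈ Icc c d) hxI ht.2
      have f1 := asc_const ((L.Fa (κ u.1)).sub le_rfl hx.2.le) hk (h1.trans he) c ⟨le_rfl, hx.1⟩
      have g1 := desc_const ((L.Gd (s x)).sub le_rfl hx.2.le) hk (L.Gc _) x ⟨hx.1, le_rfl⟩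
      have g2 := Gin _ _ x hx (he.trans g1.symm)
      rw [hκ] at f1
      refine ⟨f1.trans g2.symm, ?_⟩
      rw [g2]
      exact hk c ⟨le_rfl, hx.1⟩
    · rintro ⟨e1, e2⟩
      have f1 := (L.Fa (κ u.1)).mono hcI hxI hx.1
      have f2 := L.G_le hxI u.2
      rw [hκ] at f1
      have hy : G u.2 x = u.2 := by linarith
      rcases hx.1.eq_or_lt with h | h
      · apply le_antisymm _ h2
        rw [hy, ← h]; exact e2
      · apply le_antisymm _ h2
        have := desc_flat hs h ((L.Gd u.2).sub le_rfl hx.2.le) (by rw [L.Gc, hy]) x ⟨hx.1, le_rfl⟩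
        rw [L.Gc] at this
        rwa [hy]
  · rintro u _ v _ ⟨h1, -⟩ ⟨h2, -⟩ h
    left
    exact Prod.ext (by rw [h1, h2, h]) h
  · intro u _ h
    exact absurd h (notMem_empty _)
  · refine ⟨⟨by simpa using hδ.le, le_rfl, hδ.le⟩, h0I', Fneg 0 le_rfl, Gneg, hs0⟩

end BD

namespace BD
open Topology

lemma barrier {s f : ℝ → ℝ} {ε : ℝ} (hε : 0 < ε) (hε1 : ε ≤ 1) (hs0 : ∀ x ∈ Icc 0 ε, 0 ≤ s x)
    (hsb : ∀ x ∈ Icc 0 ε, s x ≤ x ^ 2 / 16) (hf : IsAsc s 0 ε f) (he : f ε ≤ ε ^ 2 / 16) : f 0 ≤ 0 := by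
  by_contra hcon
  push Not at hcon
  have hc : ContinuousOn (fun x => f x - x ^ 2 / 8) (Icc 0 ε) := hf.1.sub (by fun_prop)
  have hεI := right_mem_Icc.2 hε.le
  have h0I := left_mem_Icc.2 hε.le
  have hcl : IsCompact (Icc 0 ε ∩ (fun x => f x - x ^ 2 / 8) ⁻¹' (Iic 0)) :=
    isCompact_Icc.of_isClosed_subset (hc.preimage_isClosed_of_isClosed isClosed_Icc isClosed_Iic)
      inter_subset_left
  obtain ⟨z, hz, hzl⟩ := hcl.exists_isLeast ⟨ε, hεI, by
    simp only [mem_preimage, mem_Iic]; nlinarith⟩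
  have hpos : ∀ x ∈ Ico 0 z, 0 < f x - x ^ 2 / 8 := by
    intro x hx
    by_contra h
    push Not at h
    exact absurd (hzl ⟨⟨hx.1, hx.2.le.trans hz.1.2⟩, h⟩) (not_le.2 hx.2)
  have hmon : MonotoneOn (fun x => f x - x ^ 2 / 8) (Icc 0 z) := by
    apply mono_of (f' := fun x => rr (f x - s x) - x / 4) (hc.mono (Icc_subset_Icc le_rfl hz.1.2))
    · intro x hx
      have h1 := hf.2 x ⟨hx.1, hx.2.trans_le hz.1.2⟩
      have h2 := ((hasDerivAt_id x).pow 2).div_const 8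
      exact (h1.sub h2).congr_deriv (by simp; ring)
    · intro x hx
      have hx' : x ∈ Icc 0 ε := ⟨hx.1.le, hx.2.le.trans hz.1.2⟩
      have h1 := hpos x ⟨hx.1.le, hx.2⟩
      have h2 := hsb x hx'
      have hx1 : x ≤ 1 := hx'.2.trans hε1
      have h3 : rr (x ^ 2 / 16) ≤ rr (f x - s x) := rr_mono (by linarith)
      rw [rr_eq (by positivity) (by nlinarith [hx.1])] at h3
      have h4 : Real.sqrt (x ^ 2 / 16) = x / 4 := by
        rw [show x ^ 2 / 16 = (x / 4) ^ 2 by ring]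
        exact Real.sqrt_sq (by linarith [hx.1])
      linarith
  have := hmon (left_mem_Icc.2 hz.1.1) (right_mem_Icc.2 hz.1.1) hz.1.1
  have h2 : f z - z ^ 2 / 8 ≤ 0 := hz.2
  simp only at this
  linarith

def SN (δ : ℝ) : Set (ℝ × ℝ) := {u | 0 ≤ u.2 ∧ u.2 ≤ δ ∧ u.2 - 1 - δ ≤ u.1 ∧ u.1 ≤ u.2}

lemma SN_compact (δ : ℝ) : IsCompact (SN δ) := by
  apply (isCompact_Icc (a := -1-δ) (b := δ)).prod (isCompact_Icc (a := 0) (b := δ)) |>.of_isClosed_subset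
  · have c3 : Continuous (fun u : ℝ × ℝ => u.2 - 1 - δ) := by fun_prop
    exact (isClosed_le (continuous_const (y := (0:ℝ))) continuous_snd).inter
      ((isClosed_le continuous_snd (continuous_const (y := δ))).inter
      ((isClosed_le c3 continuous_fst).inter (isClosed_le continuous_fst continuous_snd)))
  · rintro u ⟨h1, h2, h3, h4⟩
    exact ⟨⟨by linarith, h4.trans h2⟩, ⟨h1, h2⟩⟩

theorem chartN {s m : ℝ → ℝ} (hs : Continuous s) (hs0 : s 0 = 0) {ε : ℝ} (hε : 0 < ε) (hε1 : ε ≤ 1)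
    (hm : ∀ x ∈ Ioo 0 ε, HasDerivAt s (m x) x ∧ 0 < m x) (hmc : ContinuousOn m (Ioo 0 ε))
    (hsb : ∀ x ∈ Icc 0 ε, s x ≤ x ^ 2 / 16) :
    ∃ δ0 > 0, ∀ δ, 0 < δ → δ ≤ δ0 → ∃ pt, HalfParam s 0 (SN δ) {u | u.2 = 0}
      {u | u.1 = u.2 ∨ u.2 = 0} {u | u.1 = u.2 - 1 - δ ∨ u.2 = 0} pt := by
  obtain ⟨F, G, L⟩ := leaves_exist hs hε
  have h0I : (0:ℝ) ∈ Icc 0 ε := left_mem_Icc.2 hε.le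
  have hεI : ε ∈ Icc 0 ε := right_mem_Icc.2 hε.le
  have hmono : StrictMonoOn s (Icc 0 ε) :=
    strictMono_of hs.continuousOn (fun x hx => (hm x hx).1) (fun x hx => (hm x hx).2)
  have hsn : ∀ x ∈ Icc 0 ε, 0 ≤ s x := by
    intro x hx
    have := hmono.monotoneOn h0I hx hx.1
    rwa [hs0] at this
  have hsε : 0 < s ε := by
    have := hmono h0I hεI hε
    rwa [hs0] at this
  have Gst : ∀ a a', a < a' → ∀ x ∈ Icc 0 ε, G a x < G a' x := by
    intro a a' h
    apply desc_strict hs (L.Gd a) (L.Gd a') (by rwa [L.Gc, L.Gc])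
    intro z hz _
    exact Or.inr (Or.inr ⟨0, m, hz.1, fun x hx => hm x ⟨hx.1, hx.2.trans_le hz.2⟩⟩)
  have hdec : ∀ z ∈ Ioo 0 ε, DecAt (rev s) (-z) := by
    intro z hz
    apply decAt_of (c := -ε) (d := 0) (m := fun x => -(m (-x)))
    · intro x hx
      have := hm (-x) ⟨by linarith [hx.2], by linarith [hx.1]⟩
      exact ⟨rev_deriv this.1, by linarith [this.2]⟩
    · apply ContinuousOn.neg
      apply hmc.comp continuousOn_neg
      intro x hx
      exact ⟨by linarith [hx.2], by linarith [hx.1]⟩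
    · exact ⟨by linarith [hz.2], by linarith [hz.1]⟩
  have Fst : ∀ a a', a < a' → ∀ x ∈ Ioc 0 ε, F a x < F a' x := by
    intro a a' h x hx
    exact asc_strict (c := x) hs ((L.Fa a).sub hx.1.le le_rfl) ((L.Fa a').sub hx.1.le le_rfl) (by rwa [L.Fd, L.Fd])
      (fun z hz _ => Or.inr (Or.inl (hdec z ⟨hx.1.trans_le hz.1, hz.2⟩))) x (left_mem_Icc.2 hx.2)
  have Fst0 : ∀ a a', a < a' → F a 0 ≠ 0 → F a 0 < F a' 0 := by
    intro a a' h h0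
    apply asc_strict hs (L.Fa a) (L.Fa a') (by rwa [L.Fd, L.Fd]) _ 0 h0I
    intro z hz _
    rcases hz.1.eq_or_lt with h1 | h1
    · left; rw [← h1, hs0]; exact h0
    · exact Or.inr (Or.inl (hdec z ⟨h1, hz.2⟩))
  have F0 : ∀ x ∈ Icc 0 ε, F 0 x = 0 := asc_const (L.Fa 0) hsn (L.Fd 0)
  have G0 : ∀ x ∈ Icc 0 ε, G 0 x = 0 := desc_const (L.Gd 0) hsn (L.Gc 0)
  have Vn : ∀ a, 0 ≤ a → 0 ≤ F a 0 := fun a ha => by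
    have := L.F_mono h0I ha
    rwa [F0 0 h0I] at this
  have hbar : F (s ε) 0 = 0 := le_antisymm
    (barrier hε hε1 hsn hsb (L.Fa _) (by rw [L.Fd]; exact hsb ε hεI)) (Vn _ hsε.le)
  obtain ⟨asep, hasep, hasepm⟩ : ∃ asep, F asep 0 = 0 ∧ ∀ a, F a 0 = 0 → a ≤ asep := by
    have hcl : IsCompact (Icc (s ε) ε ∩ (fun a => F a 0) ⁻¹' {0}) :=
      isCompact_Icc.of_isClosed_subset ((L.F_contx h0I).continuousOn.preimage_isClosed_of_isClosed isClosed_Icc isClosed_singleton)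
        inter_subset_left
    have hsε1 : s ε ≤ ε := by have := hsb ε hεI; nlinarith
    obtain ⟨z, hz, hzl⟩ := hcl.exists_isGreatest ⟨s ε, ⟨le_rfl, hsε1⟩, hbar⟩
    refine ⟨z, hz.2, fun a ha => ?_⟩
    rcases le_total a (s ε) with h | h
    · exact h.trans hz.1.1
    · refine hzl ⟨⟨h, ?_⟩, ha⟩
      have := L.F_ge h0I a
      linarith
  have hasε : s ε ≤ asep := hasepm _ hbar
  refine ⟨min (1 / 2) (s ε / 2), lt_min (by norm_num) (by linarith), fun δ hδ hδ0 => ?_⟩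
  have hδ1 : δ ≤ 1 / 2 := hδ0.trans (min_le_left _ _)
  have hδ2 : δ < s ε := by have := hδ0.trans (min_le_right _ _); linarith
  set cδ := G δ ε with hcδ
  have hcδ1 : cδ < asep := (L.G_le hεI δ).trans_lt (hδ2.trans_le hasε)
  have hcδ0 : 0 < cδ := by
    have := Gst 0 δ hδ ε hεI
    rwa [G0 ε hεI] at this
  choose ci hci using L.G_surj hεI
  have Gin : ∀ a a', ∀ x ∈ Icc 0 ε, G a x = G a' x → a = a' := by
    intro a a' x hx h
    rcases lt_trichotomy a a' with h1 | h1 | h1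
    · exact absurd h (Gst _ _ h1 x hx).ne
    · exact h1
    · exact absurd h (Gst _ _ h1 x hx).ne'
  have hcii : ∀ b, ci (G b ε) = b := fun b => Gin _ _ ε hεI (hci _)
  have hcist : StrictMono ci := by
    intro a a' h
    by_contra hcon
    push Not at hcon
    have := L.G_mono hεI hcon
    rw [hci, hci] at this
    linarith
  have hcic : ContinuousOn ci (Icc 0 cδ) := by
    have : ContinuousOn ci ((fun b => G b ε) '' Icc 0 δ) :=
      cont_factor isCompact_Icc (f := id) (L.G_contx hεI).continuousOn continuousOn_id
        (fun u _ => hcii u)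
    apply this.mono
    intro a ha
    refine ⟨ci a, ⟨?_, ?_⟩, hci a⟩
    · have := hcist.monotone ha.1
      rwa [← G0 ε hεI, hcii] at this
    · have := hcist.monotone ha.2
      rwa [hcδ, hcii] at this
  obtain ⟨aδ, haδ⟩ := L.F_surj h0I δ
  have hVmono : Monotone (fun a => F a 0) := fun a a' h => L.F_mono h0I h
  have haδ1 : asep < aδ := by
    by_contra h
    push Not at h
    have := hVmono h
    simp only [haδ, hasep] at this
    linarith
  set θ : ℝ → ℝ := fun a => F a 0 - (asep - max cδ (min a asep)) / (asep - cδ) - (δ - ci (min a cδ)) with hθ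
  have hθc : ContinuousOn θ (Icc 0 aδ) := by
    apply ContinuousOn.sub
    · exact ((L.F_contx h0I).sub (by fun_prop)).continuousOn
    · apply ContinuousOn.sub continuousOn_const
      apply hcic.comp (by fun_prop)
      intro a ha
      exact ⟨le_min ha.1 hcδ0.le, min_le_right _ _⟩
  have hden : 0 < asep - cδ := by linarith
  have hθm : StrictMono θ := by
    intro a a' h
    have t1 := hVmono h.le
    simp only at t1
    have t2 : (asep - max cδ (min a' asep)) / (asep - cδ) ≤ (asep - max cδ (min a asep)) / (asep - cδ) := by
      gcongr
    have t3 : ci (min a cδ) ≤ ci (min a' cδ) := hcist.monotone (min_le_min h.le le_rfl)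
    simp only [hθ]
    rcases lt_or_ge a cδ with c1 | c1
    · have : ci (min a cδ) < ci (min a' cδ) := hcist (by
        rw [min_eq_left c1.le]
        exact lt_min h c1)
      linarith
    · rcases lt_or_ge a asep with c2 | c2
      · have : (asep - max cδ (min a' asep)) / (asep - cδ) < (asep - max cδ (min a asep)) / (asep - cδ) := by
          apply div_lt_div_of_pos_right _ hden
          rw [min_eq_left c2.le, max_eq_right c1]
          have : a < max cδ (min a' asep) := lt_max_of_lt_right (lt_min h c2)
          linarith
        linarith
      · have : F a 0 < F a' 0 := by
          by_cases h0 : F a 0 = 0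
          · rw [h0]
            apply lt_of_le_of_ne (by linarith : (0:ℝ) ≤ F a' 0)
            intro h1
            have := hasepm a' h1.symm
            linarith
          · exact Fst0 a a' h h0
        linarith
  have hθV : ∀ a, 0 ≤ a → F a 0 = max (θ a) 0 := by
    intro a ha
    rcases le_total a asep with h | h
    · have h1 : F a 0 = 0 := le_antisymm (by have := hVmono h; simpa [hasep] using this) (Vn a ha)
      have h2 : 0 ≤ (asep - max cδ (min a asep)) / (asep - cδ) := by
        apply div_nonneg _ hden.le
        have : max cδ (min a asep) ≤ asep := max_le hcδ1.le (min_le_right _ _)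
        linarith
      have h3 : ci (min a cδ) ≤ δ := by
        have := hcist.monotone (min_le_right a cδ)
        rwa [hcδ, hcii, ← hcδ] at this
      rw [max_eq_right _, h1]
      simp only [hθ]
      linarith
    · have : θ a = F a 0 := by
        simp only [hθ]
        rw [min_eq_right h, max_eq_right hcδ1.le, min_eq_right (hcδ1.le.trans h), hcδ, hcii]
        simp
      rw [this, max_eq_left (Vn a ha)]
  have hθG : ∀ b, 0 ≤ b → b ≤ δ → θ (G b ε) = b - 1 - δ := by
    intro b hb hb1
    have h1 : G b ε ≤ cδ := L.G_mono hεI hb1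
    have h2 : 0 ≤ G b ε := by
      have := L.G_mono hεI hb
      rwa [G0 ε hεI] at this
    have h3 : F (G b ε) 0 = 0 :=
      le_antisymm (by have := hVmono (h1.trans hcδ1.le); simpa [hasep] using this) (Vn _ h2)
    simp only [hθ]
    rw [h3, min_eq_left (h1.trans hcδ1.le), max_eq_left h1, min_eq_left h1, hcii, div_self hden.ne']
    ring
  have hθ0 : θ 0 = -1 - δ := by
    have := hθG 0 le_rfl hδ.le
    rw [G0 ε hεI] at this
    linarith
  have hθδ : θ aδ = δ := by
    have := hθV aδ (by linarith)
    rw [haδ] at this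
    rcases max_cases (θ aδ) 0 with h | h
    · rw [this, h.1]
    · linarith [h.1, h.2]
  have hsur : ∀ α ∈ Icc (-1 - δ) δ, ∃ a ∈ Icc 0 aδ, θ a = α := by
    intro α hα
    obtain ⟨a, ha, h⟩ := intermediate_value_Icc (show (0:ℝ) ≤ aδ by linarith) hθc
      (show α ∈ Icc _ _ by rw [hθ0, hθδ]; exact hα)
    exact ⟨a, ha, h⟩
  choose! κ hκ1 hκ2 using hsur
  have hrange : ∀ a ∈ Icc 0 aδ, θ a ∈ Icc (-1 - δ) δ := fun a ha =>
    ⟨by rw [← hθ0]; exact hθm.monotone ha.1, by rw [← hθδ]; exact hθm.monotone ha.2⟩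
  have hκi : ∀ a ∈ Icc 0 aδ, κ (θ a) = a := fun a ha => hθm.injective (hκ2 _ (hrange a ha))
  have hSr : ∀ u ∈ SN δ, u.1 ∈ Icc (-1 - δ) δ := fun u hu =>
    ⟨by linarith [hu.1, hu.2.2.1], hu.2.2.2.trans hu.2.1⟩
  have hSV : ∀ u ∈ SN δ, F (κ u.1) 0 = max u.1 0 := fun u hu => by
    rw [hθV _ (hκ1 _ (hSr u hu)).1, hκ2 _ (hSr u hu)]
  apply mkHalf L (κ := κ) hmono.injOn (SN_compact δ)
  · have : ContinuousOn κ (θ '' Icc 0 aδ) :=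
      cont_factor isCompact_Icc (f := id) hθc continuousOn_id hκi
    apply this.mono
    rintro α ⟨u, hu, rfl⟩
    exact ⟨κ u.1, hκ1 _ (hSr u hu), hκ2 _ (hSr u hu)⟩
  · intro x hx
    have h1 := hsb x hx
    have h2 := hsn x hx
    have h3 : x ≤ 1 := hx.2.trans hε1
    rw [abs_of_nonneg h2]
    nlinarith [hx.1]
  · exact fun u hu => hu.2.1.trans hδ1
  · intro u hu
    have ha := hκ1 _ (hSr u hu)
    have haG : G u.2 ε ≤ κ u.1 := by
      by_contra hlt
      push Not at hlt
      have := hθm hlt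
      rw [hκ2 _ (hSr u hu), hθG _ hu.1 hu.2.1] at this
      linarith [hu.2.2.1]
    have hGε : G u.2 ε < s ε := (L.G_le hεI u.2).trans_lt (hu.2.1.trans_lt hδ2)
    obtain ⟨xb, hxb, hxe⟩ := intermediate_value_Icc hε.le (f := fun x => s x - G u.2 x)
      (hs.continuousOn.sub (L.Gd u.2).1) (show (0:ℝ) ∈ Icc _ _ from
        ⟨by simp only [hs0, L.Gc]; linarith [hu.1], sub_nonneg.2 hGε.le⟩)
    have hxe : s xb = G u.2 xb := by simp only at hxe; linarith
    have hxbε : xb < ε := by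
      rcases hxb.2.eq_or_lt with h | h
      · rw [h] at hxe; linarith
      · exact h
    have hst : ∀ t ∈ Icc xb ε, s xb ≤ s t := fun t ht =>
      hmono.monotoneOn hxb (⟨hxb.1.trans ht.1, ht.2⟩ : t ∈ Icc 0 ε) ht.1
    have hGc := desc_const ((L.Gd u.2).sub hxb.1 le_rfl) hst hxe.symm ε ⟨hxbε.le, le_rfl⟩
    have hFx : s xb ≤ F (κ u.1) xb :=
      asc_mono (y₁ := fun _ => s xb) (const_asc hst) ((L.Fa (κ u.1)).sub hxb.1 le_rfl)
        (by show s xb ≤ F (κ u.1) ε; rw [L.Fd, ← hGc]; exact haG) ⟨le_rfl, hxbε.le⟩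
    obtain ⟨x, hx, hxx⟩ := intermediate_value_Icc hxb.1 (f := fun x => F (κ u.1) x - G u.2 x)
      (((L.Fa _).1.sub (L.Gd u.2).1).mono (Icc_subset_Icc le_rfl hxb.2)) (show (0:ℝ) ∈ Icc _ _ from
        ⟨by
          simp only [hSV u hu, L.Gc]
          have := max_le hu.2.2.2 hu.1
          linarith, sub_nonneg.2 (by rw [← hxe]; exact hFx)⟩)
    have hxI : x ∈ Icc 0 ε := ⟨hx.1, hx.2.trans hxb.2⟩
    refine ⟨x, ⟨hx.1, hx.2.trans_lt hxbε⟩, by simp only at hxx; linarith, ?_⟩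
    have q1 := hmono.monotoneOn hxI hxb hx.2
    have q2 := (L.Gd u.2).anti hxI hxb hx.2
    linarith
  · intro u hu v hv x hx h
    have : κ u.1 = κ v.1 := by
      have hx' : x ∈ Ioc 0 ε := ⟨hx.1, hx.2.le⟩
      rcases lt_trichotomy (κ u.1) (κ v.1) with h1 | h1 | h1
      · exact absurd h (Fst _ _ h1 x hx').ne
      · exact h1
      · exact absurd h (Fst _ _ h1 x hx').ne'
    rw [← hκ2 _ (hSr u hu), ← hκ2 _ (hSr v hv), this]
  · intro u _ v _ x hx h
    exact Gin _ _ x (Ico_subset_Icc_self hx) h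
  · obtain ⟨n1, n2, n3⟩ := L.near hε (F aδ) (L.Fa _).1 le_rfl
    obtain ⟨m1, -, -⟩ := L.near hε (G δ) (L.Gd _).1 le_rfl
    rw [haδ] at n1
    rw [L.Gc] at m1
    filter_upwards [n2.eventually_lt n1 hδ, n2.eventually_lt m1 hδ, n3, self_mem_nhdsWithin] with p h1 h2 h3 h4
    refine ⟨h3, ?_⟩
    have hp := Ico_subset_Icc_self h3
    have hy0 : 0 ≤ p.2 := (hsn _ hp).trans h4.2
    obtain ⟨a, ha⟩ := L.F_surj hp p.2
    obtain ⟨b, hb⟩ := L.G_surj hp p.2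
    have ha0 : 0 ≤ a := by have := L.F_le hp a; linarith
    have haI : a ∈ Icc 0 aδ := by
      refine ⟨ha0, ?_⟩
      by_contra hlt
      push Not at hlt
      have := L.F_mono hp hlt.le
      linarith
    have hb0 : 0 ≤ b := by have := L.G_le hp b; linarith
    have hbδ : b ≤ δ := by
      by_contra hlt
      push Not at hlt
      have := L.G_mono hp hlt.le
      linarith
    refine ⟨(θ a, b), ⟨hb0, hbδ, ?_, ?_⟩, ?_, hb⟩
    · simp only
      rw [← hθG b hb0 hbδ]
      apply hθm.monotone
      have q1 := (L.Gd b).anti hp hεI hp.2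
      have q2 := L.F_le hp a
      linarith
    · simp only
      have q1 := le_max_left (θ a) 0
      rw [← hθV a ha0] at q1
      have q2 := (L.Fa a).mono h0I hp hp.1
      have q3 := L.G_le hp b
      linarith
    · simp only [hκi a haI, ha]
  · intro u hu
    rw [hSV u hu, hs0]
    show _ ↔ (u.1 = u.2 ∨ u.2 = 0)
    have h1 := hu.1
    have h2 := hu.2.2.2
    constructor
    · rintro ⟨h, -⟩
      rcases max_cases u.1 0 with h3 | h3
      · left; linarith [h3.1]
      · right; linarith [h3.1]
    · rintro (h | h)
      · exact ⟨by rw [h, max_eq_left h1], h1⟩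
      · exact ⟨by rw [max_eq_right (h ▸ h2), h], h1⟩
  · intro u hu x hx h1 h2
    have hxI := Ico_subset_Icc_self hx
    show _ ↔ (u.1 = u.2 - 1 - δ ∨ u.2 = 0)
    constructor
    · intro he
      rcases hx.1.eq_or_lt with h0 | h0
      · right
        rw [← h0, L.Gc, hs0] at he
        exact he
      · left
        have hst : ∀ t ∈ Icc x ε, s x ≤ s t := fun t ht =>
          hmono.monotoneOn hxI (⟨hxI.1.trans ht.1, ht.2⟩ : t ∈ Icc 0 ε) ht.1
        have g1 := desc_const ((L.Gd u.2).sub hx.1 le_rfl) hst he ε ⟨hx.2.le, le_rfl⟩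
        have f1 := asc_const ((L.Fa (s x)).sub hx.1 le_rfl) hst (L.Fd _) x ⟨le_rfl, hx.2.le⟩
        have : κ u.1 = s x := by
          have hx' : x ∈ Ioc 0 ε := ⟨h0, hx.2.le⟩
          have h : F (κ u.1) x = F (s x) x := by rw [h1, he, f1]
          rcases lt_trichotomy (κ u.1) (s x) with h1 | h1 | h1
          · exact absurd h (Fst _ _ h1 x hx').ne
          · exact h1
          · exact absurd h (Fst _ _ h1 x hx').ne'
        rw [← hκ2 _ (hSr u hu), this, ← g1, hθG _ hu.1 hu.2.1]
    · rintro (h | h)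
      · have ha : κ u.1 = G u.2 ε := by
          apply hθm.injective
          rw [hκ2 _ (hSr u hu), hθG _ hu.1 hu.2.1, h]
        apply le_antisymm _ h2
        have q1 := L.F_le hxI (κ u.1)
        exact desc_flat hs hx.2 ((L.Gd u.2).sub hx.1 le_rfl) (by linarith) x ⟨le_rfl, hx.2.le⟩
      · rw [h] at h2 ⊢
        rw [G0 x hxI] at h2 ⊢
        exact le_antisymm (hsn x hxI) h2
  · rintro u _ v _ h1 h2 h
    by_cases h0 : u.2 = 0
    · right
      exact ⟨h0, h.symm.trans h0⟩
    · left
      have e1 : u.1 = u.2 := h1.resolve_right h0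
      have e2 : v.1 = v.2 := h2.resolve_right (by rw [← h]; exact h0)
      exact Prod.ext (by rw [e1, e2, h]) h
  · intro u _ h
    exact ⟨h, Or.inr h⟩
  · have h0S : (0 : ℝ × ℝ) ∈ SN δ := ⟨le_rfl, hδ.le, by simp; linarith, le_rfl⟩
    refine ⟨h0S, ⟨le_rfl, hε⟩, ?_, L.Gc 0, hs0⟩
    have := hSV 0 h0S
    simpa using this

end BD

namespace BD
open Topology

lemma inv_arc_mono {ξ : ℝ → ℝ} {a b : ℝ} (hab : a < b) (hc : ContinuousOn ξ (Ioo a b))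
    (hm : StrictMonoOn ξ (Ioo a b)) {M : ℝ} (hM : ∀ x ∈ Ioo a b, |ξ x| ≤ M) :
    ∃ (a' b' : ℝ) (g : ℝ → ℝ), ContinuousOn g (Ioo a' b') ∧ MapsTo g (Ioo a' b') (Ioo a b) ∧
      (∀ z ∈ Ioo a' b', ξ (g z) = z) ∧ ∀ x ∈ Ioo a b, ξ x ∈ Ioo a' b' ∧ g (ξ x) = x := by
  set T := ξ '' Ioo a b with hT
  have hne : T.Nonempty := (nonempty_Ioo.2 hab).image _
  have hba : BddAbove T := ⟨M, by rintro _ ⟨x, hx, rfl⟩; exact (abs_le.1 (hM x hx)).2⟩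
  have hbb : BddBelow T := ⟨-M, by rintro _ ⟨x, hx, rfl⟩; exact (abs_le.1 (hM x hx)).1⟩
  have hoc : T.OrdConnected := (isPreconnected_Ioo.image ξ hc).ordConnected
  have hTe : ∀ x ∈ Ioo a b, ξ x ∈ Ioo (sInf T) (sSup T) := by
    intro x hx
    obtain ⟨w, hw1, hw2⟩ := exists_between hx.1
    obtain ⟨v, hv1, hv2⟩ := exists_between hx.2
    have hw : w ∈ Ioo a b := ⟨hw1, hw2.trans hx.2⟩
    have hv : v ∈ Ioo a b := ⟨hx.1.trans hv1, hv2⟩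
    exact ⟨(csInf_le hbb ⟨w, hw, rfl⟩).trans_lt (hm hw hx hw2),
      (hm hx hv hv1).trans_le (le_csSup hba ⟨v, hv, rfl⟩)⟩
  have hsub : ∀ z ∈ Ioo (sInf T) (sSup T), z ∈ T := by
    intro z hz
    obtain ⟨p, hp, hpz⟩ := exists_lt_of_csInf_lt hne hz.1
    obtain ⟨q, hq, hzq⟩ := exists_lt_of_lt_csSup hne hz.2
    exact hoc.out hp hq ⟨hpz.le, hzq.le⟩
  refine ⟨sInf T, sSup T, Function.invFunOn ξ (Ioo a b), ?_, ?_, ?_, ?_⟩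
  rotate_left
  · intro z hz; exact Function.invFunOn_mem (hsub z hz)
  · intro z hz; exact Function.invFunOn_eq (hsub z hz)
  · intro x hx
    exact ⟨hTe x hx, hm.injOn (Function.invFunOn_mem ⟨x, hx, rfl⟩) hx (Function.invFunOn_eq ⟨x, hx, rfl⟩)⟩
  · have hgm : StrictMonoOn (Function.invFunOn ξ (Ioo a b)) (Ioo (sInf T) (sSup T)) := by
      intro z hz w hw hzw
      have e1 := Function.invFunOn_eq (hsub z hz)
      have e2 := Function.invFunOn_eq (hsub w hw)
      have m1 := Function.invFunOn_mem (hsub z hz)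
      have m2 := Function.invFunOn_mem (hsub w hw)
      by_contra hcon
      have := hm.monotoneOn m2 m1 (le_of_not_gt hcon)
      rw [e1, e2] at this
      linarith
    intro z hz
    apply ContinuousAt.continuousWithinAt
    apply hgm.continuousAt_of_image_mem_nhds (Ioo_mem_nhds hz.1 hz.2)
    have m1 := Function.invFunOn_mem (hsub z hz)
    apply mem_of_superset (Ioo_mem_nhds m1.1 m1.2)
    intro x hx
    exact ⟨ξ x, hTe x hx, hm.injOn (Function.invFunOn_mem ⟨x, hx, rfl⟩) hx (Function.invFunOn_eq ⟨x, hx, rfl⟩)⟩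

lemma inv_arc {ξ : ℝ → ℝ} {a b : ℝ} (hc : ContinuousOn ξ (Ioo a b))
    (hi : InjOn ξ (Ioo a b)) {M : ℝ} (hM : ∀ x ∈ Ioo a b, |ξ x| ≤ M) :
    ∃ (a' b' : ℝ) (g : ℝ → ℝ), ContinuousOn g (Ioo a' b') ∧ MapsTo g (Ioo a' b') (Ioo a b) ∧
      (∀ z ∈ Ioo a' b', ξ (g z) = z) ∧ ∀ x ∈ Ioo a b, ξ x ∈ Ioo a' b' ∧ g (ξ x) = x := by
  rcases le_or_gt b a with hab | hab
  · refine ⟨0, 0, id, continuousOn_id, ?_, ?_, ?_⟩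
    · intro z hz; exact absurd (hz.1.trans hz.2) (lt_irrefl _)
    · intro z hz; exact absurd (hz.1.trans hz.2) (lt_irrefl _)
    · intro z hz; exact absurd (hz.1.trans hz.2) (not_lt.2 hab)
  rcases hc.strictMonoOn_of_injOn_Ioo hab hi with h | h
  · exact inv_arc_mono hab hc h hM
  · obtain ⟨a', b', g, h1, h2, h3, h4⟩ := inv_arc_mono (ξ := fun x => - ξ x) (M := M) hab hc.neg
      (fun x hx y hy hxy => neg_lt_neg (h hx hy hxy)) (fun x hx => by rw [abs_neg]; exact hM x hx)
    have hneg : ∀ z ∈ Ioo (-b') (-a'), -z ∈ Ioo a' b' := fun z hz => ⟨by linarith [hz.2], by linarith [hz.1]⟩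
    refine ⟨-b', -a', fun z => g (-z), ?_, ?_, ?_, ?_⟩
    · exact h1.comp continuous_neg.continuousOn hneg
    · intro z hz; exact h2 (hneg z hz)
    · intro z hz; have := h3 _ (hneg z hz); linarith
    · intro x hx
      obtain ⟨h5, h6⟩ := h4 x hx
      exact ⟨⟨by linarith [h5.2], by linarith [h5.1]⟩, h6⟩

lemma deriv_ext {y z : ℝ → ℝ} {a b p : ℝ} (hp : p ∈ Ioo a b) (hy : ContinuousOn y (Ioo a b))
    (hz : ContinuousOn z (Ioo a b)) (hd : ∀ x ∈ Ioo a b, x ≠ p → HasDerivAt y (z x) x) :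
    HasDerivAt y (z p) p := by
  have hyp : ContinuousAt y p := hy.continuousAt (Ioo_mem_nhds hp.1 hp.2)
  have hzp : ContinuousAt z p := hz.continuousAt (Ioo_mem_nhds hp.1 hp.2)
  have A : HasDerivWithinAt y (z p) (Ici p) p := by
    apply hasDerivWithinAt_Ici_of_tendsto_deriv (s := Ioo p b)
    · intro x hx
      exact (hd x ⟨hp.1.trans hx.1, hx.2⟩ hx.1.ne').differentiableAt.differentiableWithinAt
    · exact hyp.continuousWithinAt
    · exact Ioo_mem_nhdsGT hp.2
    · apply (hzp.tendsto.mono_left nhdsWithin_le_nhds).congr'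
      filter_upwards [Ioo_mem_nhdsGT hp.2] with x hx
      exact (hd x ⟨hp.1.trans hx.1, hx.2⟩ hx.1.ne').deriv.symm
  have B : HasDerivWithinAt y (z p) (Iic p) p := by
    apply hasDerivWithinAt_Iic_of_tendsto_deriv (s := Ioo a p)
    · intro x hx
      exact (hd x ⟨hx.1, hx.2.trans hp.2⟩ hx.2.ne).differentiableAt.differentiableWithinAt
    · exact hyp.continuousWithinAt
    · exact Ioo_mem_nhdsLT hp.1
    · apply (hzp.tendsto.mono_left nhdsWithin_le_nhds).congr'
      filter_upwards [Ioo_mem_nhdsLT hp.1] with x hx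
      exact (hd x ⟨hx.1, hx.2.trans hp.2⟩ hx.2.ne).deriv.symm
  have := B.union A
  rwa [Iic_union_Ici, hasDerivWithinAt_univ] at this

/-- solutions as graphs -/
def IsSolz (s : ℝ → ℝ) (a b : ℝ) (y z : ℝ → ℝ) : Prop :=
  ContinuousOn z (Ioo a b) ∧ ∀ x ∈ Ioo a b, HasDerivAt y (z x) x ∧ z x ^ 2 = y x - s x

lemma IsSolz.cont {s : ℝ → ℝ} {a b : ℝ} {y z : ℝ → ℝ} (h : IsSolz s a b y z) :
    ContinuousOn y (Ioo a b) := fun x hx => (h.2 x hx).1.continuousAt.continuousWithinAt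

def gr (a b : ℝ) (y : ℝ → ℝ) : Set (ℝ × ℝ) := (fun x => (x, y x)) '' Ioo a b

lemma assemble {s : ℝ → ℝ} {a b e : ℝ} {ξ η ζ : ℝ → ℝ}
    (h1 : ContinuousOn ξ (Ioo a b)) (h2 : ContinuousOn η (Ioo a b)) (h3 : ContinuousOn ζ (Ioo a b))
    (hi : InjOn ξ (Ioo a b)) {M : ℝ} (hM : ∀ x ∈ Ioo a b, |ξ x| ≤ M)
    (hsq : ∀ x ∈ Ioo a b, ζ x ^ 2 = η x - s (ξ x))
    (hd : ∀ x ∈ Ioo a b, x ≠ e → ∃ f, HasDerivAt f (ζ x) (ξ x) ∧ ∀ᶠ w in 𝓝 x, η w = f (ξ w)) :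
    ∃ a' b' y' z', IsSolz s a' b' y' z' ∧ (fun x => (ξ x, η x)) '' Ioo a b = gr a' b' y' := by
  obtain ⟨a', b', g, g1, g2, g3, g4⟩ := inv_arc h1 hi hM
  have c1 := h2.comp g1 g2
  have c2 := h3.comp g1 g2
  have key : ∀ z ∈ Ioo a' b', g z ≠ e → HasDerivAt (η ∘ g) ((ζ ∘ g) z) z := by
    intro z hz hne
    obtain ⟨f, f1, f2⟩ := hd (g z) (g2 hz) hne
    rw [g3 z hz] at f1
    apply f1.congr_of_eventuallyEq
    have gc : ContinuousAt g z := g1.continuousAt (Ioo_mem_nhds hz.1 hz.2)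
    filter_upwards [gc.eventually f2, Ioo_mem_nhds hz.1 hz.2] with w hw hw2
    show η (g w) = f w
    rw [hw, g3 w hw2]
  refine ⟨a', b', η ∘ g, ζ ∘ g, ⟨c2, fun z hz => ⟨?_, ?_⟩⟩, ?_⟩
  · by_cases hne : g z = e
    · apply deriv_ext hz c1 c2
      intro x hx hxz
      apply key x hx
      intro h
      apply hxz
      rw [← g3 x hx, ← g3 z hz, h, hne]
    · exact key z hz hne
  · have := hsq _ (g2 hz)
    rw [g3 z hz] at this
    exact this
  · ext P
    constructor
    · rintro ⟨x, hx, rfl⟩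
      refine ⟨ξ x, (g4 x hx).1, ?_⟩
      simp [(g4 x hx).2]
    · rintro ⟨z, hz, rfl⟩
      exact ⟨g z, g2 hz, by simp [g3 z hz]⟩

lemma sol_ne {s y z : ℝ → ℝ} {a b x m : ℝ} (h : IsSolz s a b y z) (hx : x ∈ Ioo a b)
    (hs : HasDerivAt s m x) (hm : m ≠ 0) : z x ≠ 0 := by
  intro h0
  have hq : HasDerivAt (fun t => y t - s t) (z x - m) x := (h.2 x hx).1.sub hs
  have hmin : IsLocalMin (fun t => y t - s t) x := by
    filter_upwards [Ioo_mem_nhds hx.1 hx.2] with t ht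
    rw [← (h.2 x hx).2, ← (h.2 t ht).2, h0]
    nlinarith [sq_nonneg (z t)]
  have := hmin.hasDerivAt_eq_zero hq
  rw [h0] at this
  exact hm (by linarith)

def sg (r : ℝ) : ℝ := if 0 ≤ r then 1 else -1

lemma sg_sq (r : ℝ) : sg r ^ 2 = 1 := by unfold sg; split_ifs <;> norm_num
lemma sg_neg {r : ℝ} (h : r ≠ 0) : sg (-r) = - sg r := by
  unfold sg
  rcases lt_or_gt_of_ne h with h | h
  · rw [if_pos (by linarith), if_neg (by linarith)]; norm_num
  · rw [if_neg (by linarith), if_pos (by linarith)]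

lemma sg_cont {z Q : ℝ → ℝ} {a b : ℝ} (hz : ContinuousOn z (Ioo a b)) (hQ : ContinuousOn Q (Ioo a b))
    (h0 : ∀ x ∈ Ioo a b, z x = 0 → Q x = 0) :
    ContinuousOn (fun x => sg (z x) * Q x) (Ioo a b) := by
  intro x hx
  have nb := Ioo_mem_nhds hx.1 hx.2
  have cz := hz.continuousAt nb
  have cQ := hQ.continuousAt nb
  apply ContinuousAt.continuousWithinAt
  rcases lt_trichotomy (z x) 0 with h | h | h
  · apply (cQ.neg).congr
    filter_upwards [cz.eventually (gt_mem_nhds h)] with t ht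
    simp [sg, not_le.2 ht]
  · have q0 := h0 x hx h
    have : Tendsto (fun t => |Q t|) (𝓝 x) (𝓝 0) := by
      have := cQ.abs.tendsto; rwa [q0, abs_zero] at this
    show Tendsto _ _ (𝓝 (sg (z x) * Q x))
    rw [q0, mul_zero]
    apply squeeze_zero_norm _ this
    intro t
    rw [Real.norm_eq_abs, abs_mul]
    have : |sg (z t)| = 1 := by
      have := sg_sq (z t)
      rw [← sq_abs] at this
      nlinarith [abs_nonneg (sg (z t))]
    rw [this, one_mul]
  · apply cQ.congr
    filter_upwards [cz.eventually (lt_mem_nhds h)] with t ht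
    simp [sg, ht.le]

lemma sign_const {z : ℝ → ℝ} {a b : ℝ} (hz : ContinuousOn z (Ioo a b)) (h0 : ∀ x ∈ Ioo a b, z x ≠ 0) :
    (∀ x ∈ Ioo a b, 0 < z x) ∨ (∀ x ∈ Ioo a b, z x < 0) := by
  by_contra hcon
  push Not at hcon
  obtain ⟨⟨x, hx, hx0⟩, y, hy, hy0⟩ := hcon
  have hoc := (isPreconnected_Ioo.image z hz).ordConnected
  obtain ⟨w, hw, hw0⟩ := hoc.out (mem_image_of_mem z hx) (mem_image_of_mem z hy) ⟨hx0, hy0⟩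
  exact h0 w hw hw0

/-- transfer between two charts -/
def tr (S : Set (ℝ × ℝ)) (pt pt' : ℝ × ℝ → ℝ × ℝ) (p : ℝ × ℝ) : ℝ × ℝ := pt' (Function.invFunOn pt S p)

section
variable {s s' : ℝ → ℝ} {c c' : ℝ} {S Z X0 D : Set (ℝ × ℝ)} {pt pt' : ℝ × ℝ → ℝ × ℝ}

lemma tr_pt (hp : HalfParam s c S Z X0 D pt) (hp' : HalfParam s' c' S Z X0 D pt') {u : ℝ × ℝ} (hu : u ∈ S) :
    tr S pt pt' (pt u) = pt' u := by
  unfold tr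
  have m := Function.invFunOn_mem (f := pt) (s := S) (b := pt u) ⟨u, hu, rfl⟩
  have e := Function.invFunOn_eq (f := pt) (s := S) (b := pt u) ⟨u, hu, rfl⟩
  exact (hp'.inj _ m u hu).2 ((hp.inj _ m u hu).1 e)

lemma tr_cont (hp : HalfParam s c S Z X0 D pt) (hp' : HalfParam s' c' S Z X0 D pt') :
    ContinuousOn (tr S pt pt') (pt '' S) :=
  cont_factor hp.comp hp.cont hp'.cont (fun _ hu => tr_pt hp hp' hu)

lemma tr_maps (hp : HalfParam s c S Z X0 D pt) (hp' : HalfParam s' c' S Z X0 D pt') :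
    MapsTo (tr S pt pt') (pt '' S) (pt' '' S) := by
  rintro _ ⟨u, hu, rfl⟩
  exact ⟨u, hu, (tr_pt hp hp' hu).symm⟩

lemma tr_inv (hp : HalfParam s c S Z X0 D pt) (hp' : HalfParam s' c' S Z X0 D pt') {p : ℝ × ℝ}
    (h : p ∈ pt '' S) : tr S pt' pt (tr S pt pt' p) = p := by
  obtain ⟨u, hu, rfl⟩ := h
  rw [tr_pt hp hp' hu, tr_pt hp' hp hu]

lemma piece (hp : HalfParam s c S Z X0 D pt) (hp' : HalfParam s' c' S Z X0 D pt') {a b : ℝ} {y z : ℝ → ℝ}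
    (hca : c ≤ a) (h : IsSolz s a b y z) (hC : ∀ x ∈ Ioo a b, (x, y x) ∈ pt '' S)
    (hm : ∀ x ∈ Ioo a b, ∃ m, HasDerivAt s m x ∧ m ≠ 0) :
    ∃ f : ℝ → ℝ, ∀ x ∈ Ioo a b, z x ≠ 0 ∧ (tr S pt pt' (x, y x)).2 = f (tr S pt pt' (x, y x)).1 ∧
      HasDerivAt f (sg (z x) * Real.sqrt ((tr S pt pt' (x, y x)).2 - s' (tr S pt pt' (x, y x)).1))
        (tr S pt pt' (x, y x)).1 := by
  rcases (Ioo a b).eq_empty_or_nonempty with he | ⟨x0, hx0⟩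
  · exact ⟨id, fun x hx => by rw [he] at hx; exact hx.elim⟩
  have hz : ∀ x ∈ Ioo a b, z x ≠ 0 := fun x hx => by
    obtain ⟨m, m1, m2⟩ := hm x hx
    exact sol_ne h hx m1 m2
  obtain ⟨u0, hu0, he0⟩ := hC x0 hx0
  have hcx : ∀ u ∈ S, ∀ x ∈ Ioo a b, pt u = (x, y x) → c' < (pt' u).1 := by
    intro u hu x hx hux
    apply lt_of_le_of_ne (hp'.lec u hu)
    intro hcon
    have := (hp.eqc u hu).2 ((hp'.eqc u hu).1 hcon.symm)
    rw [hux] at this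
    have := hx.1
    simp only at *
    linarith
  rcases sign_const h.1 hz with hs | hs
  · have hd : ∀ x ∈ Ioo a b, (x, y x) ∈ pt '' S ∧ HasDerivAt y (Real.sqrt (y x - s x)) x := by
      intro x hx
      refine ⟨hC x hx, ?_⟩
      rw [← (h.2 x hx).2, Real.sqrt_sq (hs x hx).le]
      exact (h.2 x hx).1
    obtain ⟨f, hf⟩ := hp'.leafP u0.1
    refine ⟨f, fun x hx => ⟨hz x hx, ?_⟩⟩
    obtain ⟨u, hu, he⟩ := hC x hx
    have e1 : u.1 = u0.1 := hp.arcP a b y hca hd u hu u0 hu0 (by rw [he]; exact hx) (by rw [he0]; exact hx0)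
      (by rw [he]) (by rw [he0])
    obtain ⟨f1, f2⟩ := hf u hu e1
    rw [← he, tr_pt hp hp' hu]
    refine ⟨f1, ?_⟩
    rw [sg, if_pos (hs x hx).le, one_mul]
    exact f2 (hcx u hu x hx he)
  · have hd : ∀ x ∈ Ioo a b, (x, y x) ∈ pt '' S ∧ HasDerivAt y (-Real.sqrt (y x - s x)) x := by
      intro x hx
      refine ⟨hC x hx, ?_⟩
      rw [← (h.2 x hx).2, Real.sqrt_sq_eq_abs, abs_of_neg (hs x hx), neg_neg]
      exact (h.2 x hx).1
    obtain ⟨f, hf⟩ := hp'.leafM u0.2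
    refine ⟨f, fun x hx => ⟨hz x hx, ?_⟩⟩
    obtain ⟨u, hu, he⟩ := hC x hx
    have e1 : u.2 = u0.2 := hp.arcM a b y hca hd u hu u0 hu0 (by rw [he]; exact hx) (by rw [he0]; exact hx0)
      (by rw [he]) (by rw [he0])
    obtain ⟨f1, f2⟩ := hf u hu e1
    rw [← he, tr_pt hp hp' hu]
    refine ⟨f1, ?_⟩
    rw [sg, if_neg (not_le.2 (hs x hx)), neg_one_mul]
    exact f2 (hcx u hu x hx he)

end
end BD

namespace BD
open Topology

/-- one-directional map on the closed upper region -/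
structure HMap (s s' : ℝ → ℝ) (r r' : ℝ) (C C' : Set (ℝ × ℝ)) (h : ℝ × ℝ → ℝ × ℝ) : Prop where
  cont : ContinuousOn h C
  maps : MapsTo h C C'
  above : ∀ p ∈ C, s p.1 ≤ p.2
  zero : ∀ p ∈ C, p.2 = s p.1 → (h p).2 = s' (h p).1
  orig : h 0 = 0
  nb : C ∈ 𝓝[{p | s p.1 ≤ p.2}] 0
  arc : ∀ a b y z, IsSolz s a b y z → (∀ x ∈ Ioo a b, (x, y x) ∈ C ∧ |x| < r ∧ |(h (x, y x)).1| < r') →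
    ∃ a' b' y' z', IsSolz s' a' b' y' z' ∧ h '' (gr a b y) = gr a' b' y'

lemma arc_build {s s' : ℝ → ℝ} {r' : ℝ} {C C' : Set (ℝ × ℝ)} {h : ℝ × ℝ → ℝ × ℝ} (hs' : Continuous s')
    (hc : ContinuousOn h C) (hinj : InjOn h C) (hmaps : MapsTo h C C')
    (above' : ∀ p ∈ C', s' p.1 ≤ p.2) (hz : ∀ p ∈ C, p.2 = s p.1 → (h p).2 = s' (h p).1)
    {a b : ℝ} {y z : ℝ → ℝ} (hy : IsSolz s a b y z)
    (hC : ∀ x ∈ Ioo a b, (x, y x) ∈ C ∧ |(h (x, y x)).1| < r') (e ε : ℝ)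
    (hR : ∃ f : ℝ → ℝ, ∀ x ∈ Ioo a b, e < x → ε < (h (x, y x)).1 ∧ (h (x, y x)).2 = f (h (x, y x)).1 ∧
      HasDerivAt f (sg (z x) * Real.sqrt ((h (x, y x)).2 - s' (h (x, y x)).1)) (h (x, y x)).1)
    (hL : ∃ f : ℝ → ℝ, ∀ x ∈ Ioo a b, x < e → (h (x, y x)).1 < ε ∧ (h (x, y x)).2 = f (h (x, y x)).1 ∧
      HasDerivAt f (sg (z x) * Real.sqrt ((h (x, y x)).2 - s' (h (x, y x)).1)) (h (x, y x)).1)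
    (hE : e ∈ Ioo a b → (h (e, y e)).1 = ε) :
    ∃ a' b' y' z', IsSolz s' a' b' y' z' ∧ h '' (gr a b y) = gr a' b' y' := by
  obtain ⟨fR, hR⟩ := hR
  obtain ⟨fL, hL⟩ := hL
  have cy : ContinuousOn (fun x => (x, y x)) (Ioo a b) := continuousOn_id.prodMk hy.cont
  have ch : ContinuousOn (fun x => h (x, y x)) (Ioo a b) := hc.comp cy (fun x hx => (hC x hx).1)
  have c1 : ContinuousOn (fun x => (h (x, y x)).1) (Ioo a b) := continuous_fst.comp_continuousOn ch
  have c2 : ContinuousOn (fun x => (h (x, y x)).2) (Ioo a b) := continuous_snd.comp_continuousOn ch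
  have cQ : ContinuousOn (fun x => Real.sqrt ((h (x, y x)).2 - s' (h (x, y x)).1)) (Ioo a b) :=
    Real.continuous_sqrt.comp_continuousOn (c2.sub (hs'.comp_continuousOn c1))
  have c3 := sg_cont hy.1 cQ (by
    intro x hx h0
    have e1 := (hy.2 x hx).2
    rw [h0] at e1
    have := hz _ (hC x hx).1 (by simp only; linarith)
    rw [this, sub_self, Real.sqrt_zero])
  have key : ∀ x ∈ Ioo a b, ∀ w ∈ Ioo a b, h (x, y x) = h (w, y w) → x = w := by
    intro x hx w hw hxw
    exact congrArg Prod.fst (hinj (hC x hx).1 (hC w hw).1 hxw)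
  obtain ⟨a', b', y', z', k1, k2⟩ := assemble (s := s') (e := e) (M := r') c1 c2 c3 (by
    intro x hx w hw hxw
    simp only at hxw
    rcases lt_trichotomy x e with q | q | q <;> rcases lt_trichotomy w e with q' | q' | q'
    · exact key x hx w hw (Prod.ext hxw (by rw [(hL x hx q).2.1, (hL w hw q').2.1, hxw]))
    · subst q'; have := (hL x hx q).1; rw [hxw, hE hw] at this; exact absurd this (lt_irrefl _)
    · have := (hL x hx q).1; have := (hR w hw q').1; linarith
    · subst q; have := (hL w hw q').1; rw [← hxw, hE hx] at this; exact absurd this (lt_irrefl _)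
    · rw [q, q']
    · subst q; have := (hR w hw q').1; rw [← hxw, hE hx] at this; exact absurd this (lt_irrefl _)
    · have := (hR x hx q).1; have := (hL w hw q').1; linarith
    · subst q'; have := (hR x hx q).1; rw [hxw, hE hw] at this; exact absurd this (lt_irrefl _)
    · exact key x hx w hw (Prod.ext hxw (by rw [(hR x hx q).2.1, (hR w hw q').2.1, hxw])))
    (fun x hx => (hC x hx).2.le) (by
      intro x hx
      rw [mul_pow, sg_sq, one_mul, Real.sq_sqrt (sub_nonneg.2 (above' _ (hmaps (hC x hx).1)))]) (by
      intro x hx hne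
      rcases lt_or_gt_of_ne hne with q | q
      · refine ⟨fL, (hL x hx q).2.2, ?_⟩
        filter_upwards [Ioo_mem_nhds hx.1 hx.2, Iio_mem_nhds q] with w hw hw2 using (hL w hw hw2).2.1
      · refine ⟨fR, (hR x hx q).2.2, ?_⟩
        filter_upwards [Ioo_mem_nhds hx.1 hx.2, Ioi_mem_nhds q] with w hw hw2 using (hR w hw hw2).2.1)
  refine ⟨a', b', y', z', k1, ?_⟩
  rw [← k2, gr, image_image]

section
variable {s s' : ℝ → ℝ} {c c' r r' : ℝ} {S Z X0 D : Set (ℝ × ℝ)} {pt pt' : ℝ × ℝ → ℝ × ℝ}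

lemma pt_above (hp : HalfParam s c S Z X0 D pt) : ∀ p ∈ pt '' S, s p.1 ≤ p.2 := by
  rintro _ ⟨u, hu, rfl⟩; exact hp.les u hu

lemma tr_zero (hp : HalfParam s c S Z X0 D pt) (hp' : HalfParam s' c' S Z X0 D pt') :
    ∀ p ∈ pt '' S, p.2 = s p.1 → (tr S pt pt' p).2 = s' (tr S pt pt' p).1 := by
  rintro _ ⟨u, hu, rfl⟩ h
  rw [tr_pt hp hp' hu]
  exact (hp'.eqs u hu).2 ((hp.eqs u hu).1 h)

lemma tr_orig (hp : HalfParam s c S Z X0 D pt) (hp' : HalfParam s' c' S Z X0 D pt') :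
    tr S pt pt' 0 = 0 := by
  have := tr_pt hp hp' hp.orig.1
  rwa [hp.orig.2, hp'.orig.2] at this

lemma tr_inj (hp : HalfParam s c S Z X0 D pt) (hp' : HalfParam s' c' S Z X0 D pt') :
    InjOn (tr S pt pt') (pt '' S) := by
  intro p hpp q hq h
  rw [← tr_inv hp hp' hpp, ← tr_inv hp hp' hq, h]

lemma tr_gt (hp : HalfParam s c S Z X0 D pt) (hp' : HalfParam s' c' S Z X0 D pt') :
    ∀ p ∈ pt '' S, c' ≤ (tr S pt pt' p).1 ∧ (c < p.1 → c' < (tr S pt pt' p).1) ∧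
      (p.1 = c → (tr S pt pt' p).1 = c') := by
  rintro _ ⟨u, hu, rfl⟩
  rw [tr_pt hp hp' hu]
  refine ⟨hp'.lec u hu, fun h => lt_of_le_of_ne (hp'.lec u hu) ?_, fun h => ?_⟩
  · intro hcon
    exact h.ne' ((hp.eqc u hu).2 ((hp'.eqc u hu).1 hcon.symm))
  · exact (hp'.eqc u hu).2 ((hp.eqc u hu).1 h)

lemma hmapF (hs' : Continuous s')
    (hp : HalfParam s c S Z X0 D pt) (hp' : HalfParam s' c' S Z X0 D pt') (hc : c < 0)
    (hm : ∀ x, c < x → |x| < r → ∃ m, HasDerivAt s m x ∧ m ≠ 0) :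
    HMap s s' r r' (pt '' S) (pt' '' S) (tr S pt pt') where
  cont := tr_cont hp hp'
  maps := tr_maps hp hp'
  above := pt_above hp
  zero := tr_zero hp hp'
  orig := tr_orig hp hp'
  nb := by
    have := hp.nb
    have h2 : {p : ℝ × ℝ | c ≤ p.1 ∧ s p.1 ≤ p.2} = {p | c ≤ p.1} ∩ {p | s p.1 ≤ p.2} := rfl
    rw [h2, inter_comm, nhdsWithin_inter_of_mem'] at this
    · exact this
    · apply mem_nhdsWithin_of_mem_nhds
      have : {p : ℝ × ℝ | c < p.1} ∈ 𝓝 0 := (isOpen_lt continuous_const continuous_fst).mem_nhds hc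
      exact mem_of_superset this (fun p (hp : c < p.1) => hp.le)
  arc := by
    intro a b y z hy hC
    have hcx : ∀ x ∈ Ioo a b, c ≤ x := by
      intro x hx
      obtain ⟨u, hu, he⟩ := (hC x hx).1
      have := hp.lec u hu
      rwa [he] at this
    rcases le_or_gt b a with hab | hab
    · exact ⟨a, a, y, z, ⟨by simp, by simp⟩, by simp [gr, Ioo_eq_empty (not_lt.2 hab)]⟩
    have hca : c ≤ a := by
      by_contra hcon
      push Not at hcon
      obtain ⟨x, h1, h2⟩ := exists_between (lt_min hcon hab)
      have := hcx x ⟨h1, h2.trans_le (min_le_right _ _)⟩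
      have := h2.trans_le (min_le_left _ _)
      linarith
    obtain ⟨f, hf⟩ := piece hp hp' hca hy (fun x hx => (hC x hx).1)
      (fun x hx => hm x (hca.trans_lt hx.1) (hC x hx).2.1)
    apply arc_build (r' := r') hs' (tr_cont hp hp') (tr_inj hp hp') (tr_maps hp hp') (pt_above hp')
      (tr_zero hp hp') hy (fun x hx => ⟨(hC x hx).1, (hC x hx).2.2⟩) a c'
    · exact ⟨f, fun x hx _ => ⟨(tr_gt hp hp' _ (hC x hx).1).2.1 (hca.trans_lt hx.1), (hf x hx).2⟩⟩
    · exact ⟨f, fun x hx h => absurd h (not_lt.2 hx.1.le)⟩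
    · intro h; exact absurd h.1 (lt_irrefl _)

/-- mirror doubling -/
def db (h : ℝ × ℝ → ℝ × ℝ) (p : ℝ × ℝ) : ℝ × ℝ :=
  if 0 ≤ p.1 then h (|p.1|, p.2) else (-(h (|p.1|, p.2)).1, (h (|p.1|, p.2)).2)

def dC (C : Set (ℝ × ℝ)) : Set (ℝ × ℝ) := {p | (|p.1|, p.2) ∈ C}

lemma s_abs (he : ∀ x, s (-x) = s x) (x : ℝ) : s |x| = s x := by
  rcases abs_choice x with h | h <;> rw [h]
  exact he x

lemma db_abs {h : ℝ × ℝ → ℝ × ℝ} {p : ℝ × ℝ} (h0 : 0 ≤ (h (|p.1|, p.2)).1) :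
    (|(db h p).1|, (db h p).2) = h (|p.1|, p.2) := by
  unfold db
  split_ifs
  · rw [abs_of_nonneg h0]
  · simp only [abs_neg]; rw [abs_of_nonneg h0]

lemma db_inv (hp : HalfParam s 0 S Z X0 D pt) (hp' : HalfParam s' 0 S Z X0 D pt') :
    ∀ p ∈ dC (pt '' S), db (tr S pt' pt) (db (tr S pt pt') p) = p := by
  intro p h
  have g := tr_gt hp hp' _ h
  have i := tr_inv hp hp' h
  have e := db_abs (h := tr S pt pt') (p := p) g.1
  have e0 : db (tr S pt' pt) (db (tr S pt pt') p) = if 0 ≤ (db (tr S pt pt') p).1 then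
      tr S pt' pt (|(db (tr S pt pt') p).1|, (db (tr S pt pt') p).2) else
      (-(tr S pt' pt (|(db (tr S pt pt') p).1|, (db (tr S pt pt') p).2)).1,
        (tr S pt' pt (|(db (tr S pt pt') p).1|, (db (tr S pt pt') p).2)).2) := rfl
  rw [e0, e, i]
  by_cases hx : 0 ≤ p.1
  · have : 0 ≤ (db (tr S pt pt') p).1 := by rw [db, if_pos hx]; exact g.1
    simp only [this, if_true, abs_of_nonneg hx]
  · have : ¬ 0 ≤ (db (tr S pt pt') p).1 := by
      rw [db, if_neg hx]
      have := g.2.1 (abs_pos.2 (fun h => hx h.ge))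
      simp only; linarith
    simp only [this, if_false, abs_of_neg (not_le.1 hx), neg_neg]

lemma db_cont (hp : HalfParam s 0 S Z X0 D pt) (hp' : HalfParam s' 0 S Z X0 D pt') :
    ContinuousOn (db (tr S pt pt')) (dC (pt '' S)) := by
  have ca : Continuous (fun p : ℝ × ℝ => (|p.1|, p.2)) := by fun_prop
  have cl : IsClosed (dC (pt '' S)) := (hp.comp.image_of_continuousOn hp.cont).isClosed.preimage ca
  have ct : ContinuousOn (fun p : ℝ × ℝ => tr S pt pt' (|p.1|, p.2)) (dC (pt '' S)) :=
    (tr_cont hp hp').comp ca.continuousOn (fun p h => h)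
  have hU : dC (pt '' S) = (dC (pt '' S) ∩ {p | 0 ≤ p.1}) ∪ (dC (pt '' S) ∩ {p | p.1 ≤ 0}) := by
    rw [← inter_union_distrib_left]
    symm
    apply inter_eq_left.2
    intro p _
    exact le_total 0 p.1
  rw [hU]
  apply ContinuousOn.union_of_isClosed
  · apply (ct.mono inter_subset_left).congr
    intro p h
    exact if_pos h.2
  · have ct2 : ContinuousOn (fun p : ℝ × ℝ => (-(tr S pt pt' (|p.1|, p.2)).1, (tr S pt pt' (|p.1|, p.2)).2))
        (dC (pt '' S)) := (continuous_fst.comp_continuousOn ct).neg.prodMk (continuous_snd.comp_continuousOn ct)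
    apply (ct2.mono inter_subset_left).congr
    intro p h
    have h2 : p.1 ≤ 0 := h.2
    rcases h2.eq_or_lt with h2 | h2
    · have g := (tr_gt hp hp' _ h.1).2.2 (by simp [h2])
      show db _ p = _
      rw [db, if_pos h2.ge]
      refine Prod.ext ?_ rfl
      simp only; rw [g, neg_zero]
    · exact if_neg (not_le.2 h2)
  · exact cl.inter (isClosed_le continuous_const continuous_fst)
  · exact cl.inter (isClosed_le continuous_fst continuous_const)

lemma hmapD (hs' : Continuous s') (he : ∀ x, s (-x) = s x) (he' : ∀ x, s' (-x) = s' x)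
    (hp : HalfParam s 0 S Z X0 D pt) (hp' : HalfParam s' 0 S Z X0 D pt')
    (hm : ∀ x, 0 < x → x < r → ∃ m, HasDerivAt s m x ∧ m ≠ 0) :
    HMap s s' r r' (dC (pt '' S)) (dC (pt' '' S)) (db (tr S pt pt')) := by
  have hcont := db_cont hp hp'
  have hmaps : MapsTo (db (tr S pt pt')) (dC (pt '' S)) (dC (pt' '' S)) := by
    intro p h
    have : (|(db (tr S pt pt') p).1|, (db (tr S pt pt') p).2) ∈ pt' '' S := by
      rw [db_abs (tr_gt hp hp' _ h).1]
      exact tr_maps hp hp' h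
    exact this
  have hab : ∀ {s : ℝ → ℝ} {pt : ℝ × ℝ → ℝ × ℝ}, (∀ x, s (-x) = s x) → HalfParam s 0 S Z X0 D pt →
      ∀ p ∈ dC (pt '' S), s p.1 ≤ p.2 := by
    intro s pt he hp p h
    have := pt_above hp _ h
    simp only [s_abs he] at this
    exact this
  have hzero : ∀ p ∈ dC (pt '' S), p.2 = s p.1 → (db (tr S pt pt') p).2 = s' (db (tr S pt pt') p).1 := by
    intro p h h0
    have e := db_abs (h := tr S pt pt') (p := p) (tr_gt hp hp' _ h).1
    have := tr_zero hp hp' _ h (by simp only [s_abs he]; exact h0)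
    rw [← e] at this
    simpa only [s_abs he'] using this
  refine ⟨hcont, hmaps, hab he hp, hzero, ?_, ?_, ?_⟩
  · have := tr_orig hp hp'
    simp only [db, Prod.fst_zero, le_refl, if_true, abs_zero, Prod.snd_zero]
    exact this
  · have ca : Continuous (fun p : ℝ × ℝ => (|p.1|, p.2)) := by fun_prop
    have : Tendsto (fun p : ℝ × ℝ => (|p.1|, p.2)) (𝓝[{p | s p.1 ≤ p.2}] 0)
        (𝓝[{p | 0 ≤ p.1 ∧ s p.1 ≤ p.2}] 0) := by
      apply tendsto_nhdsWithin_iff.2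
      constructor
      · have := ca.tendsto 0
        simp only [Prod.fst_zero, abs_zero, Prod.snd_zero] at this
        exact this.mono_left nhdsWithin_le_nhds
      · filter_upwards [self_mem_nhdsWithin] with p hp
        exact ⟨abs_nonneg _, by simp only [s_abs he]; exact hp⟩
    exact this hp.nb
  · intro a b y z hy hC
    apply arc_build (r' := r') hs' hcont (C := dC (pt '' S)) (C' := dC (pt' '' S))
      (fun p h q h2 h3 => by rw [← db_inv hp hp' p h, ← db_inv hp hp' q h2, h3]) hmaps (hab he' hp')
      hzero hy (fun x hx => ⟨(hC x hx).1, (hC x hx).2.2⟩) 0 0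
    · obtain ⟨f, hf⟩ := piece (a := max a 0) (b := b) (y := y) (z := z) hp hp' (le_max_right _ _)
        ⟨hy.1.mono (Ioo_subset_Ioo (le_max_left _ _) le_rfl),
          fun x hx => hy.2 x ⟨(le_max_left _ _).trans_lt hx.1, hx.2⟩⟩
        (fun x hx => by
          have h0 : 0 < x := (le_max_right _ _).trans_lt hx.1
          have := (hC x ⟨(le_max_left _ _).trans_lt hx.1, hx.2⟩).1
          have h2 : (|x|, y x) ∈ pt '' S := this
          rwa [abs_of_pos h0] at h2)
        (fun x hx => by
          have h0 : 0 < x := (le_max_right _ _).trans_lt hx.1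
          have := (hC x ⟨(le_max_left _ _).trans_lt hx.1, hx.2⟩).2.1
          rw [abs_of_pos h0] at this
          exact hm x h0 this)
      refine ⟨f, fun x hx h0 => ?_⟩
      have e : db (tr S pt pt') (x, y x) = tr S pt pt' (x, y x) := by
        simp only [db, h0.le, if_true, abs_of_pos h0]
      rw [e]
      have h2 : (|x|, y x) ∈ pt '' S := (hC x hx).1
      rw [abs_of_pos h0] at h2
      exact ⟨(tr_gt hp hp' _ h2).2.1 h0, (hf x ⟨max_lt hx.1 h0, hx.2⟩).2⟩
    · have ineg : ∀ x ∈ Ioo (max (-b) 0) (-a), 0 < x ∧ -x ∈ Ioo a b := fun x hx =>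
        ⟨(le_max_right _ _).trans_lt hx.1, by linarith [hx.2], by
          have := (le_max_left _ _).trans_lt hx.1; linarith⟩
      obtain ⟨f, hf⟩ := piece (a := max (-b) 0) (b := -a) (y := fun x => y (-x)) (z := fun x => - z (-x))
        hp hp' (le_max_right _ _)
        ⟨(hy.1.comp continuous_neg.continuousOn (fun x hx => (ineg x hx).2)).neg,
          fun x hx => by
            obtain ⟨h1, h2⟩ := hy.2 (-x) (ineg x hx).2
            constructor
            · have := h1.comp x (hasDerivAt_neg x)
              rw [mul_neg_one] at this
              exact this
            · rw [neg_sq, h2, he]⟩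
        (fun x hx => by
          have := (hC (-x) (ineg x hx).2).1
          have h2 : (|-x|, y (-x)) ∈ pt '' S := this
          rwa [abs_neg, abs_of_pos (ineg x hx).1] at h2)
        (fun x hx => by
          have := (hC (-x) (ineg x hx).2).2.1
          rw [abs_neg, abs_of_pos (ineg x hx).1] at this
          exact hm x (ineg x hx).1 this)
      refine ⟨fun t => f (-t), fun x hx h0 => ?_⟩
      have hx' : -x ∈ Ioo (max (-b) 0) (-a) := ⟨max_lt (by linarith [hx.2]) (by linarith), by linarith [hx.1]⟩
      have h2 : (|x|, y x) ∈ pt '' S := (hC x hx).1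
      rw [abs_of_neg h0] at h2
      have g := (tr_gt hp hp' _ h2).2.1 (by simp only; linarith)
      obtain ⟨f1, f2, f3⟩ := hf (-x) hx'
      simp only [neg_neg] at f1 f2 f3
      have e : db (tr S pt pt') (x, y x) = (-(tr S pt pt' (-x, y x)).1, (tr S pt pt' (-x, y x)).2) := by
        simp only [db, not_le.2 h0, if_false, abs_of_neg h0]
      rw [e]
      refine ⟨by simp only; linarith, by simp only [neg_neg]; exact f2, ?_⟩
      simp only [he']
      rw [sg_neg (by simpa using f1)] at f3
      have f4 : HasDerivAt f (-sg (z x) * Real.sqrt ((tr S pt pt' (-x, y x)).2 - s' (tr S pt pt' (-x, y x)).1))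
          (- -(tr S pt pt' (-x, y x)).1) := by rw [neg_neg]; exact f3
      have := f4.comp _ (hasDerivAt_neg (-(tr S pt pt' (-x, y x)).1))
      rw [neg_mul, mul_neg_one, neg_neg] at this
      exact this
    · intro h0
      have h2 : (|(0:ℝ)|, y 0) ∈ pt '' S := (hC 0 h0).1
      simp only [db, le_refl, if_true]
      exact (tr_gt hp hp' _ h2).2.2 (by simp)

end
end BD

namespace BD
open Topology

def std (s : ℝ → ℝ) : (ℝ × ℝ) → (ℝ × ℝ) → ℝ := BDE (fun _ => 1) (fun _ => 0) (fun p => -p.2 + s p.1)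

lemma hd_fst {γ : ℝ → ℝ × ℝ} {v : ℝ × ℝ} {t : ℝ} (h : HasDerivAt γ v t) :
    HasDerivAt (fun t => (γ t).1) v.1 t :=
  ((ContinuousLinearMap.fst ℝ ℝ ℝ).hasFDerivAt (x := γ t)).comp_hasDerivAt t h

lemma hd_snd {γ : ℝ → ℝ × ℝ} {v : ℝ × ℝ} {t : ℝ} (h : HasDerivAt γ v t) :
    HasDerivAt (fun t => (γ t).2) v.2 t :=
  ((ContinuousLinearMap.snd ℝ ℝ ℝ).hasFDerivAt (x := γ t)).comp_hasDerivAt t h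

lemma std_zero {s : ℝ → ℝ} {p v : ℝ × ℝ} (h : std s p v = 0) (hv : v ≠ 0) :
    v.1 ≠ 0 ∧ (v.2 / v.1) ^ 2 = p.2 - s p.1 := by
  have h' : 1 * v.2 ^ 2 + 2 * 0 * v.1 * v.2 + (-p.2 + s p.1) * v.1 ^ 2 = 0 := h
  have h1 : v.1 ≠ 0 := by
    intro h0
    rw [h0] at h'
    apply hv
    apply Prod.ext h0
    have : v.2 ^ 2 = 0 := by linarith
    simpa using this
  refine ⟨h1, ?_⟩
  field_simp
  linarith

lemma curve_graph {s : ℝ → ℝ} {γ : ℝ → ℝ × ℝ} {I : Set ℝ} (h : IsIntegralCurveOnBDE (std s) γ I) {M : ℝ}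
    (hM : ∀ t ∈ I, |(γ t).1| ≤ M) : ∃ a b y z, IsSolz s a b y z ∧ γ '' I = gr a b y := by
  obtain ⟨⟨a, b, rfl⟩, dγ, hdc, hd⟩ := h
  have hz := fun t ht => std_zero (hd t ht).2.2 (hd t ht).2.1
  have d1 := fun t ht => hd_fst (hd t ht).1
  have d2 := fun t ht => hd_snd (hd t ht).1
  have c1 : ContinuousOn (fun t => (γ t).1) (Ioo a b) :=
    fun t ht => (d1 t ht).continuousAt.continuousWithinAt
  have hne : ∀ x ∈ Ioo a b, ∀ w ∈ Ioo a b, x < w → (γ x).1 ≠ (γ w).1 := by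
    intro x hx w hw hxw he
    have sub : Icc x w ⊆ Ioo a b := fun t ht => ⟨hx.1.trans_le ht.1, ht.2.trans_lt hw.2⟩
    obtain ⟨t, ht, h0⟩ := exists_hasDerivAt_eq_zero hxw (c1.mono sub) he
      (fun t ht => d1 t (sub (Ioo_subset_Icc_self ht)))
    exact (hz t (sub (Ioo_subset_Icc_self ht))).1 h0
  have hi : InjOn (fun t => (γ t).1) (Ioo a b) := by
    intro x hx w hw he
    rcases lt_trichotomy x w with q | q | q
    · exact absurd he (hne x hx w hw q)
    · exact q
    · exact absurd he.symm (hne w hw x hx q)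
  obtain ⟨a', b', g, g1, g2, g3, g4⟩ := inv_arc c1 hi hM
  have cz : ContinuousOn (fun t => (dγ t).2 / (dγ t).1) (Ioo a b) :=
    (continuous_snd.comp_continuousOn hdc).div (continuous_fst.comp_continuousOn hdc) (fun t ht => (hz t ht).1)
  refine ⟨a', b', fun x => (γ (g x)).2, fun x => (dγ (g x)).2 / (dγ (g x)).1,
    ⟨cz.comp g1 g2, fun x hx => ⟨?_, ?_⟩⟩, ?_⟩
  · have gd : HasDerivAt g ((dγ (g x)).1)⁻¹ x := by
      apply HasDerivAt.of_local_left_inverse (g1.continuousAt (Ioo_mem_nhds hx.1 hx.2)) (d1 _ (g2 hx))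
        (hz _ (g2 hx)).1
      filter_upwards [Ioo_mem_nhds hx.1 hx.2] with t ht using g3 t ht
    exact (d2 _ (g2 hx)).comp x gd
  · have := (hz _ (g2 hx)).2
    rw [this]
    have : (γ (g x)).1 = x := g3 x hx
    rw [this]
  · ext P
    constructor
    · rintro ⟨t, ht, rfl⟩
      refine ⟨(γ t).1, (g4 t ht).1, ?_⟩
      have : g (γ t).1 = t := (g4 t ht).2
      simp only [this]
    · rintro ⟨x, hx, rfl⟩
      exact ⟨g x, g2 hx, Prod.ext (g3 x hx) rfl⟩

lemma graph_curve {s y z : ℝ → ℝ} {a b : ℝ} (h : IsSolz s a b y z) :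
    IsIntegralCurveOnBDE (std s) (fun x => (x, y x)) (Ioo a b) := by
  refine ⟨⟨a, b, rfl⟩, fun x => (1, z x), continuousOn_const.prodMk h.1, fun x hx => ⟨?_, ?_, ?_⟩⟩
  · exact (hasDerivAt_id x).prodMk (h.2 x hx).1
  · intro h0; exact one_ne_zero (congrArg Prod.fst h0)
  · show 1 * z x ^ 2 + 2 * 0 * 1 * z x + (-y x + s x) * 1 ^ 2 = 0
    rw [(h.2 x hx).2]; ring

def EE (s : ℝ → ℝ) (p : ℝ × ℝ) : ℝ × ℝ := (p.1, max p.2 (s p.1))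
def ext (s : ℝ → ℝ) (h : ℝ × ℝ → ℝ × ℝ) (p : ℝ × ℝ) : ℝ × ℝ := h (EE s p) + (0, min (p.2 - s p.1) 0)

section
variable {s s' : ℝ → ℝ} {r r' : ℝ} {C C' : Set (ℝ × ℝ)} {h h' : ℝ × ℝ → ℝ × ℝ}

lemma ext_of_above {p : ℝ × ℝ} (hp : s p.1 ≤ p.2) : EE s p = p ∧ ext s h p = h p := by
  have : EE s p = p := Prod.ext rfl (max_eq_left hp)
  refine ⟨this, ?_⟩
  rw [ext, this, min_eq_right (by linarith)]
  exact add_zero _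

lemma ext_inv (H : HMap s s' r r' C C' h) (H' : HMap s' s r' r C' C h') (hi : ∀ p ∈ C, h' (h p) = p)
    {p : ℝ × ℝ} (hp : EE s p ∈ C) : ext s' h' (ext s h p) = p := by
  rcases le_or_gt (s p.1) p.2 with q | q
  · rw [(ext_of_above (h := h) q).1] at hp
    rw [(ext_of_above (h := h) q).2, (ext_of_above (h := h') (H'.above _ (H.maps hp))).2, hi p hp]
  · have e : EE s p = (p.1, s p.1) := Prod.ext rfl (max_eq_right q.le)
    have e1 : ext s h p = ((h (EE s p)).1, (h (EE s p)).2 + (p.2 - s p.1)) := by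
      rw [ext, min_eq_left (by linarith)]
      exact Prod.ext (add_zero _) rfl
    have z : (h (EE s p)).2 = s' (h (EE s p)).1 := H.zero _ hp (by rw [e])
    have e2 : EE s' (ext s h p) = h (EE s p) := by
      rw [e1]
      refine Prod.ext rfl ?_
      show max ((h (EE s p)).2 + (p.2 - s p.1)) (s' (h (EE s p)).1) = (h (EE s p)).2
      rw [← z]
      exact max_eq_right (by linarith)
    rw [ext, e2, hi _ hp, e1]
    simp only
    rw [z, e, min_eq_left (by linarith)]
    refine Prod.ext (add_zero _) ?_
    show s p.1 + (s' _ + (p.2 - s p.1) - s' _) = p.2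
    ring

lemma EE_cont (hs : Continuous s) : Continuous (EE s) := by unfold EE; fun_prop

lemma ext_cont (hs : Continuous s) (H : HMap s s' r r' C C' h) : ContinuousOn (ext s h) {p | EE s p ∈ C} := by
  unfold ext
  apply ContinuousOn.add
  · exact H.cont.comp (EE_cont hs).continuousOn (fun p hp => hp)
  · apply Continuous.continuousOn; fun_prop

lemma EE_nb (hs : Continuous s) (hs0 : s 0 = 0) (H : HMap s s' r r' C C' h) : {p | EE s p ∈ C} ∈ 𝓝 0 := by
  have : Tendsto (EE s) (𝓝 0) (𝓝[{p | s p.1 ≤ p.2}] 0) := by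
    apply tendsto_nhdsWithin_iff.2
    constructor
    · have := (EE_cont hs).tendsto 0
      have e : EE s 0 = 0 := (ext_of_above (s := s) (h := id) (p := 0) (by simp [hs0])).1
      rwa [e] at this
    · exact Eventually.of_forall (fun p => (le_max_right p.2 (s p.1) : _))
  exact this H.nb

lemma push_curve (H : HMap s s' r r' C C' h) {γ : ℝ → ℝ × ℝ} {I : Set ℝ}
    (hγ : IsIntegralCurveOnBDE (std s) γ I)
    (hU : ∀ t ∈ I, EE s (γ t) ∈ C ∧ |(γ t).1| < r ∧ |(ext s h (γ t)).1| < r') :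
    ∃ σ J, IsIntegralCurveOnBDE (std s') σ J ∧ ext s h '' (γ '' I) = σ '' J := by
  have hab : ∀ t ∈ I, s (γ t).1 ≤ (γ t).2 := by
    intro t ht
    obtain ⟨-, dγ, -, hd⟩ := hγ
    have := (std_zero (hd t ht).2.2 (hd t ht).2.1).2
    nlinarith [sq_nonneg ((dγ t).2 / (dγ t).1)]
  obtain ⟨a, b, y, z, k1, k2⟩ := curve_graph hγ (fun t ht => (hU t ht).2.1.le)
  have hg : ∀ x ∈ Ioo a b, (x, y x) ∈ C ∧ |x| < r ∧ |(h (x, y x)).1| < r' := by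
    intro x hx
    have : (x, y x) ∈ γ '' I := by rw [k2]; exact ⟨x, hx, rfl⟩
    obtain ⟨t, ht, he⟩ := this
    have := hU t ht
    rw [(ext_of_above (h := h) (hab t ht)).1, (ext_of_above (h := h) (hab t ht)).2, he] at this
    exact this
  obtain ⟨a', b', y', z', k3, k4⟩ := H.arc a b y z k1 hg
  refine ⟨_, _, graph_curve k3, ?_⟩
  rw [← gr, ← k4, ← k2]
  apply image_congr
  rintro _ ⟨t, ht, rfl⟩
  exact (ext_of_above (hab t ht)).2

lemma topEquiv_of (hs : Continuous s) (hs0 : s 0 = 0) (hs' : Continuous s') (hs0' : s' 0 = 0) (hr : 0 < r)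
    (hr' : 0 < r') (H : HMap s s' r r' C C' h) (H' : HMap s' s r' r C' C h') (hi : ∀ p ∈ C, h' (h p) = p)
    (hi' : ∀ p ∈ C', h (h' p) = p) : TopEquivAt0 (std s) (std s') := by
  set A : Set (ℝ × ℝ) := interior {p | EE s p ∈ C} ∩ {p | |p.1| < r} with hA
  set A' : Set (ℝ × ℝ) := interior {p | EE s' p ∈ C'} ∩ {p | |p.1| < r'} with hA'
  have oA : IsOpen A := isOpen_interior.inter (isOpen_lt (by fun_prop) continuous_const)
  have oA' : IsOpen A' := isOpen_interior.inter (isOpen_lt (by fun_prop) continuous_const)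
  have zA : (0 : ℝ × ℝ) ∈ A := ⟨mem_interior_iff_mem_nhds.2 (EE_nb hs hs0 H), by simpa using hr⟩
  have zA' : (0 : ℝ × ℝ) ∈ A' := ⟨mem_interior_iff_mem_nhds.2 (EE_nb hs' hs0' H'), by simpa using hr'⟩
  have e0 : ext s h 0 = 0 := by
    rw [(ext_of_above (s := s) (h := h) (p := 0) (by simp [hs0])).2, H.orig]
  have e0' : ext s' h' 0 = 0 := by
    rw [(ext_of_above (s := s') (h := h') (p := 0) (by simp [hs0'])).2, H'.orig]
  have cA : ContinuousOn (ext s h) A := (ext_cont hs H).mono (fun p hp => interior_subset hp.1)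
  have cA' : ContinuousOn (ext s' h') A' := (ext_cont hs' H').mono (fun p hp => interior_subset hp.1)
  have i1 : ∀ p ∈ A, ext s' h' (ext s h p) = p := fun p hp => ext_inv H H' hi (interior_subset hp.1 : p ∈ {p | EE s p ∈ C})
  have i2 : ∀ p ∈ A', ext s h (ext s' h' p) = p := fun p hp => ext_inv H' H hi' (interior_subset hp.1 : p ∈ {p | EE s' p ∈ C'})
  refine ⟨A ∩ ext s h ⁻¹' A', A' ∩ ext s' h' ⁻¹' A, ext s h, ext s' h',
    cA.isOpen_inter_preimage oA oA', cA'.isOpen_inter_preimage oA' oA, ⟨zA, by simpa [e0] using zA'⟩,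
    ⟨zA', by simpa [e0'] using zA⟩, e0, cA.mono inter_subset_left, cA'.mono inter_subset_left, ?_, ?_, ?_, ?_⟩
  · refine ⟨?_, ?_, ?_⟩
    · intro p hp
      exact ⟨hp.2, by show _ ∈ A; rw [i1 p hp.1]; exact hp.1⟩
    · intro p hp q hq e
      rw [← i1 p hp.1, ← i1 q hq.1, e]
    · intro p hp
      exact ⟨ext s' h' p, ⟨hp.2, by show _ ∈ A'; rw [i2 p hp.1]; exact hp.1⟩, i2 p hp.1⟩
  · exact ⟨fun p hp => i1 p hp.1, fun p hp => i2 p hp.1⟩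
  · intro γ I hγ hU
    exact push_curve H hγ (fun t ht => ⟨(interior_subset (hU ht).1.1 : γ t ∈ {p | EE s p ∈ C}), (hU ht).1.2, (hU ht).2.2⟩)
  · intro γ I hγ hU
    exact push_curve H' hγ (fun t ht => ⟨(interior_subset (hU ht).1.1 : γ t ∈ {p | EE s' p ∈ C'}), (hU ht).1.2, (hU ht).2.2⟩)

end

lemma te_symm {ω Ω : (ℝ × ℝ) → (ℝ × ℝ) → ℝ} (H : TopEquivAt0 ω Ω) : TopEquivAt0 Ω ω := by
  obtain ⟨U, V, h, k, oU, oV, zU, zV, h0, ch, ck, hb, hi, f, g⟩ := H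
  exact ⟨V, U, k, h, oV, oU, zV, zU, (congrArg k h0).symm.trans (hi.1 zU), ck, ch, hb.symm hi.symm, hi.symm, g, f⟩

lemma te_trans {ω Ω Θ : (ℝ × ℝ) → (ℝ × ℝ) → ℝ} (H : TopEquivAt0 ω Ω) (K : TopEquivAt0 Ω Θ) :
    TopEquivAt0 ω Θ := by
  obtain ⟨U, V, h, k, oU, oV, zU, zV, h0, ch, ck, hb, hi, f, g⟩ := H
  obtain ⟨U', V', h', k', oU', oV', zU', zV', h0', ch', ck', hb', hi', f', g'⟩ := K
  have k0 : k 0 = 0 := by conv_lhs => rw [← h0]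
                          exact hi.1 zU
  have k0' : k' 0 = 0 := by conv_lhs => rw [← h0']
                            exact hi'.1 zU'
  refine ⟨U ∩ h ⁻¹' U', V' ∩ k' ⁻¹' V, h' ∘ h, k ∘ k', ch.isOpen_inter_preimage oU oU',
    ck'.isOpen_inter_preimage oV' oV, ⟨zU, by simpa [h0] using zU'⟩, ⟨zV', by simpa [k0'] using zV⟩,
    by simp [h0, h0'], ch'.comp (ch.mono inter_subset_left) (fun p hp => hp.2),
    ck.comp (ck'.mono inter_subset_left) (fun p hp => hp.2), ?_, ?_, ?_, ?_⟩
  · refine ⟨?_, ?_, ?_⟩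
    · intro p hp
      refine ⟨hb'.mapsTo hp.2, ?_⟩
      show k' (h' (h p)) ∈ V
      rw [hi'.1 hp.2]
      exact hb.mapsTo hp.1
    · intro p hp q hq e
      exact hb.injOn hp.1 hq.1 (hb'.injOn hp.2 hq.2 e)
    · intro p hp
      obtain ⟨q, hq, rfl⟩ := hb'.surjOn hp.1
      have := hp.2
      rw [mem_preimage, hi'.1 hq] at this
      obtain ⟨x, hx, rfl⟩ := hb.surjOn this
      exact ⟨x, ⟨hx, hq⟩, rfl⟩
  · constructor
    · intro p hp
      show k (k' (h' (h p))) = p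
      rw [hi'.1 hp.2, hi.1 hp.1]
    · intro p hp
      show h' (h (k (k' p))) = p
      rw [hi.2 hp.2, hi'.2 hp.1]
  · intro γ I hγ hU
    obtain ⟨σ, J, hσ, e⟩ := f γ I hγ (fun t ht => (hU ht).1)
    obtain ⟨τ, L, hτ, e2⟩ := f' σ J hσ (by
      intro t ht
      have : σ t ∈ h '' (γ '' I) := by rw [e]; exact ⟨t, ht, rfl⟩
      obtain ⟨_, ⟨x, hx, rfl⟩, hx2⟩ := this
      rw [← hx2]
      exact (hU hx).2)
    exact ⟨τ, L, hτ, by rw [image_comp, e, e2]⟩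
  · intro γ I hγ hU
    obtain ⟨σ, J, hσ, e⟩ := g' γ I hγ (fun t ht => (hU ht).1)
    obtain ⟨τ, L, hτ, e2⟩ := g σ J hσ (by
      intro t ht
      have : σ t ∈ k' '' (γ '' I) := by rw [e]; exact ⟨t, ht, rfl⟩
      obtain ⟨_, ⟨x, hx, rfl⟩, hx2⟩ := this
      rw [← hx2]
      exact (hU hx).2)
    exact ⟨τ, L, hτ, by rw [image_comp, e, e2]⟩

end BD

namespace BD
open Topology

def Der (s : ℝ → ℝ) (σ : ℝ) (I : Set ℝ) : Prop :=
  ∃ m : ℝ → ℝ, ContinuousOn m I ∧ ∀ x ∈ I, HasDerivAt s (m x) x ∧ 0 < σ * m x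

lemma Der.mono {s : ℝ → ℝ} {σ : ℝ} {I J : Set ℝ} (h : Der s σ I) (hJ : J ⊆ I) : Der s σ J := by
  obtain ⟨m, h1, h2⟩ := h
  exact ⟨m, h1.mono hJ, fun x hx => h2 x (hJ hx)⟩

lemma Der.ne {s : ℝ → ℝ} {σ : ℝ} {I : Set ℝ} (h : Der s σ I) {x : ℝ} (hx : x ∈ I) :
    ∃ m, HasDerivAt s m x ∧ m ≠ 0 := by
  obtain ⟨m, h1, h2⟩ := h
  refine ⟨m x, (h2 x hx).1, fun h0 => ?_⟩
  have := (h2 x hx).2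
  rw [h0] at this
  simp at this

lemma small {s : ℝ → ℝ} (hs : Continuous s) (hs0 : s 0 = 0) {r : ℝ} (hr : 0 < r) :
    ∃ r₁, 0 < r₁ ∧ r₁ ≤ r ∧ ∀ x, |x| ≤ r₁ → |s x| ≤ 1 / 2 := by
  have : ∀ᶠ x in 𝓝 (0:ℝ), |s x| < 1 / 2 := by
    apply hs.abs.continuousAt.eventually (gt_mem_nhds _)
    simp [hs0]
  obtain ⟨ρ, hρ, h⟩ := Metric.eventually_nhds_iff.1 this
  refine ⟨min (ρ / 2) r, by positivity, min_le_right _ _, fun x hx => ?_⟩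
  apply (h (y := x) _).le
  rw [Real.dist_eq, sub_zero]
  have := min_le_left (ρ / 2) r
  linarith

lemma HalfParam.congr {s : ℝ → ℝ} {c : ℝ} {S Z X0 D X0' D' : Set (ℝ × ℝ)} {pt : ℝ × ℝ → ℝ × ℝ}
    (h : HalfParam s c S Z X0 D pt) (hX : ∀ u ∈ S, u ∈ X0 ↔ u ∈ X0') (hD : ∀ u ∈ S, u ∈ D ↔ u ∈ D') :
    HalfParam s c S Z X0' D' pt where
  comp := h.comp
  cont := h.cont
  inj := h.inj
  lec := h.lec
  eqc := fun u hu => (h.eqc u hu).trans (hX u hu)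
  x0y := fun u hu hx => h.x0y u hu ((hX u hu).2 hx)
  les := h.les
  eqs := fun u hu => (h.eqs u hu).trans (hD u hu)
  nb := h.nb
  orig := h.orig
  leafP := h.leafP
  leafM := h.leafM
  arcP := h.arcP
  arcM := h.arcM

lemma chartF {s : ℝ → ℝ} (hs : Continuous s) (hs0 : s 0 = 0) {r : ℝ} (hr : 0 < r)
    (hd : Der s (-1) (Ioo (-r) r)) : ∃ r₁, 0 < r₁ ∧ r₁ ≤ r ∧ ∃ δ0 > 0, ∀ δ, 0 < δ → δ ≤ δ0 →
      ∃ pt, HalfParam s (-r₁) (SS δ) ∅ ∅ {u | u.1 = u.2} pt := by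
  obtain ⟨r₁, h1, h2, h3⟩ := small hs hs0 hr
  obtain ⟨m, m1, m2⟩ := hd
  have sub : Ioo (-r₁) r₁ ⊆ Ioo (-r) r := Ioo_subset_Ioo (by linarith) h2
  have hanti : StrictAntiOn s (Icc (-r₁) r₁) := by
    apply strictAntiOn_of_deriv_neg (convex_Icc _ _) hs.continuousOn
    intro x hx
    rw [interior_Icc] at hx
    rw [(m2 x (sub hx)).1.deriv]
    linarith [(m2 x (sub hx)).2]
  have hpos : 0 < s (-r₁) := by
    rw [← hs0]
    exact hanti (left_mem_Icc.2 (by linarith)) ⟨by linarith, by linarith⟩ (by linarith)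
  obtain ⟨δ0, hδ0, H⟩ := chartSF (m := m) (c := -r₁) (d := r₁) hs hs0 (by linarith) h1
    (fun x hx => ⟨(m2 x (sub hx)).1, by linarith [(m2 x (sub hx)).2]⟩) (m1.mono sub)
    (fun x hx => h3 x (abs_le.2 hx))
  refine ⟨r₁, h1, h2, min δ0 (s (-r₁) / 2), by positivity, fun δ hδ hδ' => ?_⟩
  have q1 := hδ'.trans (min_le_left _ _)
  have q2 := hδ'.trans (min_le_right _ _)
  obtain ⟨pt, hp⟩ := H δ hδ q1
  refine ⟨pt, hp.congr ?_ ?_⟩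
  · intro u hu
    have := hu.2.2
    constructor
    · rintro ⟨-, h⟩; linarith
    · intro h; exact h.elim
  · intro u hu
    have := hu.2.2
    constructor
    · rintro ⟨h, -⟩; exact h
    · intro h; exact ⟨h, by linarith⟩

lemma teF {s s' : ℝ → ℝ} (hs : Continuous s) (hs0 : s 0 = 0) {r : ℝ} (hr : 0 < r)
    (hd : Der s (-1) (Ioo (-r) r)) (hs' : Continuous s') (hs0' : s' 0 = 0) {r' : ℝ} (hr' : 0 < r')
    (hd' : Der s' (-1) (Ioo (-r') r')) : TopEquivAt0 (std s) (std s') := by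
  obtain ⟨ρ, h1, h2, δ0, hδ0, H⟩ := chartF hs hs0 hr hd
  obtain ⟨ρ', h1', h2', δ0', hδ0', H'⟩ := chartF hs' hs0' hr' hd'
  obtain ⟨pt, hp⟩ := H (min δ0 δ0') (by positivity) (min_le_left _ _)
  obtain ⟨pt', hp'⟩ := H' (min δ0 δ0') (by positivity) (min_le_right _ _)
  exact topEquiv_of hs hs0 hs' hs0' hr hr'
    (hmapF hs' hp hp' (by linarith) (fun x _ hx => hd.ne (abs_lt.1 hx)))
    (hmapF hs hp' hp (by linarith) (fun x _ hx => hd'.ne (abs_lt.1 hx)))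
    (fun p h => tr_inv hp hp' h) (fun p h => tr_inv hp' hp h)

lemma teD {s s' : ℝ → ℝ} {S Z X0 D : Set (ℝ × ℝ)} {pt pt' : ℝ × ℝ → ℝ × ℝ}
    (hs : Continuous s) (hs0 : s 0 = 0) (he : ∀ x, s (-x) = s x) {r σ : ℝ} (hr : 0 < r)
    (hd : Der s σ (Ioo 0 r)) (hs' : Continuous s') (hs0' : s' 0 = 0) (he' : ∀ x, s' (-x) = s' x) {r' : ℝ}
    (hr' : 0 < r') (hd' : Der s' σ (Ioo 0 r')) (hp : HalfParam s 0 S Z X0 D pt)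
    (hp' : HalfParam s' 0 S Z X0 D pt') : TopEquivAt0 (std s) (std s') :=
  topEquiv_of hs hs0 hs' hs0' hr hr'
    (hmapD hs' he he' hp hp' (fun _ h0 hx => hd.ne ⟨h0, hx⟩))
    (hmapD hs he' he hp' hp (fun _ h0 hx => hd'.ne ⟨h0, hx⟩))
    (db_inv hp hp') (db_inv hp' hp)

lemma chartS {s : ℝ → ℝ} (hs : Continuous s) (hs0 : s 0 = 0) {r : ℝ} (hr : 0 < r)
    (hd : Der s (-1) (Ioo 0 r)) : ∃ δ0 > 0, ∀ δ, 0 < δ → δ ≤ δ0 →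
      ∃ pt, HalfParam s 0 (SS δ) ∅ {u | u.1 = u.2 ∧ 0 ≤ u.2} {u | u.1 = u.2 ∧ u.2 ≤ 0} pt := by
  obtain ⟨r₁, h1, h2, h3⟩ := small hs hs0 hr
  obtain ⟨m, m1, m2⟩ := hd
  have sub : Ioo 0 r₁ ⊆ Ioo 0 r := Ioo_subset_Ioo le_rfl h2
  have := chartSF (m := m) (c := 0) (d := r₁) hs hs0 le_rfl h1
    (fun x hx => ⟨(m2 x (sub hx)).1, by linarith [(m2 x (sub hx)).2]⟩) (m1.mono sub)
    (fun x hx => h3 x (abs_le.2 ⟨by linarith [hx.1], hx.2⟩))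
  rwa [hs0] at this

lemma teS {s s' : ℝ → ℝ} (hs : Continuous s) (hs0 : s 0 = 0) (he : ∀ x, s (-x) = s x) {r : ℝ} (hr : 0 < r)
    (hd : Der s (-1) (Ioo 0 r)) (hs' : Continuous s') (hs0' : s' 0 = 0) (he' : ∀ x, s' (-x) = s' x) {r' : ℝ}
    (hr' : 0 < r') (hd' : Der s' (-1) (Ioo 0 r')) : TopEquivAt0 (std s) (std s') := by
  obtain ⟨δ0, hδ0, H⟩ := chartS hs hs0 hr hd
  obtain ⟨δ0', hδ0', H'⟩ := chartS hs' hs0' hr' hd'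
  obtain ⟨pt, hp⟩ := H (min δ0 δ0') (by positivity) (min_le_left _ _)
  obtain ⟨pt', hp'⟩ := H' (min δ0 δ0') (by positivity) (min_le_right _ _)
  exact teD hs hs0 he hr hd hs' hs0' he' hr' hd' hp hp'

lemma chartN2 {s : ℝ → ℝ} (hs : Continuous s) (hs0 : s 0 = 0) {r : ℝ} (hr : 0 < r)
    (hd : Der s 1 (Ioo 0 r)) (hb : ∀ x ∈ Icc 0 r, s x ≤ x ^ 2 / 16) : ∃ δ0 > 0, ∀ δ, 0 < δ → δ ≤ δ0 →
      ∃ pt, HalfParam s 0 (SN δ) {u | u.2 = 0} {u | u.1 = u.2 ∨ u.2 = 0}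
        {u | u.1 = u.2 - 1 - δ ∨ u.2 = 0} pt := by
  obtain ⟨m, m1, m2⟩ := hd
  have sub : Ioo 0 (min r 1) ⊆ Ioo 0 r := Ioo_subset_Ioo le_rfl (min_le_left _ _)
  exact chartN (m := m) (ε := min r 1) hs hs0 (by positivity) (min_le_right _ _)
    (fun x hx => ⟨(m2 x (sub hx)).1, by linarith [(m2 x (sub hx)).2]⟩) (m1.mono sub)
    (fun x hx => hb x ⟨hx.1, hx.2.trans (min_le_left _ _)⟩)

lemma teN {s s' : ℝ → ℝ} (hs : Continuous s) (hs0 : s 0 = 0) (he : ∀ x, s (-x) = s x) {r : ℝ} (hr : 0 < r)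
    (hd : Der s 1 (Ioo 0 r)) (hb : ∀ x ∈ Icc 0 r, s x ≤ x ^ 2 / 16)
    (hs' : Continuous s') (hs0' : s' 0 = 0) (he' : ∀ x, s' (-x) = s' x) {r' : ℝ}
    (hr' : 0 < r') (hd' : Der s' 1 (Ioo 0 r')) (hb' : ∀ x ∈ Icc 0 r', s' x ≤ x ^ 2 / 16) :
    TopEquivAt0 (std s) (std s') := by
  obtain ⟨δ0, hδ0, H⟩ := chartN2 hs hs0 hr hd hb
  obtain ⟨δ0', hδ0', H'⟩ := chartN2 hs' hs0' hr' hd' hb'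
  obtain ⟨pt, hp⟩ := H (min δ0 δ0') (by positivity) (min_le_left _ _)
  obtain ⟨pt', hp'⟩ := H' (min δ0 δ0') (by positivity) (min_le_right _ _)
  exact teD hs hs0 he hr hd hs' hs0' he' hr' hd' hp hp'

/-- fibered change of coordinates -/
def sh (X g : ℝ → ℝ) (κ : ℝ) (p : ℝ × ℝ) : ℝ × ℝ := (X p.1, κ * p.2 + g p.1)

lemma sh_push {ω Ω : (ℝ × ℝ) → (ℝ × ℝ) → ℝ} {X X1 g g1 : ℝ → ℝ} {κ : ℝ} (hκ : κ ≠ 0)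
    (hX : ∀ x, HasDerivAt X (X1 x) x) (hX1 : Continuous X1) (hX0 : ∀ x, X1 x ≠ 0)
    (hg : ∀ x, HasDerivAt g (g1 x) x) (hg1 : Continuous g1) {U : Set (ℝ × ℝ)}
    (hω : ∀ p ∈ U, ∀ v : ℝ × ℝ, ω p v = 0 → Ω (sh X g κ p) (X1 p.1 * v.1, κ * v.2 + g1 p.1 * v.1) = 0)
    {γ : ℝ → ℝ × ℝ} {I : Set ℝ} (hγ : IsIntegralCurveOnBDE ω γ I) (hU : MapsTo γ I U) :
    ∃ σ J, IsIntegralCurveOnBDE Ω σ J ∧ sh X g κ '' (γ '' I) = σ '' J := by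
  obtain ⟨hI, dγ, hdc, hd⟩ := hγ
  have c0 : ContinuousOn γ I := fun t ht => (hd t ht).1.continuousAt.continuousWithinAt
  have c1 : ContinuousOn (fun t => (γ t).1) I := continuous_fst.comp_continuousOn c0
  have c3 : ContinuousOn (fun t => (dγ t).1) I := continuous_fst.comp_continuousOn hdc
  have c4 : ContinuousOn (fun t => (dγ t).2) I := continuous_snd.comp_continuousOn hdc
  refine ⟨fun t => sh X g κ (γ t), I, ⟨hI, fun t => (X1 (γ t).1 * (dγ t).1, κ * (dγ t).2 + g1 (γ t).1 * (dγ t).1),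
    ?_, fun t ht => ⟨?_, ?_, ?_⟩⟩, by rw [image_image]⟩
  · exact ((hX1.comp_continuousOn c1).mul c3).prodMk
      ((continuousOn_const.mul c4).add ((hg1.comp_continuousOn c1).mul c3))
  · have d1 := hd_fst (hd t ht).1
    have d2 := hd_snd (hd t ht).1
    exact ((hX _).comp t d1).prodMk ((d2.const_mul κ).add ((hg _).comp t d1))
  · intro h0
    have e1 : X1 (γ t).1 * (dγ t).1 = 0 := congrArg Prod.fst h0
    have e2 : κ * (dγ t).2 + g1 (γ t).1 * (dγ t).1 = 0 := congrArg Prod.snd h0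
    have e3 : (dγ t).1 = 0 := (mul_eq_zero.1 e1).resolve_left (hX0 _)
    rw [e3, mul_zero, add_zero] at e2
    exact (hd t ht).2.1 (Prod.ext e3 ((mul_eq_zero.1 e2).resolve_left hκ))
  · exact hω _ (hU ht) _ (hd t ht).2.2

lemma sh_equiv {ω Ω : (ℝ × ℝ) → (ℝ × ℝ) → ℝ} {X X1 Y Y1 g g1 : ℝ → ℝ} {κ : ℝ} (hκ : κ * κ = 1)
    (hX : ∀ x, HasDerivAt X (X1 x) x) (hX1 : Continuous X1)
    (hY : ∀ x, HasDerivAt Y (Y1 x) x) (hY1 : Continuous Y1)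
    (hXY : ∀ x, X (Y x) = x) (hYX : ∀ x, Y (X x) = x) (h1 : ∀ x, X1 (Y x) * Y1 x = 1)
    (hg : ∀ x, HasDerivAt g (g1 x) x) (hg1 : Continuous g1) (hX00 : X 0 = 0) (hg00 : g 0 = 0)
    {U : Set (ℝ × ℝ)} (oU : IsOpen U) (zU : (0 : ℝ × ℝ) ∈ U)
    (hω : ∀ p ∈ U, ∀ v : ℝ × ℝ, ω p v = 0 ↔ Ω (sh X g κ p) (X1 p.1 * v.1, κ * v.2 + g1 p.1 * v.1) = 0) :
    TopEquivAt0 ω Ω := by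
  have hκ0 : κ ≠ 0 := by rintro rfl; simp at hκ
  have X0 : ∀ x, X1 x ≠ 0 := fun x h => by
    have := h1 (X x); rw [hYX, h, zero_mul] at this; exact zero_ne_one this
  have Y0 : ∀ x, Y1 x ≠ 0 := fun x h => by
    have := h1 x; rw [h, mul_zero] at this; exact zero_ne_one this
  set k : ℝ → ℝ := fun x => -κ * g (Y x) with hk
  set k1 : ℝ → ℝ := fun x => -κ * (g1 (Y x) * Y1 x) with hk1
  have cX : Continuous X := continuous_iff_continuousAt.2 (fun x => (hX x).continuousAt)
  have cY : Continuous Y := continuous_iff_continuousAt.2 (fun x => (hY x).continuousAt)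
  have cg : Continuous g := continuous_iff_continuousAt.2 (fun x => (hg x).continuousAt)
  have ch : Continuous (sh X g κ) := by unfold sh; fun_prop
  have ck : Continuous (sh Y k κ) := by unfold sh; fun_prop
  have i1 : ∀ p, sh Y k κ (sh X g κ p) = p := by
    intro p
    refine Prod.ext (hYX _) ?_
    show κ * (κ * p.2 + g p.1) + -κ * g (Y (X p.1)) = p.2
    rw [hYX]
    linear_combination p.2 * hκ
  have i2 : ∀ p, sh X g κ (sh Y k κ p) = p := by
    intro p
    refine Prod.ext (hXY _) ?_
    show κ * (κ * p.2 + -κ * g (Y p.1)) + g (Y p.1) = p.2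
    linear_combination (p.2 - g (Y p.1)) * hκ
  have h0 : sh X g κ 0 = 0 := by simp [sh, hX00, hg00]
  have h0' : sh Y k κ 0 = 0 := by conv_lhs => rw [← h0]
                                  exact i1 0
  refine ⟨U, sh Y k κ ⁻¹' U, sh X g κ, sh Y k κ, oU, oU.preimage ck, zU, by simpa [h0'] using zU, h0,
    ch.continuousOn, ck.continuousOn, ⟨?_, ?_, ?_⟩, ⟨fun p _ => i1 p, fun p _ => i2 p⟩, ?_, ?_⟩
  · intro p hp; show _ ∈ U; rw [i1]; exact hp
  · intro p _ q _ e; rw [← i1 p, ← i1 q, e]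
  · intro p hp; exact ⟨_, hp, i2 p⟩
  · intro γ I hγ hU
    exact sh_push hκ0 hX hX1 X0 hg hg1 (fun p hp v => (hω p hp v).1) hγ hU
  · intro γ I hγ hU
    apply sh_push (ω := Ω) (Ω := ω) (X := Y) (X1 := Y1) (g := k) (g1 := k1) hκ0 hY hY1 Y0
      (fun x => ((hg _).comp x (hY x)).const_mul (-κ))
      (continuous_const.mul ((hg1.comp cY).mul hY1)) (U := sh Y k κ ⁻¹' U) _ hγ hU
    intro p hp v hv
    rw [hω _ hp, i2]
    convert hv using 1
    congr 1
    refine Prod.ext ?_ ?_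
    · show X1 (Y p.1) * (Y1 p.1 * v.1) = v.1
      linear_combination v.1 * h1 p.1
    · show κ * (κ * v.2 + -κ * (g1 (Y p.1) * Y1 p.1) * v.1) + g1 (Y p.1) * (Y1 p.1 * v.1) = v.2
      linear_combination (v.2 - g1 (Y p.1) * Y1 p.1 * v.1) * hκ

lemma te_refl (s : ℝ → ℝ) : TopEquivAt0 (std s) (std (fun x => s (-x))) := by
  apply sh_equiv (X := fun x => -x) (X1 := fun _ => -1) (Y := fun x => -x) (Y1 := fun _ => -1)
    (g := fun _ => 0) (g1 := fun _ => 0) (κ := 1) (U := univ)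
  · norm_num
  · intro x; exact hasDerivAt_neg x
  · fun_prop
  · intro x; exact hasDerivAt_neg x
  · fun_prop
  · simp
  · simp
  · norm_num
  · intro x; exact hasDerivAt_const x 0
  · fun_prop
  · simp
  · simp
  · exact isOpen_univ
  · trivial
  · intro p _ v
    simp [sh, std, BDE]

lemma teF' {s s' : ℝ → ℝ} (hs : Continuous s) (hs0 : s 0 = 0) {r : ℝ} (hr : 0 < r)
    (hd : Der s 1 (Ioo (-r) r)) (hs' : Continuous s') (hs0' : s' 0 = 0) {r' : ℝ} (hr' : 0 < r')
    (hd' : Der s' 1 (Ioo (-r') r')) : TopEquivAt0 (std s) (std s') := by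
  have aux : ∀ {s : ℝ → ℝ} {r : ℝ}, Der s 1 (Ioo (-r) r) → Der (fun x => s (-x)) (-1) (Ioo (-r) r) := by
    rintro s r ⟨m, m1, m2⟩
    have hn : ∀ x ∈ Ioo (-r) r, -x ∈ Ioo (-r) r := fun x hx => ⟨by linarith [hx.2], by linarith [hx.1]⟩
    refine ⟨fun x => -m (-x), (m1.comp continuous_neg.continuousOn hn).neg, fun x hx => ⟨?_, ?_⟩⟩
    · have := (m2 _ (hn x hx)).1.comp x (hasDerivAt_neg x)
      rw [mul_neg_one] at this
      exact this
    · linarith [(m2 _ (hn x hx)).2]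
  have := teF (s := fun x => s (-x)) (s' := fun x => s' (-x)) (by fun_prop) (by simp [hs0]) hr (aux hd)
    (by fun_prop) (by simp [hs0']) hr' (aux hd')
  exact te_trans (te_refl s) (te_trans this (te_symm (te_refl s')))

end BD

namespace BD
open Topology

theorem inv_chart (w1 : ℝ → ℝ) (hc : Continuous w1) (c : ℝ) (c0 : 0 < c) (hw : ∀ x, c ≤ w1 x)
    (he : ∀ x, w1 (-x) = w1 x) :
    ∃ X Y : ℝ → ℝ, (∀ x, HasDerivAt X (w1 x) x) ∧ (∀ x, HasDerivAt Y ((w1 (Y x))⁻¹) x) ∧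
      (∀ x, X (Y x) = x) ∧ (∀ x, Y (X x) = x) ∧ X 0 = 0 ∧ (∀ x, X (-x) = - X x) ∧
      StrictMono X ∧ StrictMono Y ∧ (∀ x, 0 ≤ x → c * x ≤ X x) := by
  set X : ℝ → ℝ := fun x => ∫ s in (0:ℝ)..x, w1 s with hXdef
  have hX : ∀ x, HasDerivAt X (w1 x) x := fun x =>
    (hc.integral_hasStrictDerivAt 0 x).hasDerivAt
  have hX0 : X 0 = 0 := by simp [hXdef]
  have hsm : StrictMono X := strictMono_of_deriv_pos (fun x => by
    rw [(hX x).deriv]; exact lt_of_lt_of_le c0 (hw x))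
  have hcont : Continuous X := continuous_iff_continuousAt.2 fun x => (hX x).continuousAt
  have hmono : Monotone (fun x => X x - c * x) := by
    apply monotone_of_deriv_nonneg
    · intro x
      exact ((hX x).sub ((hasDerivAt_id x).const_mul c)).differentiableAt
    · intro x
      have := ((hX x).sub ((hasDerivAt_id x).const_mul c)).deriv
      have h2 : deriv (fun x => X x - c * x) x = w1 x - c * 1 := this
      rw [h2]; linarith [hw x]
  have hpos : ∀ x, 0 ≤ x → c * x ≤ X x := by
    intro x hx
    have := hmono hx
    simp only [hX0] at this
    linarith
  have hneg : ∀ x, x ≤ 0 → X x ≤ c * x := by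
    intro x hx
    have := hmono hx
    simp only [hX0] at this
    linarith
  have hodd : ∀ x, X (-x) = - X x := by
    intro x
    have h1 : ∀ y, HasDerivAt (fun x => X (-x) + X x) 0 y := by
      intro y
      have := ((hX (-y)).comp y (hasDerivAt_neg y)).add (hX y)
      rw [he] at this
      refine HasDerivAt.congr_deriv this ?_
      ring
    have h2 := is_const_of_deriv_eq_zero (f := fun x => X (-x) + X x)
      (fun y => (h1 y).differentiableAt) (fun y => (h1 y).deriv) x 0
    simp [hX0] at h2
    linarith
  have hsurj : Function.Surjective X := by
    apply hcont.surjective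
    · apply tendsto_atTop_mono' atTop (f₁ := fun x => c * x)
      · filter_upwards [eventually_ge_atTop 0] with x hx using hpos x hx
      · exact tendsto_id.const_mul_atTop c0
    · apply tendsto_atBot_mono' atBot (f₁ := fun x => c * x)
      · filter_upwards [eventually_le_atBot 0] with x hx using hneg x hx
      · exact tendsto_id.const_mul_atBot c0
  set e := hsm.orderIsoOfSurjective X hsurj with he'
  have hXY : ∀ x, X (e.symm x) = x := fun x => e.apply_symm_apply x
  have hYX : ∀ x, e.symm (X x) = x := fun x => e.symm_apply_apply x
  refine ⟨X, e.symm, hX, ?_, hXY, hYX, hX0, hodd, hsm, e.symm.strictMono, hpos⟩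
  intro x
  exact HasDerivAt.of_local_left_inverse e.symm.continuous.continuousAt (hX _)
    (lt_of_lt_of_le c0 (hw _)).ne' (Eventually.of_forall hXY)

theorem near_pos (F : ℝ → ℝ) (hF : Continuous F) (h0 : 0 < F 0) (r0 : ℝ) (hr0 : 0 < r0) :
    ∃ r, 0 < r ∧ r ≤ r0 ∧ ∀ x, |x| ≤ r → 0 < F x := by
  have h : ∀ᶠ x in 𝓝 (0:ℝ), 0 < F x := hF.continuousAt.eventually (lt_mem_nhds h0)
  obtain ⟨e, e0, he⟩ := Metric.eventually_nhds_iff.1 h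
  refine ⟨min (e/2) r0, lt_min (by linarith) hr0, min_le_right _ _, fun x hx => he ?_⟩
  rw [Real.dist_eq, sub_zero]
  have := min_le_left (e/2) r0
  linarith

def ww (γ x : ℝ) : ℝ := max (1 + 6 * γ * x ^ 2) (1 / 2)
def NN (γ t u x : ℝ) : ℝ := 3 * t * x + 6 * u * x ^ 2 - 15 / 2 * γ * x ^ 4 - 7 * γ ^ 2 * x ^ 6
def MM (γ t u x : ℝ) : ℝ := (3 * t + 12 * u * x - 30 * γ * x ^ 3 - 42 * γ ^ 2 * x ^ 5) *
  (1 + 6 * γ * x ^ 2) - NN γ t u x * (12 * γ * x)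
def RR (γ t u x : ℝ) : ℝ := NN γ t u x / ww γ x

theorem ww_ge (γ x : ℝ) : 1 / 2 ≤ ww γ x := le_max_right _ _
theorem ww_pos (γ x : ℝ) : 0 < ww γ x := lt_of_lt_of_le (by norm_num) (ww_ge γ x)
theorem ww_cont (γ : ℝ) : Continuous (ww γ) := by unfold ww; fun_prop
theorem NN_cont (γ t u : ℝ) : Continuous (NN γ t u) := by unfold NN; fun_prop
theorem MM_cont (γ t u : ℝ) : Continuous (MM γ t u) := by
  unfold MM NN; fun_prop
theorem RR_cont (γ t u : ℝ) : Continuous (RR γ t u) :=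
  (NN_cont γ t u).div (ww_cont γ) (fun x => (ww_pos γ x).ne')

def r0 (γ : ℝ) : ℝ := 1 / (12 * |γ| + 4)
theorem r0_pos (γ : ℝ) : 0 < r0 γ := by unfold r0; positivity

theorem q_gt (γ x : ℝ) (hx : |x| < r0 γ) : 1 / 2 < 1 + 6 * γ * x ^ 2 := by
  have hp : 0 < 12 * |γ| + 4 := by positivity
  have h1 : |x| * (12 * |γ| + 4) < 1 := by
    unfold r0 at hx; rwa [lt_div_iff₀ hp] at hx
  have hx1 : |x| < 1 := by nlinarith [abs_nonneg x, abs_nonneg γ, mul_nonneg (abs_nonneg x) (abs_nonneg γ)]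
  have h2 : x ^ 2 ≤ |x| := by rw [← sq_abs]; nlinarith [abs_nonneg x]
  have h3 : -γ * x ^ 2 ≤ |γ| * |x| :=
    (mul_le_mul_of_nonneg_right (neg_le_abs γ) (sq_nonneg x)).trans
      (mul_le_mul_of_nonneg_left h2 (abs_nonneg γ))
  by_cases h : x = 0
  · subst h; norm_num
  · have : 0 < |x| := abs_pos.2 h
    nlinarith

theorem ww_eq (γ x : ℝ) (hx : |x| < r0 γ) : ww γ x = 1 + 6 * γ * x ^ 2 :=
  max_eq_left (q_gt γ x hx).le

theorem RR_der (γ t u x : ℝ) (hx : |x| < r0 γ) :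
    HasDerivAt (RR γ t u) (MM γ t u x / (ww γ x) ^ 2) x := by
  have hq := q_gt γ x hx
  have h1 : HasDerivAt (NN γ t u) (3 * t + 12 * u * x - 30 * γ * x ^ 3 - 42 * γ ^ 2 * x ^ 5) x := by
    have h := (((((hasDerivAt_id x).const_mul (3 * t)).add
      (((hasDerivAt_id x).pow 2).const_mul (6 * u))).sub
      (((hasDerivAt_id x).pow 4).const_mul (15 / 2 * γ))).sub
      (((hasDerivAt_id x).pow 6).const_mul (7 * γ ^ 2)))
    refine h.congr_deriv ?_
    simp; ring
  have h2 : HasDerivAt (fun x => 1 + 6 * γ * x ^ 2) (12 * γ * x) x := by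
    have h := ((((hasDerivAt_id x).pow 2).const_mul (6 * γ))).const_add 1
    refine h.congr_deriv ?_
    simp; ring
  have h3 := h1.div h2 (by linarith)
  have h4 : RR γ t u =ᶠ[𝓝 x] (NN γ t u / fun x => 1 + 6 * γ * x ^ 2) := by
    have : ∀ᶠ y in 𝓝 x, |y| < r0 γ := continuous_abs.continuousAt.eventually (gt_mem_nhds hx)
    filter_upwards [this] with y hy
    simp only [RR, Pi.div_apply, ww_eq γ y hy]
  rw [ww_eq γ x hx]
  exact h3.congr_of_eventuallyEq h4

theorem RR_Der (γ t u σ : ℝ) (I : Set ℝ) (hI : ∀ x ∈ I, |x| < r0 γ)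
    (hM : ∀ x ∈ I, 0 < σ * MM γ t u x) : Der (RR γ t u) σ I := by
  refine ⟨fun x => MM γ t u x / (ww γ x) ^ 2, ?_, ?_⟩
  · exact ((MM_cont γ t u).div ((ww_cont γ).pow 2)
      (fun x => (pow_pos (ww_pos γ x) 2).ne')).continuousOn
  · intro x hx
    refine ⟨RR_der γ t u x (hI x hx), ?_⟩
    rw [← mul_div_assoc]
    exact div_pos (hM x hx) (pow_pos (ww_pos γ x) 2)

theorem Der_comp (R Y Y1 : ℝ → ℝ) (σ : ℝ) (I J : Set ℝ) (hR : Der R σ I)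
    (hY : ∀ x, HasDerivAt Y (Y1 x) x) (hc : Continuous Y1) (hp : ∀ x, 0 < Y1 x)
    (hJ : ∀ x ∈ J, Y x ∈ I) : Der (fun x => R (Y x)) σ J := by
  obtain ⟨m, hm, h⟩ := hR
  have hYc : Continuous Y := continuous_iff_continuousAt.2 fun x => (hY x).continuousAt
  refine ⟨fun x => m (Y x) * Y1 x, ?_, ?_⟩
  · exact (hm.comp hYc.continuousOn hJ).mul hc.continuousOn
  · intro x hx
    refine ⟨(h _ (hJ x hx)).1.comp x (hY x), ?_⟩
    rw [← mul_assoc]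
    exact mul_pos (h _ (hJ x hx)).2 (hp x)

/-- model function -/
def sm (η t u x : ℝ) : ℝ := η * x ^ 4 + u * x ^ 2 + t * x
def smd (η t u x : ℝ) : ℝ := 4 * η * x ^ 3 + 2 * u * x + t
theorem sm_cont (η t u : ℝ) : Continuous (sm η t u) := by unfold sm; fun_prop
theorem smd_cont (η t u : ℝ) : Continuous (smd η t u) := by unfold smd; fun_prop
theorem sm_Der (η t u σ : ℝ) (I : Set ℝ) (hM : ∀ x ∈ I, 0 < σ * smd η t u x) :
    Der (sm η t u) σ I := by
  refine ⟨smd η t u, (smd_cont η t u).continuousOn, fun x hx => ⟨?_, hM x hx⟩⟩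
  have h := (((hasDerivAt_id x).pow 4).const_mul η).add
    (((hasDerivAt_id x).pow 2).const_mul u) |>.add ((hasDerivAt_id x).const_mul t)
  refine h.congr_deriv ?_
  simp [smd]; ring

end BD

namespace BD
open Topology

theorem asym_eq (γ t u : ℝ) (p v : ℝ × ℝ) :
    asymBDE (fun p : ℝ × ℝ =>
          p.2 ^ 2 + p.1 ^ 2 * p.2 + (1 / 4) * p.1 ^ 4 + γ * p.1 ^ 4 * p.2 +
            t * p.1 ^ 3 + u * p.1 ^ 4) p v =
      2 * v.2 ^ 2 + 2 * (2 * p.1 + 4 * γ * p.1 ^ 3) * v.1 * v.2 +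
        (2 * p.2 + 3 * p.1 ^ 2 + 12 * γ * p.1 ^ 2 * p.2 + 6 * t * p.1 + 12 * u * p.1 ^ 2) * v.1 ^ 2 := by
  set f : ℝ × ℝ → ℝ := fun p : ℝ × ℝ =>
          p.2 ^ 2 + p.1 ^ 2 * p.2 + (1 / 4) * p.1 ^ 4 + γ * p.1 ^ 4 * p.2 +
            t * p.1 ^ 3 + u * p.1 ^ 4 with hf
  have hx : pdx f = fun p => 2 * p.2 * p.1 + p.1 ^ 3 + 4 * γ * p.2 * p.1 ^ 3 + 3 * t * p.1 ^ 2
      + 4 * u * p.1 ^ 3 := by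
    funext ⟨x, y⟩
    have hi := hasDerivAt_id x
    have h := ((((((hi.pow 2).mul_const y).const_add (y ^ 2)).add ((hi.pow 4).const_mul (1 / 4))).add
      (((hi.pow 4).const_mul γ).mul_const y)).add ((hi.pow 3).const_mul t)).add
      ((hi.pow 4).const_mul u)
    have h2 := h.deriv
    simp only [pdx, hf]
    refine Eq.trans h2 ?_
    simp; ring
  have hy : pdy f = fun p => 2 * p.2 + p.1 ^ 2 + γ * p.1 ^ 4 := by
    funext ⟨x, y⟩
    have hi := hasDerivAt_id y
    have h := ((((((hi.pow 2).add (hi.const_mul (x ^ 2))).add_const ((1 / 4) * x ^ 4))).add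
      (hi.const_mul (γ * x ^ 4))).add_const (t * x ^ 3)).add_const (u * x ^ 4)
    have h2 := h.deriv
    simp only [pdy, hf]
    refine Eq.trans h2 ?_
    simp
  have hxx : fxx f p = 2 * p.2 + 3 * p.1 ^ 2 + 12 * γ * p.1 ^ 2 * p.2 + 6 * t * p.1
      + 12 * u * p.1 ^ 2 := by
    obtain ⟨x, y⟩ := p
    have hi := hasDerivAt_id x
    have h := ((((hi.const_mul (2 * y)).add (hi.pow 3)).add ((hi.pow 3).const_mul (4 * γ * y))).add
      ((hi.pow 2).const_mul (3 * t))).add ((hi.pow 3).const_mul (4 * u))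
    have h2 := h.deriv
    simp only [fxx, hx]
    simp only [pdx]
    refine Eq.trans h2 ?_
    simp; ring
  have hxy : fxy f p = 2 * p.1 + 4 * γ * p.1 ^ 3 := by
    obtain ⟨x, y⟩ := p
    have hi := hasDerivAt_id y
    have h := ((((((hi.const_mul 2).mul_const x).add_const (x ^ 3))).add
      ((hi.const_mul (4 * γ)).mul_const (x ^ 3))).add_const (3 * t * x ^ 2)).add_const (4 * u * x ^ 3)
    have h2 := h.deriv
    simp only [fxy, hx]
    simp only [pdy]
    refine Eq.trans h2 ?_
    simp
  have hyy : fyy f p = 2 := by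
    obtain ⟨x, y⟩ := p
    have hi := hasDerivAt_id y
    have h := ((hi.const_mul 2).add_const (x ^ 2)).add_const (γ * x ^ 4)
    have h2 := h.deriv
    simp only [fyy, hy]
    simp only [pdy]
    refine Eq.trans h2 ?_
    simp
  simp only [asymBDE, BDE, hxx, hxy, hyy]

def w1 (γ x : ℝ) : ℝ := Real.sqrt (ww γ x)
theorem w1_cont (γ : ℝ) : Continuous (w1 γ) := Real.continuous_sqrt.comp (ww_cont γ)
theorem w1_pos (γ x : ℝ) : 0 < w1 γ x := Real.sqrt_pos.2 (ww_pos γ x)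
theorem w1_sq (γ x : ℝ) : w1 γ x ^ 2 = ww γ x := Real.sq_sqrt (ww_pos γ x).le

theorem src_te (γ t u : ℝ) (X Y : ℝ → ℝ) (hX : ∀ x, HasDerivAt X (w1 γ x) x)
    (hY : ∀ x, HasDerivAt Y ((w1 γ (Y x))⁻¹) x) (hXY : ∀ x, X (Y x) = x) (hYX : ∀ x, Y (X x) = x)
    (hX0 : X 0 = 0) :
    TopEquivAt0 (asymBDE (fun p : ℝ × ℝ =>
          p.2 ^ 2 + p.1 ^ 2 * p.2 + (1 / 4) * p.1 ^ 4 + γ * p.1 ^ 4 * p.2 +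
            t * p.1 ^ 3 + u * p.1 ^ 4)) (std (fun x => RR γ t u (Y x))) := by
  have hYc : Continuous Y := continuous_iff_continuousAt.2 fun x => (hY x).continuousAt
  refine sh_equiv (κ := -1) (X := X) (X1 := w1 γ) (Y := Y) (Y1 := fun x => (w1 γ (Y x))⁻¹)
    (g := fun x => -(x ^ 2 / 2 + γ / 2 * x ^ 4)) (g1 := fun x => -(x + 2 * γ * x ^ 3))
    (U := {p : ℝ × ℝ | |p.1| < r0 γ})
    (by norm_num) hX (w1_cont γ) hY (((w1_cont γ).comp hYc).inv₀ fun x => (w1_pos _ _).ne')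
    hXY hYX (fun x => mul_inv_cancel₀ (w1_pos _ _).ne') ?_ (by fun_prop) hX0 (by simp) ?_ ?_ ?_
  · intro x
    have h := ((((hasDerivAt_id x).pow 2).div_const 2).add
      (((hasDerivAt_id x).pow 4).const_mul (γ / 2))).neg
    refine h.congr_deriv ?_
    simp; ring
  · exact isOpen_lt (by fun_prop) continuous_const
  · simpa using r0_pos γ
  · rintro ⟨x, y⟩ hp ⟨v1, v2⟩
    rw [asym_eq]
    have hw := ww_eq γ x hp
    have hN : RR γ t u x * ww γ x = NN γ t u x := div_mul_cancel₀ _ (ww_pos γ x).ne'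
    have hs := w1_sq γ x
    simp only [std, BDE, sh, hYX]
    have key : 2 * v2 ^ 2 + 2 * (2 * x + 4 * γ * x ^ 3) * v1 * v2 +
        (2 * y + 3 * x ^ 2 + 12 * γ * x ^ 2 * y + 6 * t * x + 12 * u * x ^ 2) * v1 ^ 2
        = 2 * (1 * (-1 * v2 + -(x + 2 * γ * x ^ 3) * v1) ^ 2 +
          2 * 0 * (w1 γ x * v1) * (-1 * v2 + -(x + 2 * γ * x ^ 3) * v1) +
          (-(-1 * y + -(x ^ 2 / 2 + γ / 2 * x ^ 4)) + RR γ t u x) * (w1 γ x * v1) ^ 2) := by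
      rw [mul_pow, hs, add_mul (-(-1 * y + -(x ^ 2 / 2 + γ / 2 * x ^ 4))) (RR γ t u x),
        ← mul_assoc (RR γ t u x), hN, hw, NN]
      ring
    rw [key]
    constructor
    · intro h; linarith
    · intro h; rw [h, mul_zero]

theorem main_te (γ η t u : ℝ) (hγ : (γ < 0 ∧ η = 1) ∨ (0 < γ ∧ η = -1)) (hu : u < 1 / 1000) :
    TopEquivAt0 (asymBDE (fun p : ℝ × ℝ =>
          p.2 ^ 2 + p.1 ^ 2 * p.2 + (1 / 4) * p.1 ^ 4 + γ * p.1 ^ 4 * p.2 +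
            t * p.1 ^ 3 + u * p.1 ^ 4)) (std (sm η t u)) := by
  obtain ⟨X, Y, hX, hY, hXY, hYX, hX0, hodd, hXm, hYm, hXp⟩ := inv_chart (w1 γ) (w1_cont γ)
    (Real.sqrt (1 / 2)) (Real.sqrt_pos.2 (by norm_num))
    (fun x => Real.sqrt_le_sqrt (ww_ge γ x)) (fun x => by simp [w1, ww])
  have hYc : Continuous Y := continuous_iff_continuousAt.2 fun x => (hY x).continuousAt
  have hY0 : Y 0 = 0 := by have := hYX 0; rwa [hX0] at this
  have hYodd : ∀ x, Y (-x) = - Y x := by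
    intro x
    apply hXm.injective
    rw [hodd, hXY, hXY]
  refine te_trans (src_te γ t u X Y hX hY hXY hYX hX0) ?_
  have hSc : Continuous (fun x => RR γ t u (Y x)) := (RR_cont γ t u).comp hYc
  have hS0 : (fun x => RR γ t u (Y x)) 0 = 0 := by simp [hY0, RR, NN]
  have hs0 : sm η t u 0 = 0 := by simp [sm]
  have hXpos : ∀ r, 0 < r → 0 < X r := fun r hr => by rw [← hX0]; exact hXm hr
  have hp : ∀ x, 0 < (w1 γ (Y x))⁻¹ := fun x => inv_pos.2 (w1_pos _ _)
  have hpc : Continuous (fun x => (w1 γ (Y x))⁻¹) :=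
    ((w1_cont γ).comp hYc).inv₀ fun x => (w1_pos _ _).ne'
  have hm2 : ∀ r x, x ∈ Ioo (-(X r)) (X r) → Y x ∈ Ioo (-r) r := by
    intro r x hx
    have h1 := hYm hx.1
    have h2 := hYm hx.2
    rw [hYodd, hYX] at h1
    rw [hYX] at h2
    exact ⟨h1, h2⟩
  have hm1 : ∀ r x, x ∈ Ioo 0 (X r) → Y x ∈ Ioo 0 r := by
    intro r x hx
    have h1 := hYm hx.1
    have h2 := hYm hx.2
    rw [hY0] at h1
    rw [hYX] at h2
    exact ⟨h1, h2⟩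
  -- case t ≠ 0
  have full : ∀ σ, 0 < σ * t → ∃ r r', 0 < r ∧ 0 < r' ∧
      Der (fun x => RR γ t u (Y x)) σ (Ioo (-r) r) ∧ Der (sm η t u) σ (Ioo (-r') r') := by
    intro σ h
    obtain ⟨r, hr, hr1, hr2⟩ := near_pos (fun x => σ * MM γ t u x)
      (continuous_const.mul (MM_cont γ t u)) (by simp [MM, NN]; linarith) (r0 γ) (r0_pos γ)
    obtain ⟨r', hr', -, hr2'⟩ := near_pos (fun x => σ * smd η t u x)
      (continuous_const.mul (smd_cont η t u)) (by simpa [smd] using h) 1 one_pos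
    refine ⟨X r, r', hXpos r hr, hr', ?_, ?_⟩
    · apply Der_comp (RR γ t u) Y _ σ (Ioo (-r) r) _ ?_ hY hpc hp (hm2 r)
      exact RR_Der _ _ _ _ _ (fun x hx => lt_of_lt_of_le (abs_lt.2 hx) hr1)
        (fun x hx => hr2 x (abs_lt.2 hx).le)
    · exact sm_Der _ _ _ _ _ (fun x hx => hr2' x (abs_lt.2 hx).le)
  rcases lt_trichotomy t 0 with ht | ht | ht
  · obtain ⟨r, r', hr, hr', h1, h2⟩ := full (-1) (by linarith)
    exact teF hSc hS0 hr h1 (sm_cont _ _ _) hs0 hr' h2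
  swap
  · obtain ⟨r, r', hr, hr', h1, h2⟩ := full 1 (by linarith)
    exact teF' hSc hS0 hr h1 (sm_cont _ _ _) hs0 hr' h2
  subst ht
  have hSe : ∀ x, (fun x => RR γ 0 u (Y x)) (-x) = (fun x => RR γ 0 u (Y x)) x := by
    intro x
    simp only [hYodd, RR, NN, ww]
    congr 1 <;> ring_nf
  have hse : ∀ x, sm η 0 u (-x) = sm η 0 u x := by intro x; simp only [sm]; ring
  have half : ∀ σ, (0 < σ * u ∨ (u = 0 ∧ 0 < σ * η)) → ∃ R R', 0 < R ∧ R ≤ r0 γ ∧ 0 < R' ∧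
      (∀ r, 0 < r → r ≤ R → Der (fun x => RR γ 0 u (Y x)) σ (Ioo 0 (X r))) ∧
      Der (sm η 0 u) σ (Ioo 0 R') := by
    intro σ h
    have M1 : ∀ x, MM γ 0 u x = x * (12 * u - x ^ 2 * (30 * γ + 132 * γ ^ 2 * x ^ 2 +
      168 * γ ^ 3 * x ^ 4)) := by intro x; simp only [MM, NN]; ring
    have A : ∃ R, 0 < R ∧ R ≤ r0 γ ∧ ∀ x ∈ Ioo 0 R, 0 < σ * MM γ 0 u x := by
      rcases h with h | ⟨h, h'⟩
      · obtain ⟨r, hr, hr1, hr2⟩ := near_pos (fun x => σ * (12 * u - x ^ 2 * (30 * γ +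
          132 * γ ^ 2 * x ^ 2 + 168 * γ ^ 3 * x ^ 4))) (by fun_prop)
          (by simp; linarith) (r0 γ) (r0_pos γ)
        refine ⟨r, hr, hr1, fun x hx => ?_⟩
        rw [M1, mul_left_comm]
        exact mul_pos hx.1 (hr2 x (by rw [abs_of_pos hx.1]; exact hx.2.le))
      · have hg : 0 < σ * (-γ) := by
          rcases hγ with ⟨hγ, rfl⟩ | ⟨hγ, rfl⟩
          · exact mul_pos (by linarith) (by linarith)
          · have : σ < 0 := by linarith
            nlinarith
        obtain ⟨r, hr, hr1, hr2⟩ := near_pos (fun x => σ * (-(30 * γ +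
          132 * γ ^ 2 * x ^ 2 + 168 * γ ^ 3 * x ^ 4))) (by fun_prop)
          (by simp; linarith) (r0 γ) (r0_pos γ)
        refine ⟨r, hr, hr1, fun x hx => ?_⟩
        have h3 := mul_pos (pow_pos hx.1 3) (hr2 x (by rw [abs_of_pos hx.1]; exact hx.2.le))
        rw [M1, h]
        refine h3.trans_eq ?_
        ring
    have B : ∃ R, 0 < R ∧ ∀ x ∈ Ioo 0 R, 0 < σ * smd η 0 u x := by
      rcases h with h | ⟨h, h'⟩
      · obtain ⟨r, hr, hr1, hr2⟩ := near_pos (fun x => σ * (2 * u + 4 * η * x ^ 2)) (by fun_prop)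
          (by simp; linarith) (r0 γ) (r0_pos γ)
        refine ⟨r, hr, fun x hx => ?_⟩
        have h3 := mul_pos hx.1 (hr2 x (by rw [abs_of_pos hx.1]; exact hx.2.le))
        refine h3.trans_eq ?_
        simp only [smd]; ring
      · refine ⟨1, one_pos, fun x hx => ?_⟩
        have h3 := mul_pos (pow_pos hx.1 3) h'
        rw [h]
        simp only [smd]
        linarith
    obtain ⟨R, hR, hR0, hR1⟩ := A
    obtain ⟨R', hR', hR1'⟩ := B
    refine ⟨R, R', hR, hR0, hR', ?_, sm_Der _ _ _ _ _ hR1'⟩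
    intro r hr hrR
    apply Der_comp (RR γ 0 u) Y _ σ (Ioo 0 r) _ ?_ hY hpc hp (hm1 r)
    refine RR_Der _ _ _ _ _ (fun x hx => ?_) (fun x hx => hR1 x ⟨hx.1, hx.2.trans_le hrR⟩)
    rw [abs_of_pos hx.1]; linarith [hx.2]
  by_cases hS : u < 0 ∨ (u = 0 ∧ η = -1)
  · obtain ⟨R, R', hR, -, hR', h1, h2⟩ := half (-1) (by
      rcases hS with h | ⟨h, h'⟩
      · left; linarith
      · right; exact ⟨h, by rw [h']; norm_num⟩)
    exact teS hSc hS0 hSe (hXpos R hR) (h1 R hR le_rfl) (sm_cont _ _ _) hs0 hse hR' h2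
  · push Not at hS
    obtain ⟨R, R', hR, hR0, hR', h1, h2⟩ := half 1 (by
      rcases hS.1.eq_or_lt with h | h
      · right
        refine ⟨h.symm, ?_⟩
        rcases hγ with ⟨_, h3⟩ | ⟨_, h3⟩
        · rw [h3]; norm_num
        · exact absurd h3 (hS.2 h.symm)
      · left; linarith)
    obtain ⟨r, hr, hr1, hr2⟩ := near_pos (fun x => 1 / 64 - (6 * u - 15 / 2 * γ * x ^ 2 -
      7 * γ ^ 2 * x ^ 4)) (by fun_prop) (by simp; linarith) (R / 2) (by linarith)
    obtain ⟨r', hr', hr1', hr2'⟩ := near_pos (fun x => 1 / 16 - (u + η * x ^ 2))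
      (by fun_prop) (by simp; linarith) (R' / 2) (by linarith)
    refine teN hSc hS0 hSe (hXpos r hr) (h1 r hr (by linarith)) ?_ (sm_cont _ _ _) hs0 hse hr'
      (h2.mono (Ioo_subset_Ioo_right (by linarith))) ?_
    · intro x hx
      set y := Y x with hy
      have hy0 : 0 ≤ y := by rw [← hY0]; exact hYm.monotone hx.1
      have hyr : y ≤ r := by rw [← hYX r]; exact hYm.monotone hx.2
      have hxy : x = X y := (hXY x).symm
      have h3 := hXp y hy0
      have h4 : y ^ 2 / 2 ≤ x ^ 2 := by
        have h5 : (Real.sqrt (1 / 2) * y) ^ 2 ≤ (X y) ^ 2 :=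
          pow_le_pow_left₀ (by positivity) h3 2
        rw [mul_pow, Real.sq_sqrt (by norm_num)] at h5
        rw [hxy]; linarith
      have h6 : RR γ 0 u y ≤ y ^ 2 / 32 := by
        unfold RR
        rw [div_le_iff₀ (ww_pos γ y)]
        have h7 := mul_nonneg (sq_nonneg y) (hr2 y (by rwa [abs_of_nonneg hy0])).le
        have h8 := mul_nonneg (sq_nonneg y) (sub_nonneg.2 (ww_ge γ y))
        have h9 : NN γ 0 u y = y ^ 2 * (6 * u - 15 / 2 * γ * y ^ 2 - 7 * γ ^ 2 * y ^ 4) := by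
          simp only [NN]; ring
        rw [h9]
        linarith
      show RR γ 0 u y ≤ _
      linarith
    · intro x hx
      have h7 := mul_nonneg (sq_nonneg x) (hr2' x (by rw [abs_of_nonneg hx.1]; exact hx.2)).le
      simp only [sm]
      linarith

end BD

/-- the 2-parameter family of asymptotic BDEs of
`f(x,y;t,u) = y² + x²y + (1/4)x⁴ + γx⁴y + tx³ + ux⁴`, `γ ≠ 0`, is fiber
topologically equivalent at `0` to the family
`dy² + (−y + ηx⁴ + ux² + tx)dx² = 0` for some `η ∈ {1,−1}`. -/
theorem stmt16 (γ : ℝ) (hγ : γ ≠ 0) :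
    ∃ η : ℝ, (η = 1 ∨ η = -1) ∧
      FiberTopEquivAt0
        (fun tu => asymBDE (fun p =>
          p.2 ^ 2 + p.1 ^ 2 * p.2 + (1 / 4) * p.1 ^ 4 + γ * p.1 ^ 4 * p.2 +
            tu.1 * p.1 ^ 3 + tu.2 * p.1 ^ 4))
        (fun tu => BDE (fun _ => 1) (fun _ => 0)
          (fun p => -p.2 + η * p.1 ^ 4 + tu.2 * p.1 ^ 2 + tu.1 * p.1)) := by
  have key : ∀ η : ℝ, ((γ < 0 ∧ η = 1) ∨ (0 < γ ∧ η = -1)) →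
      FiberTopEquivAt0
        (fun tu => asymBDE (fun p =>
          p.2 ^ 2 + p.1 ^ 2 * p.2 + (1 / 4) * p.1 ^ 4 + γ * p.1 ^ 4 * p.2 +
            tu.1 * p.1 ^ 3 + tu.2 * p.1 ^ 4))
        (fun tu => BDE (fun _ => 1) (fun _ => 0)
          (fun p => -p.2 + η * p.1 ^ 4 + tu.2 * p.1 ^ 2 + tu.1 * p.1)) := by
    intro η h
    refine ⟨{q : ℝ × ℝ | q.2 < 1 / 1000}, id, id, ?_, rfl, continuousOn_id, continuousOn_id,
      ⟨fun _ _ => rfl, fun _ _ => rfl⟩, ?_⟩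
    · exact (isOpen_lt continuous_snd continuous_const).mem_nhds (by simp)
    · rintro ⟨t, u⟩ hq
      have h1 := BD.main_te γ η t u h hq
      have h2 : BD.std (BD.sm η t u) = BDE (fun _ => 1) (fun _ => 0)
          (fun p => -p.2 + η * p.1 ^ 4 + u * p.1 ^ 2 + t * p.1) := by
        unfold BD.std
        congr 1
        funext p
        simp only [BD.sm]; ring
      rw [h2] at h1
      exact h1
  rcases lt_or_gt_of_ne hγ with h | h
  · exact ⟨1, Or.inl rfl, key 1 (Or.inl ⟨h, rfl⟩)⟩
  · exact ⟨-1, Or.inr rfl, key (-1) (Or.inr ⟨h, rfl⟩)⟩
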